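/- arXiv:1905.13739 — 8 statements merged into one kernel-verified Lean document; each statement's English description precedes it below -/
import Mathlib

section
/- Let d ≥ 5 and T > 0. The function u*_T(t,x) = (T−t)^{-1} U*(|x|/(T−t)), with U*(ρ) = 2√(2(d−1)(d−4))/(d−4+3ρ²), is a smooth solution of the focusing cubic wave equation ∂_t²u − Δu = u³ on (−∞,T) × ℝ^d. -/
/-- The Laplacian on `ℝ^d` as the sum of second partial derivatives in coordinates. -/
noncomputable def laplacian (d : ℕ) (f : (Fin d → ℝ) → ℝ) (x : Fin d → ℝ) : ℝ :=
  ∑ i, iteratedDeriv 2 (fun s => f (Function.update x i s)) (x i)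

theorem aux_iter2 {f f' : ℝ → ℝ} {t f'' : ℝ} (h : ∀ᶠ s in nhds t, HasDerivAt f (f' s) s)
    (h2 : HasDerivAt f' f'' t) : iteratedDeriv 2 f t = f'' := by
  rw [iteratedDeriv_succ, iteratedDeriv_one]
  have : deriv f =ᶠ[nhds t] f' := h.mono fun s hs => hs.deriv
  rw [this.deriv_eq, h2.deriv]

/-- For `d ≥ 5` and `T > 0`, the function `u*_T(t,x) = (T−t)⁻¹ U*(|x|/(T−t))`, with
`U*(ρ) = 2√(2(d−1)(d−4))/(d−4+3ρ²)`, is a smooth solution of the focusing cubic wave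
equation `∂_t²u − Δu = u³` on `(−∞,T) × ℝ^d`. -/
theorem selfsimilar_blowup_smooth_solution (d : ℕ) (hd : 5 ≤ d) (T : ℝ) (hT : 0 < T)
    (U : ℝ → ℝ)
    (hU : ∀ ρ, U ρ = 2 * Real.sqrt (2 * ((d : ℝ) - 1) * ((d : ℝ) - 4)) /
      ((d : ℝ) - 4 + 3 * ρ ^ 2))
    (u : ℝ → (Fin d → ℝ) → ℝ)
    (hu : ∀ t x, u t x = (T - t)⁻¹ * U (Real.sqrt (∑ i, (x i) ^ 2) / (T - t))) :
    ContDiffOn ℝ (⊤ : ℕ∞) (fun p : ℝ × (Fin d → ℝ) => u p.1 p.2) (Set.Iio T ×ˢ Set.univ) ∧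
    ∀ t, t < T → ∀ x : Fin d → ℝ,
      iteratedDeriv 2 (fun s => u s x) t - laplacian d (u t) x = (u t x) ^ 3 := by
  have hd' : (5 : ℝ) ≤ d := by exact_mod_cast hd
  obtain ⟨c, hc⟩ : ∃ c, c = 2 * Real.sqrt (2 * ((d : ℝ) - 1) * ((d : ℝ) - 4)) := ⟨_, rfl⟩
  have hc2 : c ^ 2 = 8 * ((d : ℝ) - 1) * ((d : ℝ) - 4) := by
    rw [hc, mul_pow, Real.sq_sqrt (mul_nonneg (by linarith) (by linarith))]
    ring
  have hr : ∀ x : Fin d → ℝ, 0 ≤ ∑ i, (x i) ^ 2 := fun x =>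
    Finset.sum_nonneg fun i _ => sq_nonneg _
  obtain ⟨a, ha⟩ : ∃ a : ℝ, a = (d : ℝ) - 4 := ⟨_, rfl⟩
  have ha0 : 0 < a := by linarith
  have hD : ∀ τ r : ℝ, τ ≠ 0 → 0 ≤ r → a * τ ^ 2 + 3 * r ≠ 0 := by
    intro τ r hτ hr0
    positivity
  have key : ∀ t x, u t x = c * (T - t) / (a * (T - t) ^ 2 + 3 * ∑ i, (x i) ^ 2) := by
    intro t x
    rw [hu, hU, ← hc, ← ha, div_pow, Real.sq_sqrt (hr x)]
    have hrx := hr x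
    rcases eq_or_ne (T - t) 0 with h0 | h0
    · simp [h0]
    · have h1 := hD _ _ h0 hrx
      have h2 : a + 3 * ((∑ i, (x i) ^ 2) / (T - t) ^ 2) ≠ 0 := by positivity
      field_simp
  constructor
  · have : (fun p : ℝ × (Fin d → ℝ) => u p.1 p.2) = fun p =>
        c * (T - p.1) / (a * (T - p.1) ^ 2 + 3 * ∑ i, (p.2 i) ^ 2) := by
      funext p
      exact key _ _
    rw [this]
    apply ContDiffOn.div
    · fun_prop
    · fun_prop
    · rintro ⟨t, x⟩ ⟨h, -⟩
      exact hD _ _ (sub_pos.2 h).ne' (hr x)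
  · intro t ht x
    have hτ : T - t ≠ 0 := (sub_pos.2 ht).ne'
    have h1 := hD _ _ hτ (hr x)
    obtain ⟨r, hrr⟩ : ∃ r, r = ∑ i, (x i) ^ 2 := ⟨_, rfl⟩
    have hr0 : 0 ≤ r := hrr ▸ hr x
    have htime : iteratedDeriv 2 (fun s => u s x) t =
        c * a * (T - t) * (2 * a * (T - t) ^ 2 - 18 * r) / (a * (T - t) ^ 2 + 3 * r) ^ 3 := by
      simp only [key, ← hrr]
      rw [← hrr] at h1
      have hlin : ∀ s : ℝ, HasDerivAt (fun s => T - s) (-1) s := fun s => by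
        simpa using (hasDerivAt_id s).const_sub T
      have hden : ∀ s : ℝ, HasDerivAt (fun s => a * (T - s) ^ 2 + 3 * r)
          (-(2 * a * (T - s))) s := fun s => by
        refine ((((hlin s).pow 2).const_mul a).add_const (3 * r)).congr_deriv ?_
        push_cast
        ring
      refine aux_iter2 (f' := fun s => c * (a * (T - s) ^ 2 - 3 * r) /
        (a * (T - s) ^ 2 + 3 * r) ^ 2) ?_ ?_
      · filter_upwards [Iio_mem_nhds ht] with s hs
        have hs1 := hD _ _ (sub_pos.2 hs).ne' hr0
        refine (((hlin s).const_mul c).div (hden s) hs1).congr_deriv ?_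
        congr 1
        ring
      · have hnum : HasDerivAt (fun s => c * (a * (T - s) ^ 2 - 3 * r))
            (c * (-(2 * a * (T - t)))) t := by
          refine (((((hlin t).pow 2).const_mul a).sub_const (3 * r)).const_mul c).congr_deriv ?_
          push_cast
          ring
        refine (hnum.div ((hden t).pow 2) (pow_ne_zero 2 h1)).congr_deriv ?_
        simp only [Pi.pow_apply]
        field_simp
        push_cast
        ring
    have hspace : ∀ i, iteratedDeriv 2 (fun s => u t (Function.update x i s)) (x i) =
        c * (T - t) * (-6 / (a * (T - t) ^ 2 + 3 * r) ^ 2 +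
          72 * (x i) ^ 2 / (a * (T - t) ^ 2 + 3 * r) ^ 3) := by
      intro i
      obtain ⟨q, hq⟩ : ∃ q, q = ∑ j ∈ Finset.univ.erase i, (x j) ^ 2 := ⟨_, rfl⟩
      have hq0 : 0 ≤ q := hq ▸ Finset.sum_nonneg fun i _ => sq_nonneg _
      have hrq : r = (x i) ^ 2 + q := by
        rw [hrr, hq, Finset.add_sum_erase _ (fun j => (x j) ^ 2) (Finset.mem_univ i)]
      have hs : ∀ s, ∑ j, (Function.update x i s j) ^ 2 = s ^ 2 + q := by
        intro s
        rw [← Finset.add_sum_erase _ _ (Finset.mem_univ i), hq]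
        congr 1
        · simp
        · refine Finset.sum_congr rfl fun j hj => ?_
          rw [Function.update_of_ne (Finset.ne_of_mem_erase hj)]
      simp only [key, hs]
      have hne : ∀ s : ℝ, a * (T - t) ^ 2 + 3 * (s ^ 2 + q) ≠ 0 := fun s =>
        hD _ _ hτ (by positivity)
      have hden : ∀ s : ℝ, HasDerivAt (fun s => a * (T - t) ^ 2 + 3 * (s ^ 2 + q))
          (6 * s) s := fun s => by
        refine ((((hasDerivAt_pow 2 s).add_const q).const_mul 3).const_add _).congr_deriv ?_
        push_cast
        ring
      refine aux_iter2 (f' := fun s => c * (T - t) * (-6) * s /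
        (a * (T - t) ^ 2 + 3 * (s ^ 2 + q)) ^ 2) (Filter.Eventually.of_forall fun s => ?_) ?_
      · refine ((hasDerivAt_const s (c * (T - t))).div (hden s) (hne s)).congr_deriv ?_
        congr 1
        ring
      · have hne' := hne (x i)
        refine (((hasDerivAt_id (x i)).const_mul (c * (T - t) * (-6))).div ((hden (x i)).pow 2)
          (pow_ne_zero 2 hne')).congr_deriv ?_
        simp only [Pi.pow_apply, id]
        rw [hrq]
        field_simp
        push_cast
        ring
    rw [htime, laplacian, Finset.sum_congr rfl fun i _ => hspace i, ← Finset.mul_sum,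
      Finset.sum_add_distrib, ← Finset.sum_div, ← Finset.sum_div, ← Finset.mul_sum, ← hrr, key, ← hrr]
    rw [← hrr] at h1
    simp only [Finset.sum_const, Finset.card_univ, Fintype.card_fin, nsmul_eq_mul]
    have hda : (d : ℝ) = a + 4 := by linarith
    rw [hda] at hc2 ⊢
    have hc3 : c ^ 3 = c * (8 * (a + 4 - 1) * (a + 4 - 4)) := by rw [← hc2]; ring
    rw [div_pow, mul_pow, hc3]
    generalize hτ' : T - t = τ at *
    field_simp
    ring
end

section
/- Let d ≥ 5. The function f_0(ρ) = (d−4−3ρ²)/(d−4+3ρ²)² solves the mode ODE with parameter λ = 1, i.e., (1−ρ²)f_0''(ρ) + ((d−1)/ρ − 6ρ)f_0'(ρ) − (6 − 24(d−1)(d−4)/(d−4+3ρ²)²)f_0(ρ) = 0 for all ρ > 0. -/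
/-- For `d ≥ 5`, the gauge mode `f₀(ρ) = (d−4−3ρ²)/(d−4+3ρ²)²` solves the mode ODE
with parameter `λ = 1` for all `ρ > 0`. -/
theorem gauge_mode_solves_mode_ODE (d : ℕ) (hd : 5 ≤ d)
    (f₀ : ℝ → ℝ)
    (hf₀ : ∀ ρ, f₀ ρ = ((d : ℝ) - 4 - 3 * ρ ^ 2) / ((d : ℝ) - 4 + 3 * ρ ^ 2) ^ 2) :
    ∀ ρ : ℝ, 0 < ρ →
      (1 - ρ ^ 2) * iteratedDeriv 2 f₀ ρ
        + (((d : ℝ) - 1) / ρ - 6 * ρ) * deriv f₀ ρ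
        - (6 - 24 * ((d : ℝ) - 1) * ((d : ℝ) - 4) /
            ((d : ℝ) - 4 + 3 * ρ ^ 2) ^ 2) * f₀ ρ = 0 := by
  intro ρ hρ
  obtain ⟨a, ha⟩ : ∃ a : ℝ, a = (d : ℝ) - 4 := ⟨_, rfl⟩
  have hd' : (5 : ℝ) ≤ d := by exact_mod_cast hd
  have ha0 : 0 < a := by linarith
  have hd1 : (d : ℝ) - 1 = a + 3 := by linarith
  rw [hd1]
  simp only [← ha] at hf₀ ⊢
  have hD : ∀ x : ℝ, a + 3 * x ^ 2 ≠ 0 := fun x => by positivity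
  have hf : f₀ = fun x => (a - 3 * x ^ 2) / (a + 3 * x ^ 2) ^ 2 := funext hf₀
  have hq : ∀ x : ℝ, HasDerivAt (fun x : ℝ => 3 * x ^ 2) (6 * x) x := fun x => by
    have h := (hasDerivAt_pow 2 x).const_mul 3
    refine h.congr_deriv ?_
    push_cast
    ring
  have h1 : deriv f₀ = fun x => 18 * (x ^ 3 - a * x) / (a + 3 * x ^ 2) ^ 3 := by
    funext x
    rw [hf]
    refine HasDerivAt.deriv ?_
    have h := ((hq x).const_sub a).fun_div (((hq x).const_add a).fun_pow 2)
      (pow_ne_zero 2 (hD x))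
    refine h.congr_deriv ?_
    have := hD x
    field_simp
    push_cast
    ring
  have h2 : iteratedDeriv 2 f₀ ρ =
      (54 * ρ ^ 2 - 18 * a) / (a + 3 * ρ ^ 2) ^ 3
        - 324 * ρ * (ρ ^ 3 - a * ρ) / (a + 3 * ρ ^ 2) ^ 4 := by
    rw [iteratedDeriv_succ, iteratedDeriv_one, h1]
    refine HasDerivAt.deriv ?_
    have hn : HasDerivAt (fun x : ℝ => 18 * (x ^ 3 - a * x)) (54 * ρ ^ 2 - 18 * a) ρ := by
      have h := ((hasDerivAt_pow 3 ρ).fun_sub ((hasDerivAt_id' ρ).const_mul a)).const_mul 18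
      refine h.congr_deriv ?_
      push_cast
      ring
    have h := hn.fun_div (((hq ρ).const_add a).fun_pow 3) (pow_ne_zero 3 (hD ρ))
    refine h.congr_deriv ?_
    have := hD ρ
    field_simp
    push_cast
    ring
  rw [h2, h1, hf₀]
  have := hD ρ
  field_simp
  ring
end

section
/- Let d = 7. The function f_1(ρ) = (1+ρ²)^{-2} solves the mode ODE with parameter λ = 3, i.e., (1−ρ²)f_1''(ρ) + (6/ρ − 10ρ)f_1'(ρ) − (20 − 432/(3+3ρ²)²)f_1(ρ) = 0 for all ρ > 0. -/
/-- For `d = 7`, the function `f₁(ρ) = (1+ρ²)⁻²` solves the mode ODE with parameter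
`λ = 3` for all `ρ > 0`. -/
theorem unstable_mode_solves_mode_ODE_d7
    (f₁ : ℝ → ℝ)
    (hf₁ : ∀ ρ, f₁ ρ = ((1 + ρ ^ 2) ^ 2)⁻¹) :
    ∀ ρ : ℝ, 0 < ρ →
      (1 - ρ ^ 2) * iteratedDeriv 2 f₁ ρ
        + (6 / ρ - 10 * ρ) * deriv f₁ ρ
        - (20 - 432 / (3 + 3 * ρ ^ 2) ^ 2) * f₁ ρ = 0 := by
  intro ρ hρ
  have hs : ∀ x : ℝ, 1 + x ^ 2 ≠ 0 := fun x => by positivity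
  have hb : ∀ x : ℝ, HasDerivAt (fun y : ℝ => 1 + y ^ 2) (2 * x) x := fun x => by
    simpa using (hasDerivAt_pow 2 x).const_add 1
  have h1 : deriv f₁ = fun x => -4 * x / (1 + x ^ 2) ^ 3 := by
    funext x
    rw [funext hf₁]
    have h := ((hb x).fun_pow 2).fun_inv (pow_ne_zero 2 (hs x))
    rw [h.deriv]
    have := hs x
    field_simp
    push_cast
    ring
  have h2 : iteratedDeriv 2 f₁ ρ = (20 * ρ ^ 2 - 4) / (1 + ρ ^ 2) ^ 4 := by
    rw [iteratedDeriv_succ, iteratedDeriv_one, h1]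
    have h := ((hasDerivAt_id ρ).const_mul (-4)).fun_div ((hb ρ).fun_pow 3)
      (pow_ne_zero 3 (hs ρ))
    simp only [id] at h
    rw [h.deriv]
    have := hs ρ
    field_simp
    push_cast
    ring
  have h3 : (3 + 3 * ρ ^ 2) = 3 * (1 + ρ ^ 2) := by ring
  rw [h2, h1, hf₁, h3]
  have := hs ρ
  field_simp
  ring
end

section
/- Let d = 7 and let λ ∈ ℂ with Re λ ≥ 0. If f is a nonzero complex-valued function that is smooth on [0,1] and solves the mode ODE (1−ρ²)f''(ρ) + (6/ρ − 2(λ+2)ρ)f'(ρ) − ((λ+1)(λ+2) − 432/(3+3ρ²)²)f(ρ) = 0 on (0,1), then either λ = 1 and f is a constant multiple of f_0(ρ) = (1−ρ²)/(1+ρ²)², or λ = 3 and f is a constant multiple of f_1(ρ) = (1+ρ²)^{-2}. -/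
namespace ModeODE

/-- The three-term recurrence satisfied by the Taylor coefficients at the light cone. -/
def Rec (L : ℂ) (a : ℕ → ℂ) : Prop :=
  8 * (L - 1) * a 1 = (L - 3) * (2 * L + 4) * a 0 ∧
  ∀ n : ℕ, 8 * ((n : ℂ) + 2) * (n + L) * a (n + 2) =
    (12 * ((n : ℂ) + 1) * n + 12 * L * (n + 1) + (L - 3) * (2 * L + 4)) * a (n + 1)
      - (2 * n + L - 2) * (2 * n + L - 3) * a n

lemma natadd_ne_zero {L : ℂ} (hL : 0 ≤ L.re) {x : ℝ} (hx : 0 < x) : (x : ℂ) + L ≠ 0 := by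
  intro h
  have := congrArg Complex.re h
  simp at this
  linarith

lemma rec_zero {L : ℂ} (hL : 0 ≤ L.re) {a : ℕ → ℂ} (h : Rec L a)
    (h1 : a 1 = 0) (h2 : a 2 = 0) (h0 : a 0 = 0) : ∀ n, a n = 0 := by
  have key : ∀ n, a (n + 1) = 0 ∧ a (n + 2) = 0 := by
    intro n
    induction n with
    | zero => exact ⟨h1, h2⟩
    | succ k ih =>
      refine ⟨ih.2, ?_⟩
      have e := h.2 (k + 1)
      rw [show k + 1 + 1 = k + 2 from rfl, ih.1, ih.2] at e
      have n1 : ((k + 1 : ℕ) : ℂ) + L ≠ 0 := by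
        have := natadd_ne_zero hL (x := (k : ℝ) + 1) (by positivity)
        push_cast at this ⊢; exact this
      have n2 : ((k + 1 : ℕ) : ℂ) + 2 ≠ 0 := by
        exact_mod_cast Nat.succ_ne_zero (k + 1 + 1)
      simp only [mul_zero, sub_zero] at e
      have := mul_ne_zero (mul_ne_zero (by norm_num : (8 : ℂ) ≠ 0) n2) n1
      exact (mul_eq_zero.mp e).resolve_left this
  intro n
  rcases n with _ | n
  · exact h0
  · exact (key n).1

lemma intg {L : ℂ} {a b : ℕ → ℂ} (h : Rec L a)
    (hb0 : b 0 = (L - 3) * a 0 / 2)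
    (hb : ∀ n, b (n + 1) = (b n + (2 * (n + 1) + L - 3) * a (n + 1)) / 2) (n : ℕ) :
    4 * ((n : ℂ) + 2) * (n + L) * a (n + 2) =
      (2 * n + L + 4) * ((2 * (n + 1) + L - 3) * a (n + 1)) + 4 * b n := by
  induction n with
  | zero =>
    have e := h.2 0
    have e0 := h.1
    rw [hb0]
    push_cast at e ⊢
    linear_combination e / 2 + e0 / 4
  | succ k ih =>
    have e := h.2 (k + 1)
    rw [hb]
    push_cast at e ⊢
    rw [show k + 1 + 1 = k + 2 from rfl] at *
    linear_combination e / 2 + ih / 2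

lemma base {L : ℂ} (hL : 0 ≤ L.re) (hL1 : L ≠ 1) (hL3 : L ≠ 3) {a b : ℕ → ℂ} (h : Rec L a)
    (hne : ∃ n, a n ≠ 0)
    (hb0 : b 0 = (L - 3) * a 0 / 2)
    (hb : ∀ n, b (n + 1) = (b n + (2 * (n + 1) + L - 3) * a (n + 1)) / 2) :
    ∃ k : ℂ, k ≠ 0 ∧ b 1 = k * (8 * L * (L + 4)) ∧
      (L + 1) * a 2 = 2 * k * ((L + 1) * (L ^ 2 + 6 * L + 16)) := by
  have i0 := intg h hb0 hb 0
  have b1 := hb 0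
  have r0 := h.1
  have r1 := h.2 0
  push_cast at i0 b1 r1
  by_cases h0 : L = 0
  · subst h0
    have e1 : a 1 = 0 := by
      simp at r0 r1
      linear_combination r0 / 32 + r1 / 16
    have e0 : a 0 = 0 := by
      simp at r0
      rw [e1] at r0; simpa using r0
    refine ⟨a 2 / 32, ?_, ?_, by ring⟩
    · intro hk
      obtain ⟨n, hn⟩ := hne
      exact hn (rec_zero hL h e1 (by simpa using hk) e0 n)
    · rw [b1, hb0, e0, e1]; simp
  · have hL1' : L - 1 ≠ 0 := sub_ne_zero.mpr hL1
    have hL3' : L - 3 ≠ 0 := sub_ne_zero.mpr hL3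
    refine ⟨(L - 3) * a 0 / (64 * L), ?_, ?_, ?_⟩
    · intro hk
      obtain ⟨n, hn⟩ := hne
      have e0 : a 0 = 0 := by
        have : (64 * L) ≠ 0 := by simpa using h0
        simpa [this, hL3', h0] using hk
      have e1 : a 1 = 0 := by
        rw [e0] at r0; simpa [hL1'] using r0
      have e2 : a 2 = 0 := by
        rw [hb0, e1, e0] at i0; simpa [h0] using i0
      exact hn (rec_zero hL h e1 e2 e0 n)
    · rw [b1, hb0]
      field_simp
      linear_combination 16 * r0
    · rw [hb0] at i0
      field_simp
      simp only [zero_add, mul_zero, mul_one] at i0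
      linear_combination (8:ℂ) * (L+1) * i0 + (L+1) * (L+4) * r0

end ModeODE

namespace ModeODE

lemma nsq (z : ℂ) : ‖z‖ ^ 2 = z.re ^ 2 + z.im ^ 2 := by
  rw [← Complex.normSq_eq_norm_sq, Complex.normSq_apply]; ring

lemma ineq_main {L : ℂ} (hL : 0 ≤ L.re) {m : ℝ} (hm : 0 ≤ m) :
    12 * (‖2 * (m : ℂ) + 7 + L‖ * ‖2 * (m : ℂ) + 1 + L‖) + 20 * ((m + 5) * ‖(m : ℂ) + 3 + L‖)
      ≤ 18 * (‖2 * (m : ℂ) + 7 + L‖ * ‖2 * (m : ℂ) + 6 + L‖) := by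
  set P := ‖2 * (m : ℂ) + 7 + L‖ * ‖2 * (m : ℂ) + 1 + L‖ with hP
  set Q := (m + 5) * ‖(m : ℂ) + 3 + L‖ with hQ
  set R := ‖2 * (m : ℂ) + 7 + L‖ * ‖2 * (m : ℂ) + 6 + L‖ with hR
  have key : 234 * P ^ 2 + 1040 * Q ^ 2 ≤ 324 * R ^ 2 := by
    rw [hP, hQ, hR]
    simp only [mul_pow, nsq]
    simp
    generalize L.re = x at *
    generalize L.im = y
    have h1 : 0 ≤ 90 * (y ^ 2 - (10160 + 1040 * m + 320 * m ^ 2) / 180) ^ 2 := by positivity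
    have h2 : 0 ≤ x * (171600 + 140480 * m + 29120 * m ^ 2 + 800 * m ^ 3)
      + x ^ 2 * (37720 + 17680 * m + 1120 * m ^ 2) + x ^ 3 * (4680 + 720 * m) + 90 * x ^ 4
      + y ^ 2 * x * (4680 + 720 * m) + 180 * x ^ 2 * y ^ 2 := by positivity
    have h3 : 0 ≤ 30000 + 300000 * m + 100000 * m ^ 2 + 10000 * m ^ 3 + 100 * m ^ 4 := by positivity
    have h4 : 0 ≤ m ^ 2 := by positivity
    have h5 : 0 ≤ m ^ 3 := by positivity
    have h6 : 0 ≤ m ^ 4 := by positivity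
    nlinarith
  have hR0 : 0 ≤ R := by positivity
  nlinarith [sq_nonneg (3 * P - 8 * Q), abs_le_of_sq_le_sq' (a := 12 * P + 20 * Q) (b := 18 * R)
    (by nlinarith [sq_nonneg (3 * P - 8 * Q)]) (by positivity)]

lemma ineq_three {L : ℂ} (hL : 0 ≤ L.re) :
    ‖L + 5‖ * ‖4 * L + 7‖ + 12 * ‖L + 2‖ ≤ 5 * (‖L + 5‖ * ‖L + 4‖) := by
  set P := ‖L + 5‖ * ‖4 * L + 7‖ with hP
  set Q := ‖L + 2‖ with hQ
  set R := ‖L + 5‖ * ‖L + 4‖ with hR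
  have key : 7 * P ^ 2 + 2520 * Q ^ 2 ≤ 125 * R ^ 2 := by
    rw [hP, hQ, hR]
    simp only [mul_pow, nsq]
    simp
    generalize L.re = x at *
    generalize L.im = y
    have h1 : 0 ≤ (y ^ 2 - 20) ^ 2 := by positivity
    have h2 : 0 ≤ x * 4338 + x ^ 2 * 1108 + x ^ 3 * 147.6 + 2.6 * x ^ 4
      + y ^ 2 * x * 147.6 + 5.2 * x ^ 2 * y ^ 2 := by positivity
    nlinarith
  have hR0 : 0 ≤ R := by positivity
  nlinarith [abs_le_of_sq_le_sq' (a := P + 12 * Q) (b := 5 * R)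
    (by nlinarith [sq_nonneg (P - 30 * Q)]) (by positivity)]

lemma ineq_two {L : ℂ} (hL : 0 ≤ L.re) :
    24 * (‖L + 1‖ * ‖L ^ 3 + 11 * L ^ 2 + 38 * L + 16‖) ≤
      5 * (‖L + 3‖ * ‖L ^ 4 + 13 * L ^ 3 + 80 * L ^ 2 + 212 * L + 96‖) := by
  apply le_of_sq_le_sq _ (by positivity)
  simp only [mul_pow, nsq]
  obtain ⟨x, y⟩ := L
  simp only [pow_succ, pow_zero, one_mul, Complex.add_re, Complex.add_im, Complex.mul_re,
    Complex.mul_im, Complex.one_re, Complex.one_im, Complex.re_ofNat, Complex.im_ofNat]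
  simp only at hL
  have e : 0 ≤ 481536 + 1527588 * y^2 + 81922 * y^4 + 632.25 * y^6 - 31.5 * y^8 + 6.25 * y^10
    + (2386368 * x + 2254440 * x * y^2 + 128462*x*y^4 + 3394*x*y^6 + 200*x*y^8)
    + (4330404 * x^2 + 1544360 * x^2*y^2 + 81272.75*x^2*y^4 + 2849*x^2*y^6 + 31.25*x^2*y^8)
    + (3746856*x^3 + 708316*x^3*y^2 + 32782*x^3*y^4 + 800*x^3*y^6)
    + (1886374*x^4 + 233848.75*x^4*y^2 + 8736*x^4*y^4 + 62.5*x^4*y^6)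
    + (637454*x^5+55382*x^5*y^2+1200*x^5*y^4)
    + (153208.25*x^6+8799*x^6*y^2+62.5*x^6*y^4)
    + (25994*x^7+800*x^7*y^2) + (2943.5*x^8+31.25*x^8*y^2) + 200*x^9+6.25*x^10 := by
    have : 481536 + 1527588 * y^2 + 81922 * y^4 + 632.25 * y^6 - 31.5 * y^8 + 6.25 * y^10
     = 481536 + 1527588 * y^2 + 81922 * y^4 + y^6 * (6.25 * (y^2 - 2.52)^2 + 592.56) := by ring
    rw [this]
    positivity
  linear_combination 4 * e

/-- Propagation of the cone condition, generic step. -/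
lemma step {L b g g' : ℂ} (hL : 0 ≤ L.re) {m : ℝ} (hm : 0 ≤ m) (hg : g ≠ 0)
    (hbg : ‖b‖ ≤ 3 / 2 * ‖g‖)
    (h : 4 * ((m : ℂ) + 5) * (m + 3 + L) * g' =
      (2 * m + 7 + L) * ((2 * m + 10 + L) * g + 4 * b)) :
    g' ≠ 0 ∧ ‖(b + g) / 2‖ ≤ 3 / 2 * ‖g'‖ := by
  have n7 : 2 * (m : ℂ) + 7 + L ≠ 0 := by
    intro h; have := congrArg Complex.re h; simp at this; linarith
  have n6 : 2 * (m : ℂ) + 6 + L ≠ 0 := by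
    intro h; have := congrArg Complex.re h; simp at this; linarith
  have n3 : (m : ℂ) + 3 + L ≠ 0 := by
    intro h; have := congrArg Complex.re h; simp at this; linarith
  set X := b + g with hX
  have c1 : 6 * ‖X‖ ≤ ‖5 * g + 4 * X‖ := by
    apply le_of_sq_le_sq _ (by positivity)
    have : ‖b‖ ^ 2 ≤ (3 / 2 * ‖g‖) ^ 2 := by gcongr
    rw [hX]
    simp only [mul_pow, nsq] at this ⊢
    simp
    nlinarith
  have c2 : 6 * ‖2 * (m : ℂ) + 6 + L‖ * ‖X‖ ≤
      5 * ‖(2 * m + 10 + L) * g + 4 * b‖ + 4 * ‖2 * (m : ℂ) + 1 + L‖ * ‖X‖ := by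
    have e : (2 * (m : ℂ) + 6 + L) * (5 * g + 4 * X) =
        5 * ((2 * m + 10 + L) * g + 4 * b) + 4 * (2 * (m : ℂ) + 1 + L) * X := by
      rw [hX]; ring
    have t := norm_add_le (5 * ((2 * m + 10 + L) * g + 4 * b)) (4 * (2 * (m : ℂ) + 1 + L) * X)
    rw [← e] at t
    simp only [norm_mul, Complex.norm_ofNat] at t
    rw [← norm_mul] at t
    have := mul_le_mul_of_nonneg_left c1 (norm_nonneg (2 * (m : ℂ) + 6 + L))
    rw [← norm_mul] at this
    linarith
  have c3 : 4 * ((m + 5) * ‖(m : ℂ) + 3 + L‖) * ‖g'‖ =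
      ‖2 * (m : ℂ) + 7 + L‖ * ‖(2 * m + 10 + L) * g + 4 * b‖ := by
    rw [← norm_mul, ← h]
    simp only [norm_mul, Complex.norm_ofNat]
    rw [show (m : ℂ) + 5 = ((m + 5 : ℝ) : ℂ) by push_cast; ring, Complex.norm_real,
      Real.norm_of_nonneg (by positivity)]
    ring
  have c4 := ineq_main hL hm
  have Qpos : 0 < (m + 5) * ‖(m : ℂ) + 3 + L‖ := by
    have := norm_pos_iff.mpr n3
    positivity
  have c5 : ‖X‖ ≤ 3 * ‖g'‖ := by
    have d1 := mul_le_mul_of_nonneg_left c2 (norm_nonneg (2 * (m : ℂ) + 7 + L))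
    have d2 := mul_le_mul_of_nonneg_right c4 (norm_nonneg X)
    have d3 : ((m + 5) * ‖(m : ℂ) + 3 + L‖) * ‖X‖ ≤
        ((m + 5) * ‖(m : ℂ) + 3 + L‖) * (3 * ‖g'‖) := by
      linarith
    exact le_of_mul_le_mul_left d3 Qpos
  refine ⟨?_, ?_⟩
  · intro hg'
    rw [hg', norm_zero, mul_zero] at c5
    have hX0 : X = 0 := by simpa using c5
    have hb : b = -g := eq_neg_of_add_eq_zero_left (hX ▸ hX0)
    rw [hg', hb, mul_zero] at h
    have : (2 * (m : ℂ) + 7 + L) * ((2 * m + 6 + L) * g) = 0 := by rw [h]; ring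
    exact mul_ne_zero n7 (mul_ne_zero n6 hg) this
  · rw [norm_div, Complex.norm_ofNat]
    linarith

lemma step_three {L b g g' : ℂ} (hL : 0 ≤ L.re) (hg : g ≠ 0)
    (hbg : ‖b‖ ≤ 5 / 4 * ‖g‖)
    (h : 16 * (L + 2) * g' = (L + 5) * ((L + 8) * g + 4 * b)) :
    g' ≠ 0 ∧ ‖(b + g) / 2‖ ≤ 3 / 2 * ‖g'‖ := by
  have n5 : L + 5 ≠ 0 := by
    intro h; have := congrArg Complex.re h; simp at this; linarith
  have n4 : L + 4 ≠ 0 := by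
    intro h; have := congrArg Complex.re h; simp at this; linarith
  have n2 : L + 2 ≠ 0 := by
    intro h; have := congrArg Complex.re h; simp at this; linarith
  set X := b + g with hX
  have c1 : 20 * ‖X‖ ≤ ‖9 * g + 16 * X‖ := by
    apply le_of_sq_le_sq _ (by positivity)
    have : ‖b‖ ^ 2 ≤ (5 / 4 * ‖g‖) ^ 2 := by gcongr
    rw [hX]
    simp only [mul_pow, nsq] at this ⊢
    simp
    nlinarith
  have c2 : 20 * ‖L + 4‖ * ‖X‖ ≤
      9 * ‖(L + 8) * g + 4 * b‖ + 4 * ‖4 * L + 7‖ * ‖X‖ := by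
    have e : (L + 4) * (9 * g + 16 * X) =
        9 * ((L + 8) * g + 4 * b) + 4 * (4 * L + 7) * X := by
      rw [hX]; ring
    have t := norm_add_le (9 * ((L + 8) * g + 4 * b)) (4 * (4 * L + 7) * X)
    rw [← e] at t
    simp only [norm_mul, Complex.norm_ofNat] at t
    have := mul_le_mul_of_nonneg_left c1 (norm_nonneg (L + 4))
    linarith
  have c3 : 16 * ‖L + 2‖ * ‖g'‖ = ‖L + 5‖ * ‖(L + 8) * g + 4 * b‖ := by
    rw [← norm_mul, ← h]
    simp only [norm_mul, Complex.norm_ofNat]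
  have c4 := ineq_three hL
  have Qpos : 0 < ‖L + 2‖ := norm_pos_iff.mpr n2
  have c5 : ‖X‖ ≤ 3 * ‖g'‖ := by
    have d1 := mul_le_mul_of_nonneg_left c2 (norm_nonneg (L + 5))
    have d2 := mul_le_mul_of_nonneg_right c4 (norm_nonneg X)
    have d3 : ‖L + 2‖ * ‖X‖ ≤ ‖L + 2‖ * (3 * ‖g'‖) := by
      linarith
    exact le_of_mul_le_mul_left d3 Qpos
  refine ⟨?_, ?_⟩
  · intro hg'
    rw [hg', norm_zero, mul_zero] at c5
    have hX0 : X = 0 := by simpa using c5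
    have hb : b = -g := eq_neg_of_add_eq_zero_left (hX ▸ hX0)
    rw [hg', hb, mul_zero] at h
    have : (L + 5) * ((L + 4) * g) = 0 := by rw [h]; ring
    exact mul_ne_zero n5 (mul_ne_zero n4 hg) this
  · rw [norm_div, Complex.norm_ofNat]
    linarith

lemma cone {L : ℂ} (hL : 0 ≤ L.re) (hL1 : L ≠ 1) (hL3 : L ≠ 3) {a b : ℕ → ℂ} (h : Rec L a)
    (hne : ∃ n, a n ≠ 0)
    (hb0 : b 0 = (L - 3) * a 0 / 2)
    (hb : ∀ n, b (n + 1) = (b n + (2 * (n + 1) + L - 3) * a (n + 1)) / 2) (m : ℕ) :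
    (2 * (m : ℂ) + 5 + L) * a (m + 4) ≠ 0 ∧
      ‖b (m + 3)‖ ≤ 3 / 2 * ‖(2 * (m : ℂ) + 5 + L) * a (m + 4)‖ := by
  have n1 : L + 1 ≠ 0 := by
    intro h; have := congrArg Complex.re h; simp at this; linarith
  have n3 : L + 3 ≠ 0 := by
    intro h; have := congrArg Complex.re h; simp at this; linarith
  induction m with
  | zero =>
    obtain ⟨k, hk, hb1, hg2⟩ := base hL hL1 hL3 h hne hb0 hb
    have i1 := intg h hb0 hb 1
    have i2 := intg h hb0 hb 2
    have hb2 := hb 1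
    have hb3 := hb 2
    push_cast at i1 i2 hb2 hb3
    have e2 : b 2 = k * (L ^ 3 + 11 * L ^ 2 + 38 * L + 16) := by
      rw [hb2, hb1]
      linear_combination hg2 / 2
    have e3 : 12 * (L + 1) * ((L + 3) * a 3) =
        2 * k * ((L + 3) * (L ^ 4 + 13 * L ^ 3 + 80 * L ^ 2 + 212 * L + 96)) := by
      rw [hb1] at i1
      linear_combination (L + 3) * i1 + (L + 3) * (L + 6) * hg2
    have hle : ‖b 2‖ ≤ 5 / 4 * ‖(L + 3) * a 3‖ := by
      have t := congrArg norm e3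
      have t2 := congrArg norm e2
      simp only [norm_mul, Complex.norm_ofNat] at t t2 ⊢
      have d := mul_le_mul_of_nonneg_left (ineq_two hL) (norm_nonneg k)
      have p1 := norm_pos_iff.mpr n1
      refine le_of_mul_le_mul_left (a := ‖L + 1‖) ?_ p1
      rw [t2]
      linarith
    have hg3 : (L + 3) * a 3 ≠ 0 := by
      intro hz
      rw [hz, norm_zero, mul_zero] at hle
      have z2 : b 2 = 0 := by simpa using hle
      rw [hz, mul_zero] at e3
      rw [e2] at z2
      have q1 : L ^ 3 + 11 * L ^ 2 + 38 * L + 16 = 0 := (mul_eq_zero.mp z2).resolve_left hk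
      have q2 : L ^ 4 + 13 * L ^ 3 + 80 * L ^ 2 + 212 * L + 96 = 0 := by
        have := e3.symm
        simpa [hk, n3] using this
      have q3 : L * ((L + 4) * (L + 2)) = 0 := by
        linear_combination (L + 6) / 4 * q1 - q2 / 4
      have n4 : L + 4 ≠ 0 := by
        intro h; have := congrArg Complex.re h; simp at this; linarith
      have n2 : L + 2 ≠ 0 := by
        intro h; have := congrArg Complex.re h; simp at this; linarith
      have L0 : L = 0 := by simpa [n4, n2] using q3
      rw [L0] at q1
      norm_num at q1
    have := step_three hL hg3 hle (g' := (L + 5) * a 4) (by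
      linear_combination (L + 5) * i2)
    refine ⟨?_, ?_⟩
    · push_cast
      have t := this.1
      intro hz; apply t; rw [← hz]; ring
    · have t := this.2
      push_cast
      rw [show b (0 + 3) = (b 2 + (L + 3) * a 3) / 2 by rw [hb3]; ring]
      convert t using 3
      ring
  | succ m ih =>
    have i := intg h hb0 hb (m + 3)
    have hb' := hb (m + 3)
    push_cast at i hb'
    have := step hL (m := (m : ℝ)) (by positivity) ih.1 ih.2
      (g' := (2 * ((m : ℂ) + 1) + 5 + L) * a (m + 5)) (by
        push_cast
        linear_combination (2 * (m : ℂ) + 7 + L) * i)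
    push_cast
    refine ⟨this.1, ?_⟩
    rw [show b (m + 1 + 3) = (b (m + 3) + (2 * (m : ℂ) + 5 + L) * a (m + 4)) / 2 by
      rw [show m + 1 + 3 = m + 3 + 1 by ring, hb']; ring]
    exact this.2
end ModeODE

namespace ModeODE

/-- One step of the contraction of `b_n - g_{n+1}`. -/
lemma contr {L b g b' g' : ℂ} (hL : 0 ≤ L.re) {n : ℝ} (hn : 100 * (‖L‖ + 10) ≤ n)
    (hbg : ‖b‖ ≤ 3 / 2 * ‖g‖) (hb' : b' = (b + g) / 2)
    (h : 4 * ((n : ℂ) + 2) * (n + L) * g' = (2 * n + 1 + L) * ((2 * n + 4 + L) * g + 4 * b)) :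
    9 / 10 * ‖g‖ ≤ ‖g'‖ ∧
    ‖b' - g'‖ ≤ 1 / 2 * ‖b - g‖ + ((‖L‖ + 10) ^ 2 + 60) / n * ‖g‖ := by
  set K := ‖L‖ with hK
  have K0 : 0 ≤ K := norm_nonneg _
  have n0 : 0 < n := by linarith
  have u1 : ‖(n : ℂ) + L‖ ≤ n + K := by
    refine (norm_add_le _ _).trans ?_
    rw [Complex.norm_real, Real.norm_of_nonneg n0.le]
  have l1 : n ≤ ‖(n : ℂ) + L‖ := by
    refine le_trans ?_ (Complex.re_le_norm _)
    simp; exact hL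
  have nn : ∀ x : ℝ, 0 ≤ x → ‖(x : ℂ)‖ = x := fun x hx => by
    rw [Complex.norm_real, Real.norm_of_nonneg hx]
  have low : ∀ c : ℝ, 0 ≤ c → 2 * n + c - K ≤ ‖2 * (n : ℂ) + c + L‖ := by
    intro c hc
    have := norm_sub_norm_le (((2 * n + c : ℝ)) : ℂ) (-L)
    rw [nn _ (by positivity), norm_neg] at this
    refine this.trans (le_of_eq ?_)
    congr 1; push_cast; ring
  have up : ∀ c : ℝ, 0 ≤ c → ‖2 * (n : ℂ) + c + L‖ ≤ 2 * n + c + K := by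
    intro c hc
    have := norm_add_le (((2 * n + c : ℝ)) : ℂ) (L)
    rw [nn _ (by positivity)] at this
    refine le_trans (le_of_eq ?_) this
    congr 1; push_cast; ring
  have low1 := low 1 (by norm_num)
  have low4 := low 4 (by norm_num)
  have up1 := up 1 (by norm_num)
  push_cast at low1 low4 up1
  have n2 : ‖(n : ℂ) + 2‖ = n + 2 := by
    rw [← nn (n + 2) (by positivity)]; push_cast; rfl
  have pos1 : 0 < ‖(n : ℂ) + L‖ := lt_of_lt_of_le n0 l1
  constructor
  · have w : (2 * n - 2 - K) * ‖g‖ ≤ ‖(2 * n + 4 + L) * g + 4 * b‖ := by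
      have := norm_sub_norm_le ((2 * n + 4 + L) * g) (-(4 * b))
      rw [norm_neg, norm_mul, norm_mul, Complex.norm_ofNat, sub_neg_eq_add] at this
      nlinarith [norm_nonneg g]
    have t := congrArg norm h
    rw [norm_mul, norm_mul, norm_mul, norm_mul, n2, Complex.norm_ofNat] at t
    have w2 : (2 * n + 1 - K) * ((2 * n - 2 - K) * ‖g‖) ≤
        ‖2 * (n : ℂ) + 1 + L‖ * ‖(2 * n + 4 + L) * g + 4 * b‖ := by
      have : 0 ≤ 2 * n - 2 - K := by linarith
      gcongr
    rw [← t] at w2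
    have w3 : 4 * (n + 2) * ‖(n : ℂ) + L‖ * ‖g'‖ ≤ 4 * (n + 2) * (n + K) * ‖g'‖ := by gcongr
    have w4 : 9 / 10 * (4 * (n + 2) * (n + K)) ≤ (2 * n + 1 - K) * (2 * n - 2 - K) := by
      nlinarith
    have w5 : (4 * (n + 2) * (n + K)) * (9 / 10 * ‖g‖) ≤ (4 * (n + 2) * (n + K)) * ‖g'‖ := by
      have := mul_le_mul_of_nonneg_right w4 (norm_nonneg g)
      linarith
    exact le_of_mul_le_mul_left w5 (by positivity)
  · have e : 4 * ((n : ℂ) + 2) * (n + L) * (b' - g') =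
        2 * ((n : ℂ) + 2) * (n + L) * (b - g) +
          ((-(10 * (n : ℂ)) + 8 * L - (L + 1) * (L + 8)) * g
            - 4 * (2 * n + 1 + L) * (b - g)) := by
      rw [hb', mul_sub, h]; ring
    have hbg2 : ‖b - g‖ ≤ 5 / 2 * ‖g‖ := by
      have := norm_sub_le b g; linarith
    have c1 : ‖-(10 * (n : ℂ)) + 8 * L - (L + 1) * (L + 8)‖ ≤ 10 * n + 8 * K + (K + 1) * (K + 8) := by
      refine (norm_sub_le _ _).trans ?_
      have a1 : ‖-(10 * (n : ℂ)) + 8 * L‖ ≤ 10 * n + 8 * K := by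
        refine (norm_add_le _ _).trans ?_
        simp [abs_of_pos n0, hK]
      have a2 : ‖(L + 1) * (L + 8)‖ ≤ (K + 1) * (K + 8) := by
        rw [norm_mul]
        have b1 : ‖L + 1‖ ≤ K + 1 := (norm_add_le _ _).trans (by simp [hK])
        have b2 : ‖L + 8‖ ≤ K + 8 := (norm_add_le _ _).trans (by simp [hK])
        gcongr
      linarith
    have t := congrArg norm e
    have t2 := t.le.trans (norm_add_le _ _)
    have t3 := norm_sub_le ((-(10 * (n : ℂ)) + 8 * L - (L + 1) * (L + 8)) * g)
      (4 * (2 * (n : ℂ) + 1 + L) * (b - g))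
    simp only [norm_mul (4 * ((n : ℂ) + 2) * (n + L)), norm_mul (2 * ((n : ℂ) + 2) * (n + L)),
      norm_mul (4 * ((n : ℂ) + 2)), norm_mul (2 * ((n : ℂ) + 2)), norm_mul (4:ℂ), norm_mul (2:ℂ),
      norm_mul _ g, norm_mul _ (b - g), n2, Complex.norm_ofNat] at t2 t3
    have t4 : ‖-(10 * (n : ℂ)) + 8 * L - (L + 1) * (L + 8)‖ * ‖g‖ ≤
      (10 * n + 8 * K + (K + 1) * (K + 8)) * ‖g‖ := by gcongr
    have t5 : 4 * ‖2 * (n : ℂ) + 1 + L‖ * ‖b - g‖ ≤ 4 * (2 * n + 1 + K) * (5 / 2 * ‖g‖) := by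
      gcongr
    have t6 : 10 * n + 8 * K + (K + 1) * (K + 8) + 10 * (2 * n + 1 + K) ≤
        4 * n * ((K + 10) ^ 2 + 60) := by nlinarith
    have t7 : n * ((K + 10) ^ 2 + 60) * ‖g‖ ≤
        (n + 2) * ‖(n : ℂ) + L‖ * (((K + 10) ^ 2 + 60) / n * ‖g‖) := by
      have : n * ((K + 10) ^ 2 + 60) * ‖g‖ = n * n * (((K + 10) ^ 2 + 60) / n * ‖g‖) := by
        field_simp
      rw [this]
      gcongr
      linarith
    have t8 := mul_le_mul_of_nonneg_right t6 (norm_nonneg g)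
    have t9 : (4 * (n + 2) * ‖(n : ℂ) + L‖) * ‖b' - g'‖ ≤ (4 * (n + 2) * ‖(n : ℂ) + L‖) *
        (1 / 2 * ‖b - g‖ + ((K + 10) ^ 2 + 60) / n * ‖g‖) := by
      linarith
    exact le_of_mul_le_mul_left t9 (by positivity)

lemma asym {L : ℂ} (hL : 0 ≤ L.re) (hL1 : L ≠ 1) (hL3 : L ≠ 3) {a : ℕ → ℂ} (h : Rec L a)
    (hne : ∃ n, a n ≠ 0) :
    ∃ (N : ℕ) (C : ℝ), 0 ≤ C ∧ 1 ≤ N ∧ ∀ n ≥ N, a n ≠ 0 ∧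
      ‖a (n + 1) - (((n + 5 / 2) / (n + 1) : ℝ) : ℂ) * a n‖ ≤ C / (n : ℝ) ^ 2 * ‖a n‖ := by
  obtain ⟨b, hb0, hb⟩ : ∃ b : ℕ → ℂ, b 0 = (L - 3) * a 0 / 2 ∧
      ∀ n, b (n + 1) = (b n + (2 * (n + 1) + L - 3) * a (n + 1)) / 2 :=
    ⟨fun n => Nat.rec ((L - 3) * a 0 / 2)
      (fun n x => (x + (2 * (n + 1) + L - 3) * a (n + 1)) / 2) n, rfl, fun n => rfl⟩
  have hc := cone hL hL1 hL3 h hne hb0 hb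
  have hi := intg h hb0 hb
  set g : ℕ → ℂ := fun n => (2 * n + L - 3) * a n with hg
  have hc' : ∀ n ≥ 3, g (n + 1) ≠ 0 ∧ ‖b n‖ ≤ 3 / 2 * ‖g (n + 1)‖ := by
    intro n hn
    obtain ⟨m, rfl⟩ := Nat.exists_eq_add_of_le' hn
    have := hc m
    simp only [hg]
    push_cast
    rw [show 2 * ((m : ℂ) + 3 + 1) + L - 3 = 2 * (m : ℂ) + 5 + L by ring]
    exact this
  have hs : ∀ n : ℕ, 4 * ((n : ℂ) + 2) * (n + L) * g (n + 2) =
      (2 * n + 1 + L) * ((2 * n + 4 + L) * g (n + 1) + 4 * b n) := by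
    intro n
    have := hi n
    simp only [hg]; push_cast
    linear_combination (2 * (n : ℂ) + 1 + L) * this
  obtain ⟨N, hN⟩ := exists_nat_ge (100 * (‖L‖ + 10))
  have K0 : 0 ≤ ‖L‖ := norm_nonneg _
  have hN3 : 1000 ≤ N := by
    have : (1000 : ℝ) ≤ N := by linarith
    exact_mod_cast this
  set A := (‖L‖ + 10) ^ 2 + 60 with hA
  have A0 : 0 < A := by positivity
  set C1 := 5 / 2 * (N : ℝ) + 3 * A with hC1
  have e : ∀ n ≥ N, ‖b n - g (n + 1)‖ ≤ C1 / n * ‖g (n + 1)‖ := by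
    intro n hn
    induction n, hn using Nat.le_induction with
    | base =>
      have h1 := (hc' N (by omega)).2
      have h2 := norm_sub_le (b N) (g (N + 1))
      have h3 : 5 / 2 ≤ C1 / N := by
        rw [le_div_iff₀ (by positivity)]; linarith
      nlinarith [norm_nonneg (g (N + 1))]
    | succ n hn ih =>
      have nN : (N : ℝ) ≤ n := by exact_mod_cast hn
      have := contr hL (n := (n : ℝ)) (by linarith) (hc' n (by omega)).2 (b' := b (n + 1))
        (by rw [hb n]; simp [hg]) (g' := g (n + 2)) (by push_cast; exact hs n)
      obtain ⟨p1, p2⟩ := this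
      have n0 : (1000 : ℝ) ≤ n := by
        have : 1000 ≤ n := by omega
        exact_mod_cast this
      have hgb : ‖g (n + 1)‖ ≤ 10 / 9 * ‖g (n + 2)‖ := by linarith
      have q1 : ‖b (n + 1) - g (n + 2)‖ ≤ (1 / 2 * C1 + A) / n * ‖g (n + 1)‖ := by
        refine p2.trans ?_
        have : (1 / 2 * C1 + A) / n * ‖g (n + 1)‖ =
          1 / 2 * (C1 / n * ‖g (n + 1)‖) + A / n * ‖g (n + 1)‖ := by ring
        rw [this]; gcongr
      have C10 : 0 ≤ C1 := by positivity
      have q2 : (1 / 2 * C1 + A) / n * (10 / 9) ≤ C1 / ((n + 1 : ℕ) : ℝ) := by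
        have hAC : A ≤ C1 / 3 := by rw [hC1]; linarith
        push_cast
        rw [div_mul_eq_mul_div, div_le_div_iff₀ (by positivity) (by positivity)]
        nlinarith
      calc _ ≤ _ := q1
        _ ≤ (1 / 2 * C1 + A) / n * (10 / 9 * ‖g (n + 2)‖) := by gcongr
        _ = (1 / 2 * C1 + A) / n * (10 / 9) * ‖g (n + 2)‖ := by ring
        _ ≤ _ := by gcongr
  have C10 : 0 ≤ C1 := by positivity
  refine ⟨N + 1, 4 * ((‖L‖ + 10) ^ 2 + 12 * C1), by positivity, by omega, ?_⟩
  intro n hn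
  obtain ⟨k, rfl⟩ : ∃ k, n = k + 1 := ⟨n - 1, by omega⟩
  have hk : N ≤ k := by omega
  have kN : (N : ℝ) ≤ k := by exact_mod_cast hk
  have k0 : (1000 : ℝ) ≤ k := by
    have : 1000 ≤ k := by omega
    exact_mod_cast this
  have hgk := (hc' k (by omega)).1
  refine ⟨fun hz => hgk (by simp [hg, hz]), ?_⟩
  have ek := e k hk
  have l1 : (k : ℝ) ≤ ‖(k : ℂ) + L‖ := by
    refine le_trans ?_ (Complex.re_le_norm _)
    simp; exact hL
  have k2 : ((k : ℂ) + 2) ≠ 0 := by exact_mod_cast Nat.succ_ne_zero (k + 1)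
  have id : 4 * ((k : ℂ) + 2) * (k + L) *
      (a (k + 2) - ((((k + 1 : ℕ) + 5 / 2) / ((k + 1 : ℕ) + 1) : ℝ) : ℂ) * a (k + 1)) =
      (L ^ 2 - 7 * L - 8) * a (k + 1) + 4 * (b k - g (k + 1)) := by
    rw [mul_sub, hi k]
    push_cast
    rw [show (k : ℂ) + 1 + 1 = k + 2 by ring]
    field_simp
    simp only [hg]
    push_cast
    ring
  have n2 : ‖(k : ℂ) + 2‖ = k + 2 := by
    have : ((k : ℂ) + 2) = ((k + 2 : ℕ) : ℂ) := by push_cast; rfl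
    rw [this, Complex.norm_natCast]; push_cast; rfl
  have t := (congrArg norm id).le.trans (norm_add_le _ _)
  rw [norm_mul, norm_mul, norm_mul, norm_mul, norm_mul, n2, Complex.norm_ofNat] at t
  have gu : ‖g (k + 1)‖ ≤ 3 * k * ‖a (k + 1)‖ := by
    simp only [hg, norm_mul]
    gcongr
    push_cast
    have : (2 * ((k : ℂ) + 1) + L - 3) = ((2 * k - 1 : ℝ) : ℂ) + L := by push_cast; ring
    rw [this]
    refine (norm_add_le _ _).trans ?_
    rw [Complex.norm_real, Real.norm_of_nonneg (by linarith)]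
    linarith
  have c1 : ‖L ^ 2 - 7 * L - 8‖ ≤ (‖L‖ + 10) ^ 2 := by
    refine (norm_sub_le _ _).trans ?_
    have := norm_sub_le (L ^ 2) (7 * L)
    rw [norm_mul, norm_pow, Complex.norm_ofNat] at this
    rw [Complex.norm_ofNat]
    nlinarith
  have t2 : ‖b k - g (k + 1)‖ ≤ 3 * C1 * ‖a (k + 1)‖ := by
    refine ek.trans ?_
    calc C1 / k * ‖g (k + 1)‖ ≤ C1 / k * (3 * k * ‖a (k + 1)‖) := by gcongr
      _ = _ := by field_simp
  have t3 : 4 * (k + 2) * ‖(k : ℂ) + L‖ * ‖a (k + 2) - ((((k + 1 : ℕ) + 5 / 2) / ((k + 1 : ℕ) + 1) : ℝ) : ℂ) * a (k + 1)‖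
      ≤ ((‖L‖ + 10) ^ 2 + 12 * C1) * ‖a (k + 1)‖ := by
    refine t.trans ?_
    nlinarith [norm_nonneg (a (k + 1)), mul_le_mul_of_nonneg_right c1 (norm_nonneg (a (k + 1)))]
  rw [div_mul_eq_mul_div, le_div_iff₀ (by positivity)]
  have t4 : ((k + 1 : ℕ) : ℝ) ^ 2 ≤ 4 * (4 * (k + 2) * ‖(k : ℂ) + L‖) := by
    push_cast
    nlinarith
  calc _ ≤ ‖a (k + 2) - ((((k + 1 : ℕ) + 5 / 2) / ((k + 1 : ℕ) + 1) : ℝ) : ℂ) * a (k + 1)‖ * (4 * (4 * (k + 2) * ‖(k : ℂ) + L‖)) := by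
        gcongr
    _ ≤ _ := by linarith
end ModeODE


namespace ModeODE
open Filter Topology

/-- The conclusion of `asym`, bundled as hypotheses. -/
def Asy (a : ℕ → ℂ) (N : ℕ) (C : ℝ) : Prop :=
  ∀ n ≥ N, a n ≠ 0 ∧ ‖a (n + 1) - (((n + 5 / 2) / (n + 1) : ℝ) : ℂ) * a n‖ ≤ C / (n : ℝ) ^ 2 * ‖a n‖

lemma tendsto_inv_nat : Tendsto (fun n : ℕ => (1 : ℝ) / n) atTop (𝓝 0) :=
  tendsto_one_div_atTop_nhds_zero_nat

lemma asy_summable {a : ℕ → ℂ} {N : ℕ} {C : ℝ} (h : Asy a N C) {r : ℝ} (hr0 : 0 ≤ r) (hr1 : r < 1) :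
    Summable (fun n => ‖a n‖ * r ^ n) := by
  have t1 : Tendsto (fun n : ℕ => ((1 + 3 / 2 * (1 / ((n : ℝ) + 1))) + C * ((1 / (n : ℝ)) * (1 / n))) * r) atTop
      (𝓝 (((1 + 3 / 2 * 0) + C * (0 * 0)) * r)) := by
    refine Tendsto.mul_const _ (Tendsto.add (Tendsto.const_add _ (Tendsto.const_mul _ ?_)) (Tendsto.const_mul _ ?_))
    · exact tendsto_one_div_add_atTop_nhds_zero_nat
    · exact tendsto_inv_nat.mul tendsto_inv_nat
  have hlt : ((1 + 3 / 2 * 0) + C * (0 * 0)) * r < (1 + r) / 2 := by linarith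
  have ev := t1.eventually (gt_mem_nhds hlt)
  refine summable_of_ratio_norm_eventually_le (r := (1 + r) / 2) (by linarith) ?_
  filter_upwards [ev, eventually_ge_atTop N, eventually_ge_atTop 1] with n h1 h2 h3
  have hn : (0 : ℝ) < n := by exact_mod_cast h3
  obtain ⟨_, hb⟩ := h n h2
  have hg : (0 : ℝ) ≤ (n + 5 / 2) / (n + 1) := by positivity
  have h4 : ‖a (n + 1)‖ ≤ ((n + 5 / 2) / (n + 1) + C / (n : ℝ) ^ 2) * ‖a n‖ := by
    have := norm_add_le (a (n + 1) - (((n + 5 / 2) / (n + 1) : ℝ) : ℂ) * a n) ((((n + 5 / 2) / (n + 1) : ℝ) : ℂ) * a n)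
    rw [sub_add_cancel, norm_mul (((n + 5 / 2) / (n + 1) : ℝ) : ℂ), Complex.norm_real, Real.norm_of_nonneg hg] at this
    linarith
  have h5 : ((n + 5 / 2) / (n + 1) + C / (n : ℝ) ^ 2) = ((1 + 3 / 2 * (1 / ((n : ℝ) + 1))) + C * ((1 / (n : ℝ)) * (1 / n))) := by
    field_simp; ring
  rw [Real.norm_of_nonneg (by positivity), Real.norm_of_nonneg (by positivity)]
  calc ‖a (n + 1)‖ * r ^ (n + 1) ≤ (((n + 5 / 2) / (n + 1) + C / (n : ℝ) ^ 2) * ‖a n‖) * r ^ (n + 1) := by gcongr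
    _ = (((n + 5 / 2) / (n + 1) + C / (n : ℝ) ^ 2) * r) * (‖a n‖ * r ^ n) := by ring
    _ ≤ (1 + r) / 2 * (‖a n‖ * r ^ n) := by
      rw [h5]; gcongr

/-- comparison sequence -/
noncomputable def gam : ℕ → ℝ
  | 0 => 1
  | n + 1 => gam n * ((n + 5 / 2) / (n + 1))

lemma gam_ge (n : ℕ) : 1 ≤ gam n := by
  induction n with
  | zero => simp [gam]
  | succ k ih =>
    have : (1 : ℝ) ≤ ((k + 5 / 2) / (k + 1)) := by
      rw [le_div_iff₀ (by positivity)]; linarith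
    simp only [gam]
    nlinarith

lemma asy_lower {a : ℕ → ℂ} {N : ℕ} {C : ℝ} (hC : 0 ≤ C) (h : Asy a N C) :
    ∃ (E : ℂ) (M : ℕ), E ≠ 0 ∧ ∀ n ≥ M, 1 / 2 * ‖E‖ ^ 2 ≤ (a n * (starRingEnd ℂ) E).re := by
  obtain ⟨K, hK⟩ := exists_nat_gt (4 * C)
  let M := N + K + 2
  have hM : (M : ℝ) = N + K + 2 := by simp [M]
  have hM1 : 4 * C ≤ (M : ℝ) - 1 := by rw [hM]; have : (0 : ℝ) ≤ N := by positivity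
                                       linarith
  have hM2 : (1 : ℝ) ≤ (M : ℝ) - 1 := by rw [hM]; have : (0 : ℝ) ≤ N := by positivity
                                         have : (0 : ℝ) ≤ K := by positivity
                                         linarith
  let e : ℕ → ℂ := fun n => a n / gam n
  have hg0 : ∀ n, (gam n : ℂ) ≠ 0 := fun n => by
    have := gam_ge n
    exact_mod_cast (by linarith : gam n ≠ 0 )
  have key : ∀ k : ℕ, ‖e (M + k) - e M‖ ≤ 2 * C * ‖e M‖ * (1 / ((M : ℝ) - 1) - 1 / ((M : ℝ) + k - 1)) := by
    intro k
    induction k with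
    | zero => simp
    | succ k ih =>
      have hk : (0 : ℝ) ≤ k := by positivity
      have hn1 : (1 : ℝ) ≤ (M : ℝ) + k - 1 := by linarith
      obtain ⟨_, hb⟩ := h (M + k) (by omega)
      have hx : 2 * C * (1 / ((M : ℝ) - 1)) ≤ 1 / 2 := by
        rw [mul_one_div, div_le_iff₀ (by linarith)]; linarith
      have hb2 : ‖e (M + k)‖ ≤ 2 * ‖e M‖ := by
        have t1 := norm_add_le (e (M + k) - e M) (e M)
        rw [sub_add_cancel] at t1
        have t2 : 0 ≤ 2 * C * ‖e M‖ * (1 / ((M : ℝ) + k - 1)) := by positivity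
        have t3 : 2 * C * ‖e M‖ * (1 / ((M : ℝ) - 1)) ≤ 1 / 2 * ‖e M‖ := by
          calc _ = 2 * C * (1 / ((M : ℝ) - 1)) * ‖e M‖ := by ring
            _ ≤ _ := by gcongr
        have := norm_nonneg (e M)
        linarith
      have hstep : ‖e (M + k + 1) - e (M + k)‖ ≤ C / ((M + k : ℕ) : ℝ) ^ 2 * ‖e (M + k)‖ := by
        set n := M + k
        have hgn := gam_ge n
        have hgn1 := gam_ge (n + 1)
        have hq : (1 : ℝ) ≤ ((n + 5 / 2) / (n + 1)) := by
          rw [le_div_iff₀ (by positivity)]; linarith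
        have hrel : gam (n + 1) = gam n * ((n + 5 / 2) / (n + 1)) := rfl
        have he : e (n + 1) - e n = (a (n + 1) - (((n + 5 / 2) / (n + 1) : ℝ) : ℂ) * a n) / gam (n + 1) := by
          simp only [e]
          have h1 := hg0 n
          have h2 : ((((n + 5 / 2) / (n + 1) : ℝ)) : ℂ) ≠ 0 := by
            exact_mod_cast (by linarith : ((n + 5 / 2) / (n + 1) : ℝ) ≠ 0)
          rw [hrel, Complex.ofReal_mul]
          generalize ((((n + 5 / 2) / (n + 1) : ℝ)) : ℂ) = q at *
          field_simp
        rw [he, norm_div, Complex.norm_real, Real.norm_of_nonneg (by linarith)]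
        have hen : ‖e n‖ = ‖a n‖ / gam n := by
          simp only [e]; rw [norm_div, Complex.norm_real, Real.norm_of_nonneg (by linarith)]
        rw [hen, ← mul_div_assoc]
        have : gam n ≤ gam (n + 1) := by rw [hrel]; nlinarith
        gcongr
      have hinv : 1 / ((M + k : ℕ) : ℝ) ^ 2 ≤ 1 / ((M : ℝ) + k - 1) - 1 / ((M : ℝ) + (k + 1 : ℕ) - 1) := by
        push_cast
        set x := (M : ℝ) + k
        have e1 : (M : ℝ) + (k + 1) - 1 = x := by simp only [x]; ring
        rw [e1, div_sub_div _ _ (by linarith) (by linarith), div_le_div_iff₀ (by nlinarith) (by nlinarith)]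
        nlinarith
      have tri : ‖e (M + k + 1) - e M‖ ≤ ‖e (M + k + 1) - e (M + k)‖ + ‖e (M + k) - e M‖ := by
        have := norm_add_le (e (M + k + 1) - e (M + k)) (e (M + k) - e M)
        rwa [sub_add_sub_cancel] at this
      have hfin : C / ((M + k : ℕ) : ℝ) ^ 2 * ‖e (M + k)‖ ≤ 2 * C * ‖e M‖ * (1 / ((M : ℝ) + k - 1) - 1 / ((M : ℝ) + (k + 1 : ℕ) - 1)) := by
        calc C / ((M + k : ℕ) : ℝ) ^ 2 * ‖e (M + k)‖ ≤ C / ((M + k : ℕ) : ℝ) ^ 2 * (2 * ‖e M‖) := by gcongr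
          _ = 2 * C * ‖e M‖ * (1 / ((M + k : ℕ) : ℝ) ^ 2) := by ring
          _ ≤ _ := by gcongr
      rw [← add_assoc]
      linarith
  refine ⟨e M, M, ?_, ?_⟩
  · simp only [e]
    exact div_ne_zero (h M (by omega)).1 (hg0 M)
  · intro n hn
    obtain ⟨k, rfl⟩ := Nat.exists_eq_add_of_le hn
    have hk := key k
    have hk0 : (0 : ℝ) ≤ k := by positivity
    have hhalf : ‖e (M + k) - e M‖ ≤ 1 / 2 * ‖e M‖ := by
      have t2 : 0 ≤ 2 * C * ‖e M‖ * (1 / ((M : ℝ) + k - 1)) := by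
        have : (0 : ℝ) < (M : ℝ) + k - 1 := by linarith
        positivity
      have hx : 2 * C * (1 / ((M : ℝ) - 1)) ≤ 1 / 2 := by
        rw [mul_one_div, div_le_iff₀ (by linarith)]; linarith
      have t3 : 2 * C * ‖e M‖ * (1 / ((M : ℝ) - 1)) ≤ 1 / 2 * ‖e M‖ := by
          calc _ = 2 * C * (1 / ((M : ℝ) - 1)) * ‖e M‖ := by ring
            _ ≤ _ := by gcongr
      linarith
    have ha : a (M + k) = (gam (M + k) : ℂ) * e (M + k) := by
      simp only [e]; field_simp [hg0 (M + k)]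
    have hre : 1 / 2 * ‖e M‖ ^ 2 ≤ (e (M + k) * (starRingEnd ℂ) (e M)).re := by
      have e1 : e (M + k) * (starRingEnd ℂ) (e M) = (e (M + k) - e M) * (starRingEnd ℂ) (e M) + ((‖e M‖ ^ 2 : ℝ) : ℂ) := by
        rw [sub_mul, Complex.mul_conj, Complex.normSq_eq_norm_sq]; ring
      rw [e1, Complex.add_re, Complex.ofReal_re]
      have t := Complex.abs_re_le_norm ((e (M + k) - e M) * (starRingEnd ℂ) (e M))
      rw [norm_mul, RCLike.norm_conj] at t
      have t' := neg_le_of_abs_le t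
      have := mul_le_mul_of_nonneg_right hhalf (norm_nonneg (e M))
      nlinarith
    rw [ha, mul_assoc, Complex.re_ofReal_mul]
    have hg := gam_ge (M + k)
    have : 0 ≤ 1 / 2 * ‖e M‖ ^ 2 := by positivity
    nlinarith

lemma asy_unbounded {a : ℕ → ℂ} {N : ℕ} {C B : ℝ} (hC : 0 ≤ C) (h : Asy a N C)
    (hB : ∀ s : ℝ, 0 ≤ s → s < 1 → ‖∑' n, a n * (s : ℂ) ^ n‖ ≤ B) : False := by
  obtain ⟨E, M, hE, hlow⟩ := asy_lower hC h
  let w : ℕ → ℝ := fun n => (a n * (starRingEnd ℂ) E).re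
  have hEp : 0 < 1 / 2 * ‖E‖ ^ 2 := by have := norm_pos_iff.2 hE; positivity
  have hs : ∀ K : ℕ, ∀ s : ℝ, 0 ≤ s → s < 1 → ∑ n ∈ Finset.range (M + K), w n * s ^ n ≤ B * ‖E‖ := by
    intro K s h0 h1
    have hsum : Summable (fun n => a n * (s : ℂ) ^ n) := by
      apply Summable.of_norm
      convert asy_summable h h0 h1 using 2 with n
      rw [norm_mul, norm_pow, Complex.norm_real, Real.norm_of_nonneg h0]
    have hsum2 := (hsum.mul_right ((starRingEnd ℂ) E)).hasSum
    have hre := Complex.hasSum_re hsum2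
    have heq : ∀ n, (a n * (s : ℂ) ^ n * (starRingEnd ℂ) E).re = w n * s ^ n := by
      intro n
      rw [mul_right_comm, ← Complex.ofReal_pow, Complex.re_mul_ofReal]
    simp only [heq] at hre
    have h3 : ∑ n ∈ Finset.range (M + K), w n * s ^ n ≤ _ := sum_le_hasSum _ (fun n hn => by
      have : M ≤ n := by simp at hn; omega
      have := hlow n this
      have : 0 ≤ w n := by simp only [w]; linarith
      positivity) hre
    rw [tsum_mul_right] at h3
    refine h3.trans ((Complex.re_le_norm _).trans ?_)
    rw [norm_mul, RCLike.norm_conj]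
    gcongr
    exact hB s h0 h1
  have hs1 : ∀ K : ℕ, ∑ n ∈ Finset.range (M + K), w n ≤ B * ‖E‖ := by
    intro K
    have ht : Tendsto (fun s : ℝ => ∑ n ∈ Finset.range (M + K), w n * s ^ n) (𝓝[<] 1)
        (𝓝 (∑ n ∈ Finset.range (M + K), w n * 1 ^ n)) := by
      apply Tendsto.mono_left _ nhdsWithin_le_nhds
      apply Continuous.tendsto (f := fun s : ℝ => ∑ n ∈ Finset.range (M + K), w n * s ^ n)
      fun_prop
    simp only [one_pow, mul_one] at ht
    refine le_of_tendsto ht ?_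
    filter_upwards [Ioo_mem_nhdsLT (zero_lt_one' ℝ)] with s hs'
    exact hs K s hs'.1.le hs'.2
  have hs2 : ∀ K : ℕ, ∑ n ∈ Finset.range M, w n + K * (1 / 2 * ‖E‖ ^ 2) ≤ B * ‖E‖ := by
    intro K
    refine le_trans ?_ (hs1 K)
    rw [Finset.sum_range_add]
    gcongr
    have := Finset.card_nsmul_le_sum (Finset.range K) (fun x => w (M + x)) (1 / 2 * ‖E‖ ^ 2)
      (fun x _ => hlow (M + x) (by omega))
    simpa using this
  obtain ⟨K, hK⟩ := exists_nat_gt ((B * ‖E‖ - ∑ n ∈ Finset.range M, w n) / (1 / 2 * ‖E‖ ^ 2))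
  rw [div_lt_iff₀ hEp] at hK
  have := hs2 K
  linarith

end ModeODE


namespace ModeODE
open Filter Topology

/-- The power series with coefficients `a`. -/
noncomputable def PS (a : ℕ → ℂ) (s : ℝ) : ℂ := ∑' n, a n * (s : ℂ) ^ n

def Conv (a : ℕ → ℂ) : Prop := ∀ r : ℝ, 0 ≤ r → r < 1 → Summable (fun n => ‖a n‖ * r ^ n)

def Dseq (a : ℕ → ℂ) : ℕ → ℂ := fun n => ((n : ℂ) + 1) * a (n + 1)

def sh (a : ℕ → ℂ) : ℕ → ℂ
  | 0 => 0
  | n + 1 => a n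

lemma Conv.summable {a : ℕ → ℂ} (h : Conv a) {s : ℝ} (hs : |s| < 1) :
    Summable (fun n => a n * (s : ℂ) ^ n) := by
  apply Summable.of_norm
  convert h |s| (abs_nonneg _) hs using 2 with n
  rw [norm_mul, norm_pow, Complex.norm_real, Real.norm_eq_abs]

lemma Conv.dseq {a : ℕ → ℂ} (h : Conv a) : Conv (Dseq a) := by
  intro r h0 h1
  have hr' : (1 + r) / 2 < 1 := by linarith
  have hp : 0 < (1 + r) / 2 := by linarith
  set r' := (1 + r) / 2
  have hq1 : r / r' < 1 := by rw [div_lt_one hp]; simp only [r']; linarith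
  have hq0 : 0 ≤ r / r' := by positivity
  have ht := tendsto_self_mul_const_pow_of_lt_one hq0 hq1
  obtain ⟨K, hK⟩ := ht.bddAbove_range
  have hs := (summable_nat_add_iff 1).2 (h r' hp.le hr')
  refine Summable.of_nonneg_of_le (fun n => by positivity) (fun n => ?_) (hs.mul_left ((K + 1) / r'))
  have hKn : (n : ℝ) * (r / r') ^ n ≤ K := hK ⟨n, rfl⟩
  have hq : (r / r') ^ n ≤ 1 := pow_le_one₀ hq0 hq1.le
  have e1 : r ^ n = (r / r') ^ n * r' ^ n := by rw [← mul_pow, div_mul_cancel₀ _ hp.ne']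
  have e2 : ‖Dseq a n‖ = ((n : ℝ) + 1) * ‖a (n + 1)‖ := by
    rw [Dseq, norm_mul]
    congr 1
    rw [← Nat.cast_succ, Complex.norm_natCast]; simp
  rw [e1, e2]
  calc ((n : ℝ) + 1) * ‖a (n + 1)‖ * ((r / r') ^ n * r' ^ n)
      = (n * (r / r') ^ n + (r / r') ^ n) * (‖a (n + 1)‖ * r' ^ n) := by ring
    _ ≤ (K + 1) * (‖a (n + 1)‖ * r' ^ n) := by gcongr
    _ = (K + 1) / r' * (‖a (n + 1)‖ * r' ^ (n + 1)) := by field_simp; ring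

lemma PS_zero (a : ℕ → ℂ) : PS a 0 = a 0 := by
  rw [PS, tsum_eq_single 0]
  · simp
  · intro n hn; simp [hn]

lemma PS_hasDerivAt {a : ℕ → ℂ} (h : Conv a) {s : ℝ} (hs : |s| < 1) :
    HasDerivAt (PS a) (PS (Dseq a) s) s := by
  set r := (1 + |s|) / 2 with hr
  have hr1 : r < 1 := by linarith
  have hr0 : 0 ≤ r := by positivity
  have hsr : |s| < r := by linarith
  let g' : ℕ → ℝ → ℂ := fun n z => a n * (n * (z : ℂ) ^ (n - 1))
  have hd := h.dseq r hr0 hr1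
  have hshift : ∀ n (z : ℝ), g' (n + 1) z = Dseq a n * (z : ℂ) ^ n := by
    intro n z
    simp only [g', Dseq]; push_cast; ring
  have hu : Summable (fun n => ‖a n‖ * (n * r ^ (n - 1))) := by
    rw [← summable_nat_add_iff 1]
    refine hd.congr fun n => ?_
    have e2 : ‖Dseq a n‖ = ((n : ℝ) + 1) * ‖a (n + 1)‖ := by
      rw [Dseq, norm_mul]
      congr 1
      rw [← Nat.cast_succ, Complex.norm_natCast]; simp
    rw [e2]; push_cast; ring
  have key := hasDerivAt_tsum_of_isPreconnected (g := fun n (z : ℝ) => a n * (z : ℂ) ^ n) (g' := g')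
    (t := Set.Ioo (-r) r) (y₀ := s) (y := s) hu isOpen_Ioo isPreconnected_Ioo
    (fun n y _ => by
      have := ((hasDerivAt_id (y : ℂ)).pow n).comp_ofReal
      simpa [g'] using this.const_mul (a n))
    (fun n y hy => by
      simp only [g', norm_mul, norm_pow, Complex.norm_natCast, Complex.norm_real, Real.norm_eq_abs]
      have : |y| ≤ r := abs_le.2 ⟨hy.1.le, hy.2.le⟩
      gcongr)
    (abs_lt.1 hsr) (h.summable hs) (abs_lt.1 hsr)
  have e : ∑' n, g' n s = PS (Dseq a) s := by
    have hsum : Summable (fun n => g' n s) := by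
      rw [← summable_nat_add_iff 1]
      simp only [hshift]
      exact h.dseq.summable hs
    rw [hsum.tsum_eq_zero_add]
    simp only [hshift]
    simp [g', PS]
  rw [e] at key
  exact key

lemma sh_hasSum {a : ℕ → ℂ} {s : ℝ} {v : ℂ} (h : HasSum (fun n => a n * (s : ℂ) ^ n) v) :
    HasSum (fun n => sh a n * (s : ℂ) ^ n) (s * v) := by
  rw [← hasSum_nat_add_iff' 1]
  simp only [sh, Finset.range_one, Finset.sum_singleton, zero_mul, sub_zero]
  refine (h.mul_left (s : ℂ)).congr_fun fun n => ?_
  ring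

lemma PS_ode {L : ℂ} {a : ℕ → ℂ} (hR : Rec L a) (h : Conv a) {s : ℝ} (hs : |s| < 1) :
    (8 * (s : ℂ) - 12 * s ^ 2 + 4 * s ^ 3) * PS (Dseq (Dseq a)) s
      + (8 * (L - 1) - 12 * L * s + (4 * L - 6) * s ^ 2) * PS (Dseq a) s
      - (L - 3) * (2 * L + 4 - (L - 2) * s) * PS a s = 0 := by
  have h0 : HasSum (fun n => a n * (s : ℂ) ^ n) (PS a s) := (h.summable hs).hasSum
  have h1 : HasSum (fun n => Dseq a n * (s : ℂ) ^ n) (PS (Dseq a) s) := (h.dseq.summable hs).hasSum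
  have h2 : HasSum (fun n => Dseq (Dseq a) n * (s : ℂ) ^ n) (PS (Dseq (Dseq a)) s) :=
    (h.dseq.dseq.summable hs).hasSum
  have t := ((((((((sh_hasSum h2).mul_left 8).sub ((sh_hasSum (sh_hasSum h2)).mul_left 12)).add
    ((sh_hasSum (sh_hasSum (sh_hasSum h2))).mul_left 4)).add (h1.mul_left (8 * (L - 1)))).sub
    ((sh_hasSum h1).mul_left (12 * L))).add ((sh_hasSum (sh_hasSum h1)).mul_left (4 * L - 6))).sub
    (h0.mul_left ((L - 3) * (2 * L + 4)))).add ((sh_hasSum h0).mul_left ((L - 3) * (L - 2)))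
  have z : HasSum (fun _ : ℕ => (0 : ℂ)) 0 := hasSum_zero
  have := t.unique (z.congr_fun ?_)
  · linear_combination this
  · intro n
    match n with
    | 0 => simp [sh, Dseq]; linear_combination hR.1
    | 1 => 
      have := hR.2 0
      simp [sh, Dseq] at this ⊢; linear_combination (s : ℂ) * this
    | 2 => 
      have := hR.2 1
      simp [sh, Dseq] at this ⊢; linear_combination (s : ℂ) ^ 2 * this
    | n + 3 => 
      have := hR.2 (n + 2)
      simp [sh, Dseq] at this ⊢; linear_combination (s : ℂ) ^ (n + 3) * this

/-- iterated derivative sequences -/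
def Dk (a : ℕ → ℂ) : ℕ → ℕ → ℂ
  | 0 => a
  | k + 1 => Dseq (Dk a k)

lemma Dk_conv {a : ℕ → ℂ} (h : Conv a) (k : ℕ) : Conv (Dk a k) := by
  induction k with
  | zero => exact h
  | succ k ih => exact ih.dseq

lemma Dk_apply (a : ℕ → ℂ) (k n : ℕ) : (n.factorial : ℂ) * Dk a k n = ((n + k).factorial : ℂ) * a (n + k) := by
  induction k generalizing n with
  | zero => simp [Dk]
  | succ k ih =>
    have := ih (n + 1)
    simp only [Dk, Dseq]
    rw [show n + (k + 1) = n + 1 + k by ring, ← this, Nat.factorial_succ]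
    push_cast; ring

end ModeODE


namespace ModeODE
open Filter Topology Set

/-- `Z k` is a sequence of successive derivatives on `[0,1)`. -/
def Chain (Z : ℕ → ℝ → ℂ) : Prop :=
  ∀ k, ∀ s ∈ Ico (0 : ℝ) 1, HasDerivWithinAt (Z k) (Z (k + 1) s) (Ico 0 1) s

def SOde (L : ℂ) (Z : ℕ → ℝ → ℂ) : Prop :=
  ∀ s ∈ Ioo (0 : ℝ) 1, (8 * (s : ℂ) - 12 * s ^ 2 + 4 * s ^ 3) * Z 2 s
      + (8 * (L - 1) - 12 * L * s + (4 * L - 6) * s ^ 2) * Z 1 s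
      - (L - 3) * (2 * L + 4 - (L - 2) * s) * Z 0 s = 0

lemma Chain.hda {Z : ℕ → ℝ → ℂ} (h : Chain Z) (k : ℕ) {s : ℝ} (hs : s ∈ Ioo (0 : ℝ) 1) :
    HasDerivAt (Z k) (Z (k + 1) s) s :=
  (h k s ⟨hs.1.le, hs.2⟩).hasDerivAt (Ico_mem_nhds hs.1 hs.2)

lemma Chain.cont {Z : ℕ → ℝ → ℂ} (h : Chain Z) (k : ℕ) : ContinuousOn (Z k) (Ico 0 1) :=
  fun s hs => (h k s hs).continuousWithinAt

lemma deriv_zero_of_zero {G : ℝ → ℂ} {G' : ℂ} {s : ℝ} (h0 : ∀ s ∈ Ioo (0 : ℝ) 1, G s = 0)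
    (hs : s ∈ Ioo (0 : ℝ) 1) (hd : HasDerivAt G G' s) : G' = 0 := by
  have : G =ᶠ[𝓝 s] fun _ => (0 : ℂ) := by
    filter_upwards [Ioo_mem_nhds hs.1 hs.2] with t ht using h0 t ht
  exact (hd.congr_of_eventuallyEq this.symm).unique (hasDerivAt_const s (0 : ℂ))

lemma zero_at_zero {G : ℝ → ℂ} (h0 : ∀ s ∈ Ioo (0 : ℝ) 1, G s = 0) (hc : ContinuousOn G (Ico 0 1)) :
    G 0 = 0 := by
  have h1 : Tendsto G (𝓝[Ioo 0 1] 0) (𝓝 (G 0)) :=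
    (hc 0 (by simp)).mono_left (nhdsWithin_mono _ Ioo_subset_Ico_self)
  have h2 : Tendsto G (𝓝[Ioo 0 1] 0) (𝓝 0) := by
    refine tendsto_const_nhds.congr' ?_
    filter_upwards [self_mem_nhdsWithin] with t ht using (h0 t ht).symm
  have : (𝓝[Ioo (0 : ℝ) 1] 0).NeBot := by
    rw [nhdsWithin_Ioo_eq_nhdsGT (by norm_num)]; infer_instance
  exact tendsto_nhds_unique h1 h2

lemma pd (c0 c1 c2 c3 : ℂ) (s : ℝ) :
    HasDerivAt (fun s : ℝ => c0 + c1 * (s : ℂ) + c2 * (s : ℂ) ^ 2 + c3 * (s : ℂ) ^ 3)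
      (c1 + 2 * c2 * s + 3 * c3 * s ^ 2) s := by
  have h1 : HasDerivAt (fun s : ℝ => (s : ℂ)) 1 s := Complex.ofRealCLM.hasDerivAt
  have := (((h1.const_mul c1).const_add c0).add ((h1.pow 2).const_mul c2)).add ((h1.pow 3).const_mul c3)
  refine this.congr_deriv ?_
  push_cast; ring

lemma Chain.higher {L : ℂ} {Z : ℕ → ℝ → ℂ} (h : Chain Z) (ho : SOde L Z) (k : ℕ) :
    ∀ s ∈ Ioo (0 : ℝ) 1,
      (0 + 8 * (s : ℂ) + (-12) * s ^ 2 + 4 * s ^ 3) * Z (k + 3) s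
      + ((8 * ((k : ℂ) + 1) + 8 * (L - 1)) + (-24 * (k + 1) - 12 * L) * s + (12 * (k + 1) + (4 * L - 6)) * s ^ 2 + 0 * s ^ 3)
          * Z (k + 2) s
      + ((-12 * ((k : ℂ) + 1) * k - 12 * L * (k + 1) - (L - 3) * (2 * L + 4))
          + (12 * (k + 1) * k + (8 * L - 12) * (k + 1) + (L - 3) * (L - 2)) * s + 0 * s ^ 2 + 0 * s ^ 3) * Z (k + 1) s
      + (((k : ℂ) + 1) * ((2 * k + L - 2) * (2 * k + L - 3)) + 0 * s + 0 * s ^ 2 + 0 * s ^ 3) * Z k s = 0 := by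
  induction k with
  | zero =>
    intro s hs
    have hd := (((pd 0 8 (-12) 4 s).mul (h.hda 2 hs)).add
      ((pd (8 * (L - 1)) (-12 * L) (4 * L - 6) 0 s).mul (h.hda 1 hs))).add
      ((pd (-((L - 3) * (2 * L + 4))) ((L - 3) * (L - 2)) 0 0 s).mul (h.hda 0 hs))
    have := deriv_zero_of_zero (fun t ht => by
      have := ho t ht
      simp only [Pi.add_apply, Pi.mul_apply]
      linear_combination this) hs hd
    push_cast
    simp only [zero_add, Nat.reduceAdd] at this ⊢
    linear_combination this
  | succ k ih =>
    intro s hs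
    have hd := (((((pd 0 8 (-12) 4 s).mul (h.hda (k + 3) hs)).add
      ((pd (8 * ((k : ℂ) + 1) + 8 * (L - 1)) (-24 * (k + 1) - 12 * L) (12 * (k + 1) + (4 * L - 6)) 0 s).mul
        (h.hda (k + 2) hs))).add
      ((pd (-12 * ((k : ℂ) + 1) * k - 12 * L * (k + 1) - (L - 3) * (2 * L + 4))
        (12 * (k + 1) * k + (8 * L - 12) * (k + 1) + (L - 3) * (L - 2)) 0 0 s).mul (h.hda (k + 1) hs)))).add
      ((pd (((k : ℂ) + 1) * ((2 * k + L - 2) * (2 * k + L - 3))) 0 0 0 s).mul (h.hda k hs))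
    have := deriv_zero_of_zero ih hs hd
    push_cast
    rw [show k + 1 + 3 = k + 3 + 1 by ring, show k + 1 + 2 = k + 3 by ring, show k + 1 + 1 = k + 2 by ring]
    rw [show k + 2 + 1 = k + 3 by ring, show k + 1 + 1 = k + 2 by ring] at this
    linear_combination this

lemma Chain.recur {L : ℂ} {Z : ℕ → ℝ → ℂ} (h : Chain Z) (ho : SOde L Z) :
    Rec L (fun n => Z n 0 / (n.factorial : ℂ)) := by
  have hcoe : Continuous (fun s : ℝ => (s : ℂ)) := Complex.continuous_ofReal
  constructor
  · have := zero_at_zero ho (by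
      have := h.cont 0; have := h.cont 1; have := h.cont 2
      fun_prop)
    simp at this ⊢
    linear_combination this
  · intro n
    have := zero_at_zero (h.higher ho n) (by
      have := h.cont n; have := h.cont (n + 1); have := h.cont (n + 2); have := h.cont (n + 3)
      fun_prop)
    simp only [Complex.ofReal_zero] at this
    have f1 : ((n.factorial : ℕ) : ℂ) ≠ 0 := by exact_mod_cast n.factorial_ne_zero
    have f2 : (n : ℂ) + 1 ≠ 0 := by exact_mod_cast n.succ_ne_zero
    have f3 : (n : ℂ) + 2 ≠ 0 := by exact_mod_cast (n + 1).succ_ne_zero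
    have e1 : (((n + 1).factorial : ℕ) : ℂ) = (n + 1) * n.factorial := by
      rw [Nat.factorial_succ]; push_cast; ring
    have e2 : (((n + 2).factorial : ℕ) : ℂ) = (n + 2) * ((n + 1) * n.factorial) := by
      rw [Nat.factorial_succ, Nat.factorial_succ]; push_cast; ring
    simp only [e1, e2]
    field_simp
    linear_combination this

end ModeODE


namespace ModeODE
open Filter Topology Set

lemma flat {Z : ℕ → ℝ → ℂ} (h : Chain Z) (h0 : ∀ k, Z k 0 = 0) {r : ℝ} (hr1 : r < 1) (m : ℕ) :
    ∀ k, ∃ C : ℝ, 0 ≤ C ∧ ∀ s ∈ Icc (0 : ℝ) r, ‖Z k s‖ ≤ C * s ^ m := by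
  induction m with
  | zero =>
    intro k
    have hc : ContinuousOn (Z k) (Icc 0 r) := (h.cont k).mono (fun s hs => ⟨hs.1, hs.2.trans_lt hr1⟩)
    obtain ⟨C, hC⟩ := isCompact_Icc.exists_bound_of_continuousOn hc
    refine ⟨max C 0, le_max_right _ _, fun s hs => ?_⟩
    simpa using Or.inl (hC s hs)
  | succ m ih =>
    intro k
    obtain ⟨C, hC0, hC⟩ := ih (k + 1)
    refine ⟨C, hC0, fun s hs => ?_⟩
    have key := (convex_Icc (0 : ℝ) s).norm_image_sub_le_of_norm_hasDerivWithin_le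
      (f := Z k) (f' := Z (k + 1)) (C := C * s ^ m) (x := 0) (y := s)
      (fun t ht => (h k t ⟨ht.1, (ht.2.trans hs.2).trans_lt hr1⟩).mono
        (fun u hu => ⟨hu.1, (hu.2.trans hs.2).trans_lt hr1⟩))
      (fun t ht => (hC t ⟨ht.1, ht.2.trans hs.2⟩).trans (by
        have := ht.1; have := ht.2
        gcongr))
      ⟨le_rfl, hs.1⟩ ⟨hs.1, le_rfl⟩
    rw [h0 k, sub_zero, sub_zero, Real.norm_of_nonneg hs.1] at key
    calc _ ≤ _ := key
      _ = _ := by ring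

lemma uniq {L : ℂ} {Z : ℕ → ℝ → ℂ} (h : Chain Z) (ho : SOde L Z) (h0 : ∀ k, Z k 0 = 0) :
    ∀ s ∈ Ico (0 : ℝ) 1, Z 0 s = 0 := by
  intro r hr
  rcases hr.1.eq_or_lt with h' | hr0
  · rw [← h']; exact h0 0
  have hr1 := hr.2
  -- bounds for the coefficients
  obtain ⟨A, hA⟩ := isCompact_Icc.exists_bound_of_continuousOn (s := Icc (0 : ℝ) 1)
    (f := fun s : ℝ => (8 * (L - 1) - 12 * L * s + (4 * L - 6) * (s : ℂ) ^ 2)) (by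
      have := Complex.continuous_ofReal; fun_prop)
  obtain ⟨B, hB⟩ := isCompact_Icc.exists_bound_of_continuousOn (s := Icc (0 : ℝ) 1)
    (f := fun s : ℝ => ((L - 3) * (2 * L + 4 - (L - 2) * (s : ℂ)))) (by
      have := Complex.continuous_ofReal; fun_prop)
  obtain ⟨K, hK⟩ := exists_nat_ge ((max A 0 + max B 0) / (4 * (1 - r)))
  have hK' : (max A 0 + max B 0) ≤ K * (4 * (1 - r)) := by
    rwa [div_le_iff₀ (by linarith)] at hK
  have hZ2 : ∀ s ∈ Ioc (0 : ℝ) r, s * ‖Z 2 s‖ ≤ K * (‖Z 1 s‖ + ‖Z 0 s‖) := by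
    intro s hs
    have hs1 : s < 1 := hs.2.trans_lt hr1
    have e := ho s ⟨hs.1, hs1⟩
    have e1 : (8 * (s : ℂ) - 12 * s ^ 2 + 4 * s ^ 3) * Z 2 s =
      (L - 3) * (2 * L + 4 - (L - 2) * s) * Z 0 s - (8 * (L - 1) - 12 * L * s + (4 * L - 6) * s ^ 2) * Z 1 s := by
      linear_combination e
    have e2 : (8 * (s : ℂ) - 12 * s ^ 2 + 4 * s ^ 3) = ((4 * s * (1 - s) * (2 - s) : ℝ) : ℂ) := by
      push_cast; ring
    have hb := norm_sub_le ((L - 3) * (2 * L + 4 - (L - 2) * s) * Z 0 s) ((8 * (L - 1) - 12 * L * s + (4 * L - 6) * s ^ 2) * Z 1 s)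
    rw [← e1, e2, norm_mul, Complex.norm_real, Real.norm_of_nonneg (by
      have : 0 ≤ 1 - s := by linarith
      have : 0 ≤ 2 - s := by linarith
      have := hs.1.le
      positivity), norm_mul _ (Z 0 s), norm_mul _ (Z 1 s)] at hb
    have hA' := (hA s ⟨hs.1.le, hs1.le⟩).trans (le_max_left A 0)
    have hB' := (hB s ⟨hs.1.le, hs1.le⟩).trans (le_max_left B 0)
    have b1 := mul_le_mul_of_nonneg_right hB' (norm_nonneg (Z 0 s))
    have b2 := mul_le_mul_of_nonneg_right hA' (norm_nonneg (Z 1 s))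
    have b3 : (max A 0 + max B 0) * (‖Z 1 s‖ + ‖Z 0 s‖) ≤ K * (4 * (1 - r)) * (‖Z 1 s‖ + ‖Z 0 s‖) := by gcongr
    have b4 : 0 ≤ max A 0 * ‖Z 0 s‖ := by positivity
    have b5 : 0 ≤ max B 0 * ‖Z 1 s‖ := by positivity
    have b6 : (4 * (1 - r)) * (s * ‖Z 2 s‖) ≤ 4 * s * (1 - s) * (2 - s) * ‖Z 2 s‖ := by
      have : 0 ≤ s * ‖Z 2 s‖ := mul_nonneg hs.1.le (norm_nonneg _)
      have : (1 - r) ≤ (1 - s) * (2 - s) := by nlinarith [hs.2]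
      nlinarith
    have b7 : (4 * (1 - r)) * (s * ‖Z 2 s‖) ≤ (4 * (1 - r)) * (K * (‖Z 1 s‖ + ‖Z 0 s‖)) := by linarith
    exact le_of_mul_le_mul_left b7 (by linarith)
  let N : ℝ → ℝ := fun s => ‖Z 0 s‖ ^ 2 + ‖Z 1 s‖ ^ 2
  let M : ℕ := 1 + 3 * K
  have hN : ∀ s ∈ Ioc (0 : ℝ) r, ∃ N' : ℝ, HasDerivAt N N' s ∧ s * N' ≤ M * N s := by
    intro s hs
    have hs1 : s < 1 := hs.2.trans_lt hr1
    have d0 := (h.hda 0 ⟨hs.1, hs1⟩).norm_sq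
    have d1 := (h.hda 1 ⟨hs.1, hs1⟩).norm_sq
    refine ⟨_, d0.add d1, ?_⟩
    have i0 := real_inner_le_norm (Z 0 s) (Z (0 + 1) s)
    have i1 := real_inner_le_norm (Z 1 s) (Z (1 + 1) s)
    have hz := hZ2 s hs
    simp only [zero_add, Nat.reduceAdd] at i0 i1 ⊢
    set x := ‖Z 0 s‖ with hx
    set y := ‖Z 1 s‖ with hy
    set z := ‖Z 2 s‖ with hz'
    have hx0 : 0 ≤ x := norm_nonneg _
    have hy0 : 0 ≤ y := norm_nonneg _
    have hs0 := hs.1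
    have j0 : s * inner ℝ (Z 0 s) (Z 1 s) ≤ x * y := by
      have := mul_le_mul_of_nonneg_left i0 hs0.le
      have : s * (x * y) ≤ x * y := by
        have := mul_nonneg hx0 hy0
        nlinarith
      linarith
    have j1 : s * inner ℝ (Z 1 s) (Z 2 s) ≤ y * (K * (y + x)) := by
      have := mul_le_mul_of_nonneg_left i1 hs0.le
      have := mul_le_mul_of_nonneg_left hz hy0
      nlinarith
    have hKn : (0 : ℝ) ≤ K := Nat.cast_nonneg K
    have q : (0 : ℝ) ≤ (K : ℝ) * (x - y) ^ 2 := by positivity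
    have q2 : (0 : ℝ) ≤ (K : ℝ) * x ^ 2 := by positivity
    simp only [M, N]
    push_cast
    rw [← hx, ← hy]
    nlinarith [sq_nonneg (x - y)]
  have anti : ∀ t ∈ Ioo (0 : ℝ) r, N r / r ^ M ≤ N t / t ^ M := by
    intro t ht
    have hd : ∀ s ∈ Icc t r, ∃ g', HasDerivAt (fun s => N s / s ^ M) g' s ∧ g' ≤ 0 := by
      intro s hs
      have hs0 : 0 < s := ht.1.trans_le hs.1
      obtain ⟨N', hd, hle⟩ := hN s ⟨hs0, hs.2⟩
      have hpow := hasDerivAt_pow M s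
      refine ⟨_, hd.div hpow (by positivity), ?_⟩
      apply div_nonpos_of_nonpos_of_nonneg _ (by positivity)
      have : s ^ M = s ^ (M - 1) * s := by
        rw [← pow_succ]; congr 1; omega
      rw [this]
      have hp : 0 < s ^ (M - 1) := by positivity
      have : N' * (s ^ (M - 1) * s) - N s * (M * s ^ (M - 1)) = s ^ (M - 1) * (s * N' - M * N s) := by ring
      rw [this]
      exact mul_nonpos_of_nonneg_of_nonpos hp.le (by linarith)
    choose! g' hg' using hd
    have := antitoneOn_of_deriv_nonpos (convex_Icc t r) (f := fun s => N s / s ^ M)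
      (fun s hs => (hg' s hs).1.continuousAt.continuousWithinAt)
      (fun s hs => ((hg' s (interior_subset hs)).1.differentiableAt.differentiableWithinAt))
      (fun s hs => by rw [(hg' s (interior_subset hs)).1.deriv]; exact (hg' s (interior_subset hs)).2)
    exact this ⟨le_rfl, ht.2.le⟩ ⟨ht.2.le, le_rfl⟩ ht.2.le
  obtain ⟨C0, hC00, hC0⟩ := flat h h0 hr1 (M + 1) 0
  obtain ⟨C1, hC10, hC1⟩ := flat h h0 hr1 (M + 1) 1
  have small : ∀ t ∈ Ioo (0 : ℝ) r, N r / r ^ M ≤ (C0 ^ 2 + C1 ^ 2) * t := by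
    intro t ht
    refine (anti t ht).trans ?_
    have ht0 := ht.1
    have ht1 : t ≤ 1 := by linarith [ht.2]
    rw [div_le_iff₀ (by positivity)]
    have a0 := hC0 t ⟨ht.1.le, ht.2.le⟩
    have a1 := hC1 t ⟨ht.1.le, ht.2.le⟩
    have b0 := pow_le_pow_left₀ (norm_nonneg _) a0 2
    have b1 := pow_le_pow_left₀ (norm_nonneg _) a1 2
    have : (t ^ (M + 1)) ^ 2 ≤ t ^ (M + 1) := by
      have := pow_le_one₀ (n := M + 1) ht0.le ht1
      have h2 : 0 ≤ t ^ (M + 1) := by positivity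
      nlinarith
    have c := mul_le_mul_of_nonneg_left this (by positivity : 0 ≤ C0 ^ 2 + C1 ^ 2)
    simp only [N]
    rw [mul_pow] at b0 b1
    have e : (C0 ^ 2 + C1 ^ 2) * t * t ^ M = (C0 ^ 2 + C1 ^ 2) * t ^ (M + 1) := by ring
    rw [e]
    linarith
  have hle : N r / r ^ M ≤ 0 := by
    have ht : Tendsto (fun t : ℝ => (C0 ^ 2 + C1 ^ 2) * t) (𝓝[>] 0) (𝓝 ((C0 ^ 2 + C1 ^ 2) * 0)) := by
      apply Tendsto.mono_left _ nhdsWithin_le_nhds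
      exact tendsto_id.const_mul _
    rw [mul_zero] at ht
    refine ge_of_tendsto ht ?_
    filter_upwards [Ioo_mem_nhdsGT hr0] with t ht using small t ht
  have hNr : N r ≤ 0 := by
    have := (div_le_iff₀ (by positivity : 0 < r ^ M)).1 hle
    simpa using this
  have : ‖Z 0 r‖ ^ 2 ≤ 0 := by
    have : 0 ≤ ‖Z 1 r‖ ^ 2 := by positivity
    simp only [N] at hNr
    linarith
  have : ‖Z 0 r‖ = 0 := by
    have h2 : 0 ≤ ‖Z 0 r‖ ^ 2 := by positivity
    exact pow_eq_zero_iff (two_ne_zero) |>.1 (le_antisymm this h2)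
  exact norm_eq_zero.1 this

/-- A solution whose Taylor coefficients give a convergent series equals that series. -/
lemma eq_PS {L : ℂ} {Z : ℕ → ℝ → ℂ} (h : Chain Z) (ho : SOde L Z) {a : ℕ → ℂ}
    (ha : ∀ n, a n = Z n 0 / (n.factorial : ℂ)) (hc : Conv a) :
    ∀ s ∈ Ico (0 : ℝ) 1, Z 0 s = PS a s := by
  have hR : Rec L a := by
    rw [show a = _ from funext ha]; exact h.recur ho
  have habs : ∀ s : ℝ, 0 ≤ s → s < 1 → |s| < 1 := fun s h1 h2 => by rwa [abs_of_nonneg h1]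
  have := uniq (L := L) (Z := fun k s => Z k s - PS (Dk a k) s)
    (fun k s hs => (h k s hs).sub (PS_hasDerivAt (Dk_conv hc k) (habs s hs.1 hs.2)).hasDerivWithinAt)
    (fun s hs => by
      have e1 := ho s hs
      have e2 := PS_ode hR hc (habs s hs.1.le hs.2)
      simp only [Dk]
      linear_combination e1 - e2)
    (fun k => by
      have e := Dk_apply a k 0
      simp only [Nat.factorial_zero, Nat.cast_one, one_mul, zero_add] at e
      rw [PS_zero, e, ha k, mul_div_cancel₀, sub_self]
      exact_mod_cast k.factorial_ne_zero)
  intro s hs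
  exact sub_eq_zero.1 (this s hs)

end ModeODE


namespace ModeODE
open Filter Topology Set

noncomputable def FF (f : ℝ → ℂ) (s : ℝ) : ℂ := ((2 - s : ℝ) : ℂ) ^ 2 * f (√(1 - s))

noncomputable def ZZ (f : ℝ → ℂ) (k : ℕ) : ℝ → ℂ := iteratedDerivWithin k (FF f) (Ico 0 1)

lemma FF_smooth {f : ℝ → ℂ} (hf : ContDiffOn ℝ (⊤ : ℕ∞) f (Icc 0 1)) :
    ContDiffOn ℝ (⊤ : ℕ∞) (FF f) (Ico 0 1) := by
  have h1 : ContDiffOn ℝ (⊤ : ℕ∞) (fun s : ℝ => √(1 - s)) (Ico 0 1) :=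
    ContDiffOn.sqrt (by fun_prop) (fun s hs => by have := hs.2; linarith)
  have h2 : ContDiffOn ℝ (⊤ : ℕ∞) (fun s : ℝ => f (√(1 - s))) (Ico 0 1) :=
    hf.comp h1 (fun s hs => ⟨Real.sqrt_nonneg _, Real.sqrt_le_one.2 (by have := hs.1; linarith)⟩)
  have h3 : ContDiff ℝ (⊤ : ℕ∞) (fun s : ℝ => ((2 - s : ℝ) : ℂ) ^ 2) :=
    (Complex.ofRealCLM.contDiff.comp (contDiff_const.sub contDiff_id)).pow 2
  exact h3.contDiffOn.mul h2

lemma ZZ_chain {f : ℝ → ℂ} (hf : ContDiffOn ℝ (⊤ : ℕ∞) f (Icc 0 1)) : Chain (ZZ f) := by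
  intro k s hs
  have hd := (FF_smooth hf).differentiableOn_iteratedDerivWithin (m := k)
    (by exact_mod_cast (WithTop.coe_lt_top k)) (uniqueDiffOn_Ico 0 1)
  have := (hd s hs).hasDerivWithinAt
  rw [← iteratedDerivWithin_succ] at this
  exact this

lemma ZZ_zero (f : ℝ → ℂ) (s : ℝ) : ZZ f 0 s = FF f s := by simp [ZZ]

lemma ZZ_ode {L : ℂ} {f : ℝ → ℂ} (hf : ContDiffOn ℝ (⊤ : ℕ∞) f (Icc 0 1))
    (hode : ∀ ρ ∈ Set.Ioo (0 : ℝ) 1,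
      (1 - (ρ : ℂ) ^ 2) * iteratedDeriv 2 f ρ
        + (6 / (ρ : ℂ) - 2 * (L + 2) * (ρ : ℂ)) * deriv f ρ
        - ((L + 1) * (L + 2) - 432 / (3 + 3 * (ρ : ℂ) ^ 2) ^ 2) * f ρ = 0) :
    SOde L (ZZ f) := by
  have hC := ZZ_chain hf
  have hfo : ContDiffOn ℝ (⊤ : ℕ∞) f (Ioo 0 1) := hf.mono Ioo_subset_Icc_self
  have hat : ∀ ρ ∈ Ioo (0 : ℝ) 1, ContDiffAt ℝ (⊤ : ℕ∞) f ρ := fun ρ hρ =>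
    hfo.contDiffAt (Ioo_mem_nhds hρ.1 hρ.2)
  have d1 : ∀ ρ ∈ Ioo (0 : ℝ) 1, HasDerivAt f (deriv f ρ) ρ := fun ρ hρ =>
    ((hat ρ hρ).differentiableAt (by simp)).hasDerivAt
  have d2 : ∀ ρ ∈ Ioo (0 : ℝ) 1, HasDerivAt (deriv f) (iteratedDeriv 2 f ρ) ρ := fun ρ hρ => by
    have h2 : DifferentiableOn ℝ (deriv f) (Ioo 0 1) :=
      ((contDiffOn_succ_iff_deriv_of_isOpen (n := 1) isOpen_Ioo).1
        (hfo.of_le (by norm_num; exact WithTop.coe_le_coe.2 (le_top : (2 : ℕ∞) ≤ ⊤)))).2.2.differentiableOn (by simp)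
    have h3 := (h2.differentiableAt (Ioo_mem_nhds hρ.1 hρ.2)).hasDerivAt
    rwa [show iteratedDeriv 2 f ρ = deriv (deriv f) ρ by
      rw [iteratedDeriv_succ, iteratedDeriv_one]]
  have hin : ∀ ρ ∈ Ioo (0 : ℝ) 1, 1 - ρ ^ 2 ∈ Ioo (0 : ℝ) 1 := fun ρ hρ => by
    constructor <;> nlinarith [hρ.1, hρ.2]
  have R0 : ∀ ρ ∈ Ioo (0 : ℝ) 1, (1 + (ρ : ℂ) ^ 2) ^ 2 * f ρ - ZZ f 0 (1 - ρ ^ 2) = 0 := by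
    intro ρ hρ
    rw [ZZ_zero, FF, sub_sub_cancel, Real.sqrt_sq hρ.1.le]
    push_cast; ring
  have hz : ∀ k, ∀ ρ ∈ Ioo (0 : ℝ) 1, HasDerivAt (fun ρ : ℝ => ZZ f k (1 - ρ ^ 2))
      (-2 * (ρ : ℂ) * ZZ f (k + 1) (1 - ρ ^ 2)) ρ := by
    intro k ρ hρ
    have e1 : HasDerivAt (fun ρ : ℝ => 1 - ρ ^ 2) (-(2 * ρ)) ρ := by
      simpa using (hasDerivAt_pow 2 ρ).const_sub 1
    have := (hC.hda k (hin ρ hρ)).scomp ρ e1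
    refine this.congr_deriv ?_
    rw [Complex.real_smul]; push_cast; ring
  have R1 : ∀ ρ ∈ Ioo (0 : ℝ) 1, (0 + 4 * (ρ : ℂ) + 0 * (ρ : ℂ) ^ 2 + 4 * (ρ : ℂ) ^ 3) * f ρ
      + (1 + (ρ : ℂ) ^ 2) ^ 2 * deriv f ρ - (0 + (-2) * (ρ : ℂ) + 0 * (ρ : ℂ) ^ 2 + 0 * (ρ : ℂ) ^ 3)
        * ZZ f 1 (1 - ρ ^ 2) = 0 := by
    intro ρ hρ
    have hq := ((pd 1 0 1 0 ρ).pow 2)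
    have := deriv_zero_of_zero (fun t ht => by
      have := R0 t ht
      simp only [Pi.sub_apply, Pi.mul_apply, Pi.pow_apply]
      linear_combination this) hρ ((hq.mul (d1 ρ hρ)).sub (hz 0 ρ hρ))
    simp only [Pi.pow_apply] at this
    push_cast at this
    linear_combination this
  have R2 : ∀ ρ ∈ Ioo (0 : ℝ) 1, (4 + 12 * (ρ : ℂ) ^ 2) * f ρ
      + 8 * (ρ : ℂ) * (1 + (ρ : ℂ) ^ 2) * deriv f ρ + (1 + (ρ : ℂ) ^ 2) ^ 2 * iteratedDeriv 2 f ρ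
      + 2 * ZZ f 1 (1 - ρ ^ 2) - 4 * (ρ : ℂ) ^ 2 * ZZ f 2 (1 - ρ ^ 2) = 0 := by
    intro ρ hρ
    have hq := ((pd 1 0 1 0 ρ).pow 2)
    have := deriv_zero_of_zero (fun t ht => by
      have := R1 t ht
      simp only [Pi.sub_apply, Pi.mul_apply, Pi.pow_apply, Pi.add_apply]
      linear_combination this) hρ
      ((((pd 0 4 0 4 ρ).mul (d1 ρ hρ)).add (hq.mul (d2 ρ hρ))).sub
        ((pd 0 (-2) 0 0 ρ).mul (hz 1 ρ hρ)))
    simp only [Pi.pow_apply] at this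
    push_cast at this
    linear_combination this
  intro s hs
  obtain ⟨ρ, hρ, rfl⟩ : ∃ ρ ∈ Ioo (0 : ℝ) 1, s = 1 - ρ ^ 2 := by
    refine ⟨√(1 - s), ⟨Real.sqrt_pos.2 (by linarith [hs.2]), ?_⟩, ?_⟩
    · rw [Real.sqrt_lt' one_pos]; linarith [hs.1]
    · rw [Real.sq_sqrt (by linarith [hs.2])]; ring
  have r0 := R0 ρ hρ
  have r1 := R1 ρ hρ
  have r2 := R2 ρ hρ
  have o := hode ρ hρ
  have hρ0 : (ρ : ℂ) ≠ 0 := by exact_mod_cast hρ.1.ne'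
  have hq0 : (1 + (ρ : ℂ) ^ 2) ≠ 0 := by
    have : (1 + ρ ^ 2 : ℝ) ≠ 0 := by positivity
    exact_mod_cast this
  have o' : (ρ : ℂ) * (1 + (ρ : ℂ) ^ 2) ^ 2 * (1 - (ρ : ℂ) ^ 2) * iteratedDeriv 2 f ρ
      + (6 - 2 * (L + 2) * (ρ : ℂ) ^ 2) * (1 + (ρ : ℂ) ^ 2) ^ 2 * deriv f ρ
      - ρ * ((L + 1) * (L + 2) * (1 + (ρ : ℂ) ^ 2) ^ 2 - 48) * f ρ = 0 := by
    have e1 : 6 / (ρ : ℂ) * ρ = 6 := by field_simp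
    have e2 : 432 / (3 + 3 * (ρ : ℂ) ^ 2) ^ 2 * (1 + (ρ : ℂ) ^ 2) ^ 2 = 48 := by
      rw [show (3 + 3 * (ρ : ℂ) ^ 2) = 3 * (1 + (ρ : ℂ) ^ 2) by ring]
      field_simp; norm_num
    linear_combination (ρ : ℂ) * (1 + (ρ : ℂ) ^ 2) ^ 2 * o - (1 + (ρ : ℂ) ^ 2) ^ 2 * deriv f ρ * e1 - ρ * f ρ * e2
  apply mul_left_cancel₀ hρ0
  rw [mul_zero]
  push_cast
  linear_combination (1 + (ρ : ℂ) ^ 2) * o' - (ρ : ℂ) * (1 - (ρ : ℂ) ^ 4) * r2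
    + 1 / 2 * (2 * (1 - (ρ : ℂ) ^ 4) + (8 * (L - 1) - 12 * L * (1 - (ρ : ℂ) ^ 2) + (4 * L - 6) * (1 - (ρ : ℂ) ^ 2) ^ 2)) * r1
    + ρ * (L - 3) * (2 * L + 4 - (L - 2) * (1 - (ρ : ℂ) ^ 2)) * r0

/-- extend a formula for `FF f` to a formula for `f` on the closed interval -/
lemma back {f g : ℝ → ℂ} (hf : ContinuousOn f (Icc 0 1)) (hg : Continuous g)
    (h : ∀ s ∈ Ico (0 : ℝ) 1, FF f s = g s) :
    ∀ ρ ∈ Icc (0 : ℝ) 1, f ρ = g (1 - ρ ^ 2) * (((((1 + ρ ^ 2) ^ 2)⁻¹ : ℝ)) : ℂ) := by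
  have key : ∀ ρ ∈ Ioc (0 : ℝ) 1, (((1 + ρ ^ 2 : ℝ) : ℂ)) ^ 2 * f ρ = g (1 - ρ ^ 2) := by
    intro ρ hρ
    have := h (1 - ρ ^ 2) ⟨by nlinarith [hρ.1, hρ.2], by nlinarith [hρ.1, hρ.2]⟩
    rw [← this, FF, sub_sub_cancel, Real.sqrt_sq hρ.1.le]
    push_cast; ring
  have k0 : (fun ρ : ℝ => (((1 + ρ ^ 2 : ℝ) : ℂ)) ^ 2 * f ρ - g (1 - ρ ^ 2)) 0 = 0 := by
    apply zero_at_zero (G := fun ρ : ℝ => (((1 + ρ ^ 2 : ℝ) : ℂ)) ^ 2 * f ρ - g (1 - ρ ^ 2))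
    · intro s hs
      exact sub_eq_zero.2 (key s ⟨hs.1, hs.2.le⟩)
    · have h1 : ContinuousOn f (Ico 0 1) := hf.mono Ico_subset_Icc_self
      have := Complex.continuous_ofReal
      fun_prop
  intro ρ hρ
  have hk : (((1 + ρ ^ 2 : ℝ) : ℂ)) ^ 2 * f ρ = g (1 - ρ ^ 2) := by
    rcases hρ.1.eq_or_lt with h' | h'
    · rw [← h']; exact sub_eq_zero.1 k0
    · exact key ρ ⟨h', hρ.2⟩
  rw [← hk]
  have : ((1 + ρ ^ 2 : ℝ) : ℂ) ≠ 0 := by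
    have : (1 + ρ ^ 2 : ℝ) ≠ 0 := by positivity
    exact_mod_cast this
  rw [Complex.ofReal_inv, Complex.ofReal_pow]
  field_simp

lemma conv_of_finite {a : ℕ → ℂ} (h : ∀ n ≥ 2, a n = 0) : Conv a := by
  intro r _ _
  refine summable_of_ne_finset_zero (s := Finset.range 2) (fun n hn => ?_)
  rw [h n (not_lt.1 (fun h => hn (Finset.mem_range.2 h)))]; simp

lemma PS_of_finite {a : ℕ → ℂ} (h : ∀ n ≥ 2, a n = 0) (s : ℝ) : PS a s = a 0 + a 1 * s := by
  rw [PS, tsum_eq_sum (s := Finset.range 2) (fun n hn => by rw [h n (not_lt.1 (fun h => hn (Finset.mem_range.2 h)))]; simp)]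
  simp [Finset.sum_range_succ]

end ModeODE

/-- For `d = 7` and `λ ∈ ℂ` with `Re λ ≥ 0`: any nonzero complex-valued function,
smooth on `[0,1]` and solving the mode ODE on `(0,1)`, satisfies either `λ = 1` and
`f` is a multiple of `f₀(ρ) = (1−ρ²)/(1+ρ²)²`, or `λ = 3` and `f` is a multiple of
`f₁(ρ) = (1+ρ²)⁻²`. -/
theorem mode_ODE_spectrum_d7 (lam : ℂ) (hlam : 0 ≤ lam.re) (f : ℝ → ℂ)
    (hsmooth : ContDiffOn ℝ (⊤ : ℕ∞) f (Set.Icc 0 1))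
    (hnonzero : ∃ ρ ∈ Set.Icc (0 : ℝ) 1, f ρ ≠ 0)
    (hode : ∀ ρ ∈ Set.Ioo (0 : ℝ) 1,
      (1 - (ρ : ℂ) ^ 2) * iteratedDeriv 2 f ρ
        + (6 / (ρ : ℂ) - 2 * (lam + 2) * (ρ : ℂ)) * deriv f ρ
        - ((lam + 1) * (lam + 2) - 432 / (3 + 3 * (ρ : ℂ) ^ 2) ^ 2) * f ρ = 0) :
    (lam = 1 ∧ ∃ c : ℂ, ∀ ρ ∈ Set.Icc (0 : ℝ) 1,
        f ρ = c * (((1 - ρ ^ 2) / (1 + ρ ^ 2) ^ 2 : ℝ) : ℂ)) ∨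
    (lam = 3 ∧ ∃ c : ℂ, ∀ ρ ∈ Set.Icc (0 : ℝ) 1,
        f ρ = c * (((((1 + ρ ^ 2) ^ 2)⁻¹ : ℝ)) : ℂ)) := by
  have hC := ModeODE.ZZ_chain hsmooth
  have hO := ModeODE.ZZ_ode hsmooth hode
  have hR := hC.recur hO
  have hE := fun (hc : ModeODE.Conv _) => ModeODE.eq_PS hC hO (fun n => rfl) hc
  generalize ha : (fun n : ℕ => ModeODE.ZZ f n 0 / (n.factorial : ℂ)) = a at hR hE
  have hco := hsmooth.continuousOn
  have fin : (∀ n ≥ 2, a n = 0) → ∀ ρ ∈ Set.Icc (0 : ℝ) 1,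
      f ρ = (a 0 + a 1 * ((1 - ρ ^ 2 : ℝ) : ℂ)) * (((((1 + ρ ^ 2) ^ 2)⁻¹ : ℝ)) : ℂ) := by
    intro h2
    refine ModeODE.back (g := fun s : ℝ => a 0 + a 1 * (s : ℂ)) hco ?_ ?_
    · have := Complex.continuous_ofReal
      fun_prop
    · intro s hs
      rw [← ModeODE.ZZ_zero, hE (ModeODE.conv_of_finite h2) s hs, ModeODE.PS_of_finite h2]
  by_cases h1 : lam = 1
  · left
    refine ⟨h1, a 1, ?_⟩
    subst h1
    have r0 := hR.1
    have a0 : a 0 = 0 := by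
      have : (12 : ℂ) * a 0 = 0 := by linear_combination r0
      simpa using this
    have a2 : a 2 = 0 := by
      have := hR.2 0
      rw [a0] at this
      have : (16 : ℂ) * a 2 = 0 := by push_cast at this; linear_combination this
      simpa using this
    have a3 : a 3 = 0 := by
      have := hR.2 1
      simp only [Nat.reduceAdd] at this
      rw [a2] at this
      have : (48 : ℂ) * a 3 = 0 := by push_cast at this; linear_combination this
      simpa using this
    have all : ∀ n, a (n + 2) = 0 ∧ a (n + 3) = 0 := by
      intro n
      induction n with
      | zero => exact ⟨a2, a3⟩
      | succ k ih =>
        refine ⟨ih.2, ?_⟩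
        have e := hR.2 (k + 2)
        rw [ih.1, ih.2] at e
        have n1 := ModeODE.natadd_ne_zero hlam (x := (k : ℝ) + 2) (by positivity)
        have n2 : ((k : ℂ) + 2 + 2) ≠ 0 := by exact_mod_cast (k + 3).succ_ne_zero
        push_cast at e n1
        have : (8 * ((k : ℂ) + 2 + 2) * (k + 2 + 1)) * a (k + 2 + 2) = 0 := by linear_combination e
        exact (mul_eq_zero.1 this).resolve_left (mul_ne_zero (mul_ne_zero (by norm_num) n2) n1)
    intro ρ hρ
    rw [fin (fun n hn => by obtain ⟨k, rfl⟩ := Nat.exists_eq_add_of_le hn; rw [add_comm]; exact (all k).1) ρ hρ, a0,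
      div_eq_mul_inv]
    push_cast; ring
  by_cases h3 : lam = 3
  · right
    refine ⟨h3, a 0, ?_⟩
    subst h3
    have r0 := hR.1
    have a1 : a 1 = 0 := by
      have : (16 : ℂ) * a 1 = 0 := by linear_combination r0
      simpa using this
    have a2 : a 2 = 0 := by
      have := hR.2 0
      simp only [Nat.reduceAdd, zero_add] at this
      rw [a1] at this
      have : (48 : ℂ) * a 2 = 0 := by push_cast at this; linear_combination this
      simpa using this
    have all : ∀ n, a (n + 1) = 0 ∧ a (n + 2) = 0 := by
      intro n
      induction n with
      | zero => exact ⟨a1, a2⟩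
      | succ k ih =>
        refine ⟨ih.2, ?_⟩
        have e := hR.2 (k + 1)
        rw [show k + 1 + 1 = k + 2 from rfl, ih.1, ih.2] at e
        have n1 := ModeODE.natadd_ne_zero hlam (x := (k : ℝ) + 1) (by positivity)
        have n2 : ((k : ℂ) + 1 + 2) ≠ 0 := by exact_mod_cast (k + 2).succ_ne_zero
        push_cast at e n1
        have : (8 * ((k : ℂ) + 1 + 2) * (k + 1 + 3)) * a (k + 1 + 2) = 0 := by linear_combination e
        exact (mul_eq_zero.1 this).resolve_left (mul_ne_zero (mul_ne_zero (by norm_num) n2) n1)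
    intro ρ hρ
    rw [fin (fun n hn => by obtain ⟨k, rfl⟩ := Nat.exists_eq_add_of_le hn; rw [add_comm]; exact (all k).2) ρ hρ, a1]
    ring
  exfalso
  by_cases hne : ∃ n, a n ≠ 0
  · obtain ⟨N, C, hC0, _, hAs⟩ := ModeODE.asym hlam h1 h3 hR hne
    have hAsy : ModeODE.Asy a N C := hAs
    have hconv : ModeODE.Conv a := fun r hr0 hr1 => ModeODE.asy_summable hAsy hr0 hr1
    obtain ⟨B, hB⟩ := isCompact_Icc.exists_bound_of_continuousOn hco
    refine ModeODE.asy_unbounded (B := 4 * B) hC0 hAsy ?_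
    intro s hs0 hs1
    have e := hE hconv s ⟨hs0, hs1⟩
    rw [ModeODE.ZZ_zero] at e
    change ‖ModeODE.PS a s‖ ≤ 4 * B
    rw [← e, ModeODE.FF, norm_mul, norm_pow, Complex.norm_real, Real.norm_of_nonneg (by linarith)]
    have b := hB (√(1 - s)) ⟨Real.sqrt_nonneg _, Real.sqrt_le_one.2 (by linarith)⟩
    have q : (2 - s) ^ 2 ≤ 4 := by nlinarith
    exact mul_le_mul q b (norm_nonneg _) (by norm_num)
  · push Not at hne
    obtain ⟨ρ, hρ, hfρ⟩ := hnonzero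
    apply hfρ
    rw [fin (fun n _ => hne n) ρ hρ, hne 0, hne 1]
    simp
end

section
/- Let d ≥ 5 and λ ∈ ℂ. Every complex-valued function f that is smooth on [0,1] and solves the mode ODE (1−ρ²)f''(ρ) + ((d−1)/ρ − 2(λ+2)ρ)f'(ρ) − ((λ+1)(λ+2) − 24(d−1)(d−4)/(d−4+3ρ²)²)f(ρ) = 0 on (0,1) is analytic on [0,1] (i.e., extends to a function analytic on an open neighborhood of [0,1] in ℝ). -/
open Set Filter Topology Polynomial

/-- `g n` plays the role of `f^(n) / n!` on `s`. -/
def SeqDer (g : ℕ → ℝ → ℂ) (s : Set ℝ) : Prop :=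
  ∀ n : ℕ, ∀ x ∈ s, HasDerivWithinAt (g n) (((n : ℂ) + 1) * g (n + 1) x) s x

lemma SeqDer.mono {g : ℕ → ℝ → ℂ} {s t : Set ℝ} (h : SeqDer g s) (hts : t ⊆ s) : SeqDer g t :=
  fun n x hx => (h n x (hts hx)).mono hts

lemma SeqDer.cont {g : ℕ → ℝ → ℂ} {s : Set ℝ} (h : SeqDer g s) (n : ℕ) : ContinuousOn (g n) s :=
  fun x hx => (h n x hx).continuousWithinAt

lemma growth {g : ℕ → ℝ → ℂ} {s : Set ℝ} (hs : IsCompact s) (hc : ∀ n, ContinuousOn (g n) s)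
    (N : ℕ) (C : ℝ)
    (step : ∀ n ≥ N, ∀ M : ℝ, (∀ j ≤ n, ∀ x ∈ s, ‖g j x‖ ≤ M) → ∀ x ∈ s, ‖g (n+1) x‖ ≤ C * M) :
    ∃ A K : ℝ, 0 < A ∧ 0 < K ∧ ∀ n, ∀ x ∈ s, ‖g n x‖ ≤ A * K ^ n := by
  have h1 : ∀ j, ∃ b : ℝ, 0 ≤ b ∧ ∀ x ∈ s, ‖g j x‖ ≤ b := by
    intro j
    obtain ⟨b, hb⟩ := hs.exists_bound_of_continuousOn (hc j)
    exact ⟨max b 0, le_max_right _ _, fun x hx => (hb x hx).trans (le_max_left _ _)⟩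
  choose b hb0 hb using h1
  set A : ℝ := 1 + ∑ j ∈ Finset.range (N+1), b j with hA
  have hApos : 0 < A := by
    have := Finset.sum_nonneg (s := Finset.range (N+1)) (fun j _ => hb0 j)
    linarith
  set K : ℝ := max 1 C
  have hK : 1 ≤ K := le_max_left _ _
  have key : ∀ n, ∀ j ≤ N + n, ∀ x ∈ s, ‖g j x‖ ≤ A * K ^ n := by
    intro n
    induction n with
    | zero =>
      intro j hj x hx
      have h2 : b j ≤ ∑ j ∈ Finset.range (N+1), b j :=
        Finset.single_le_sum (f := b) (fun j _ => hb0 j) (Finset.mem_range.2 (by omega))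
      have := hb j x hx
      simp; linarith
    | succ n ih =>
      intro j hj x hx
      have hle : A * K ^ n ≤ A * K ^ (n+1) := by
        have : K ^ n ≤ K ^ (n+1) := pow_le_pow_right₀ hK (by omega)
        gcongr
      rcases Nat.lt_or_ge (N+n) j with h | h
      · have : j = (N + n) + 1 := by omega
        subst this
        have h3 := step (N+n) (by omega) _ ih x hx
        refine h3.trans ?_
        rw [pow_succ]
        have : C ≤ K := le_max_right _ _
        have h4 : 0 ≤ A * K ^ n := by positivity
        nlinarith
      · exact (ih j h x hx).trans hle
  exact ⟨A, K, hApos, by linarith, fun n x hx => key n n (by omega) x hx⟩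

lemma polybound (P : ℂ[X]) : ∃ B : ℝ, 0 ≤ B ∧ ∀ x ∈ Icc (0:ℝ) 1, ∀ T : Finset ℕ,
    ∑ k ∈ T, ‖(hasseDeriv k P).eval (x : ℂ)‖ ≤ B := by
  have hc : ContinuousOn (fun x : ℝ => ∑ k ∈ Finset.range (P.natDegree + 1),
      ‖(hasseDeriv k P).eval (x : ℂ)‖) (Icc 0 1) := by
    apply Continuous.continuousOn
    refine continuous_finsetSum _ fun k _ => ?_
    exact ((hasseDeriv k P).continuous.comp Complex.continuous_ofReal).norm
  obtain ⟨B, hB⟩ := isCompact_Icc.exists_bound_of_continuousOn hc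
  refine ⟨max B 0, le_max_right _ _, fun x hx T => ?_⟩
  have h1 := (le_abs_self _).trans (hB x hx)
  refine le_trans ?_ (h1.trans (le_max_left _ _))
  rw [← Finset.sum_filter_add_sum_filter_not T (fun k => k < P.natDegree + 1)]
  have h0 : ∑ k ∈ T with ¬ (k < P.natDegree + 1), ‖(hasseDeriv k P).eval (x : ℂ)‖ = 0 := by
    apply Finset.sum_eq_zero
    intro k hk
    rw [Finset.mem_filter] at hk
    rw [hasseDeriv_eq_zero_of_lt_natDegree _ _ (by omega)]
    simp
  rw [h0, add_zero]
  apply Finset.sum_le_sum_of_subset_of_nonneg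
  · intro k hk
    rw [Finset.mem_filter] at hk
    exact Finset.mem_range.2 hk.2
  · intros; positivity

lemma SeqDer.mul {a b : ℕ → ℝ → ℂ} {s : Set ℝ} (ha : SeqDer a s) (hb : SeqDer b s) :
    SeqDer (fun n x => ∑ p ∈ Finset.HasAntidiagonal.antidiagonal n, a p.1 x * b p.2 x) s := by
  intro n x hx
  have h1 : HasDerivWithinAt (fun x => ∑ p ∈ Finset.HasAntidiagonal.antidiagonal n, a p.1 x * b p.2 x)
      (∑ p ∈ Finset.HasAntidiagonal.antidiagonal n, (((p.1 : ℂ) + 1) * a (p.1 + 1) x * b p.2 x +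
        a p.1 x * (((p.2 : ℂ) + 1) * b (p.2 + 1) x))) s x :=
    HasDerivWithinAt.fun_sum fun p _ => (ha p.1 x hx).mul (hb p.2 x hx)
  refine h1.congr_deriv (Eq.symm ?_)
  have e1 := Finset.Nat.sum_antidiagonal_succ (n := n)
    (f := fun p : ℕ × ℕ => (p.1 : ℂ) * (a p.1 x * b p.2 x))
  have e2 := Finset.Nat.sum_antidiagonal_succ' (n := n)
    (f := fun p : ℕ × ℕ => (p.2 : ℂ) * (a p.1 x * b p.2 x))
  have e3 : ((n : ℂ) + 1) * ∑ p ∈ Finset.HasAntidiagonal.antidiagonal (n+1), a p.1 x * b p.2 x =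
    ∑ p ∈ Finset.HasAntidiagonal.antidiagonal (n+1), (p.1 : ℂ) * (a p.1 x * b p.2 x) +
    ∑ p ∈ Finset.HasAntidiagonal.antidiagonal (n+1), (p.2 : ℂ) * (a p.1 x * b p.2 x) := by
    rw [Finset.mul_sum, ← Finset.sum_add_distrib]
    refine Finset.sum_congr rfl fun p hp => ?_
    rw [Finset.HasAntidiagonal.mem_antidiagonal] at hp
    have : (n : ℂ) + 1 = p.1 + p.2 := by exact_mod_cast hp.symm
    rw [this]; ring
  rw [e3, e1, e2, Finset.sum_add_distrib]
  simp only [Nat.cast_zero, zero_mul, zero_add]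
  push_cast
  congr 1
  · exact Finset.sum_congr rfl fun p _ => by ring
  · exact Finset.sum_congr rfl fun p _ => by ring

lemma seqDer_poly (P : ℂ[X]) (s : Set ℝ) :
    SeqDer (fun k x => (hasseDeriv k P).eval (x : ℂ)) s := by
  intro n x _
  have h := ((hasseDeriv n P).hasDerivAt (x : ℂ)).comp_ofReal
  refine h.hasDerivWithinAt.congr_deriv (Eq.symm ?_)
  have h2 : derivative (hasseDeriv n P) = (n + 1) • hasseDeriv (n + 1) P := by
    have := LinearMap.congr_fun (hasseDeriv_comp (R := ℂ) 1 n) P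
    simp only [LinearMap.comp_apply, hasseDeriv_one, LinearMap.smul_apply] at this
    rw [this, Nat.choose_one_right, add_comm 1 n]
  rw [h2]; simp

lemma SeqDer.add {a b : ℕ → ℝ → ℂ} {s : Set ℝ} (ha : SeqDer a s) (hb : SeqDer b s) :
    SeqDer (fun n x => a n x + b n x) s := by
  intro n x hx
  exact ((ha n x hx).add (hb n x hx)).congr_deriv (by ring)

lemma SeqDer.shift {a : ℕ → ℝ → ℂ} {s : Set ℝ} (ha : SeqDer a s) :
    SeqDer (fun n x => ((n : ℂ) + 1) * a (n + 1) x) s := by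
  intro n x hx
  exact ((ha (n+1) x hx).const_mul ((n : ℂ) + 1)).congr_deriv (by push_cast; ring)

lemma SeqDer.zero {a : ℕ → ℝ → ℂ} (ha : SeqDer a (Icc 0 1)) (h0 : ∀ x ∈ Icc (0:ℝ) 1, a 0 x = 0) :
    ∀ n, ∀ x ∈ Icc (0:ℝ) 1, a n x = 0 := by
  intro n
  induction n with
  | zero => exact h0
  | succ n ih =>
    intro x hx
    have h1 := ha n x hx
    have h2 : HasDerivWithinAt (a n) 0 (Icc 0 1) x :=
      (hasDerivWithinAt_const x _ (0:ℂ)).congr ih (ih x hx)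
    have h3 := (uniqueDiffOn_Icc (zero_lt_one' ℝ) x hx).eq_deriv _ h1 h2
    have : (n : ℂ) + 1 ≠ 0 := by exact_mod_cast Nat.succ_ne_zero n
    exact (mul_eq_zero.1 h3).resolve_left this

/-- The differentiated ODE. -/
lemma leib {g : ℕ → ℝ → ℂ} (hg : SeqDer g (Icc 0 1)) (P Q R : ℂ[X])
    (h0 : ∀ x ∈ Icc (0:ℝ) 1, P.eval (x:ℂ) * (2 * g 2 x) + Q.eval (x:ℂ) * g 1 x
      + R.eval (x:ℂ) * g 0 x = 0) (n : ℕ) (x : ℝ) (hx : x ∈ Icc (0:ℝ) 1) :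
    ∑ k ∈ Finset.range (n+1), (hasseDeriv k P).eval (x:ℂ) *
        ((((n-k : ℕ):ℂ)+1) * (((n-k:ℕ):ℂ)+2) * g (n-k+2) x) +
    ∑ k ∈ Finset.range (n+1), (hasseDeriv k Q).eval (x:ℂ) *
        ((((n-k : ℕ):ℂ)+1) * g (n-k+1) x) +
    ∑ k ∈ Finset.range (n+1), (hasseDeriv k R).eval (x:ℂ) * g (n-k) x = 0 := by
  have H := ((SeqDer.mul (seqDer_poly P _) hg.shift.shift).add
    (SeqDer.mul (seqDer_poly Q _) hg.shift)).add (SeqDer.mul (seqDer_poly R _) hg)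
  have := H.zero (by intro x hx; have := h0 x hx; simp at this ⊢; convert this using 3; norm_num) n x hx
  simp only [Finset.Nat.sum_antidiagonal_eq_sum_range_succ_mk] at this
  convert this using 5
  push_cast; ring_nf

lemma norm_sum_le_aux (T : Finset ℕ) (a b : ℕ → ℂ) (B M : ℝ) (hM : 0 ≤ M)
    (ha : ∑ k ∈ T, ‖a k‖ ≤ B) (hb : ∀ k ∈ T, ‖b k‖ ≤ M) : ‖∑ k ∈ T, a k * b k‖ ≤ B * M := by
  calc ‖∑ k ∈ T, a k * b k‖ ≤ ∑ k ∈ T, ‖a k‖ * M := by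
        refine norm_sum_le_of_le _ fun k hk => ?_
        rw [norm_mul]
        exact mul_le_mul_of_nonneg_left (hb k hk) (norm_nonneg _)
    _ = (∑ k ∈ T, ‖a k‖) * M := by rw [Finset.sum_mul]
    _ ≤ B * M := by gcongr

lemma polybound_range (P : ℂ[X]) : ∃ B : ℝ, 0 ≤ B ∧ ∀ x ∈ Icc (0:ℝ) 1, ∀ j m : ℕ,
    ∑ k ∈ Finset.range m, ‖(hasseDeriv (k + j) P).eval (x : ℂ)‖ ≤ B := by
  obtain ⟨B, h0, hB⟩ := polybound P
  refine ⟨B, h0, fun x hx j m => ?_⟩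
  have := hB x hx ((Finset.range m).map (addRightEmbedding j))
  simpa [Finset.sum_map] using this

lemma max_deriv {u : ℝ → ℂ} {u' : ℂ} {δ x : ℝ} (hx : x ∈ Icc 0 δ) (hx0 : 0 < x)
    (hmax : IsMaxOn (fun t => ‖u t‖) (Icc 0 δ) x) (hu : HasDerivWithinAt u u' (Icc 0 δ) x) :
    0 ≤ (starRingEnd ℂ (u x) * u').re := by
  have h1 : HasDerivWithinAt (fun t => ‖u t‖ ^ 2) (2 * inner ℝ (u x) u') (Icc 0 δ) x := hu.norm_sq
  have hm : IsMaxOn (fun t => ‖u t‖ ^ 2) (Icc 0 δ) x := by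
    intro t ht
    have := hmax ht
    simp only [mem_ofPred_eq] at this ⊢
    gcongr
  have h2 : (0 : ℝ) - x ∈ posTangentConeAt (Icc 0 δ) x := by
    apply sub_mem_posTangentConeAt_of_segment_subset
    rw [segment_symm, segment_eq_Icc hx0.le]
    exact Icc_subset_Icc_right hx.2
  have h3 := hm.localize.hasFDerivWithinAt_nonpos h1.hasFDerivWithinAt h2
  simp at h3
  have h4 : (starRingEnd ℂ (u x) * u').re = u'.re * (u x).re + u'.im * (u x).im := by
    simp [Complex.mul_re]; ring
  rw [← h4] at h3
  by_contra hcon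
  push Not at hcon
  nlinarith

lemma norm_c1 (m : ℕ) : ‖(m:ℂ) + 1‖ = (m:ℝ) + 1 := by
  have : (m:ℂ) + 1 = ((m + 1 : ℕ) : ℂ) := by push_cast; ring
  rw [this, Complex.norm_natCast]; push_cast; ring

lemma norm_c2 (m : ℕ) : ‖(m:ℂ) + 2‖ = (m:ℝ) + 2 := by
  have : (m:ℂ) + 2 = ((m + 2 : ℕ) : ℂ) := by push_cast; ring
  rw [this, Complex.norm_natCast]; push_cast; ring

lemma interior_bound {g : ℕ → ℝ → ℂ} (hg : SeqDer g (Icc 0 1)) (P : ℝ[X]) (Q R : ℂ[X])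
    (h0 : ∀ x ∈ Icc (0:ℝ) 1, ((P.eval x : ℝ) : ℂ) * (2 * g 2 x) + Q.eval (x:ℂ) * g 1 x
      + R.eval (x:ℂ) * g 0 x = 0) (a b : ℝ) (ha : 0 < a) (hb : b < 1)
    (hpos : ∀ x ∈ Ioo (0:ℝ) 1, 0 < P.eval x) :
    ∃ A K : ℝ, 0 < A ∧ 0 < K ∧ ∀ n, ∀ x ∈ Icc a b, ‖g n x‖ ≤ A * K ^ n := by
  have hsub : Icc a b ⊆ Icc 0 1 := Icc_subset_Icc ha.le hb.le
  obtain ⟨c, hc, hcP⟩ : ∃ c : ℝ, 0 < c ∧ ∀ x ∈ Icc a b, c ≤ P.eval x := by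
    rcases (Icc a b).eq_empty_or_nonempty with h | h
    · exact ⟨1, one_pos, by simp [h]⟩
    · obtain ⟨x, hx, hmin⟩ := isCompact_Icc.exists_isMinOn h P.continuous.continuousOn
      exact ⟨P.eval x, hpos x ⟨ha.trans_le hx.1, hx.2.trans_lt hb⟩, fun y hy => hmin hy⟩
  set PC : ℂ[X] := P.map Complex.ofRealHom with hPC
  have hPe : ∀ x : ℝ, PC.eval (x:ℂ) = ((P.eval x : ℝ) : ℂ) := fun x => by
    rw [hPC]; exact Polynomial.eval_map_apply Complex.ofRealHom x
  obtain ⟨B1, hB1, hB1'⟩ := polybound_range PC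
  obtain ⟨B2, hB2, hB2'⟩ := polybound_range Q
  obtain ⟨B3, hB3, hB3'⟩ := polybound_range R
  refine growth isCompact_Icc (fun n => (hg.mono hsub).cont n) 1 ((B1 + B2 + B3) / c) ?_
  intro n' hn' M hM x hx
  obtain ⟨n, rfl⟩ : ∃ n, n' = n + 1 := ⟨n' - 1, by omega⟩
  have hM0 : 0 ≤ M := (norm_nonneg _).trans (hM 0 (by omega) x hx)
  have hx1 := hsub hx
  have E := leib hg PC Q R (fun x hx => by rw [hPe]; exact h0 x hx) n x hx1
  rw [Finset.sum_range_succ'] at E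
  have T1 := norm_sum_le_aux (Finset.range n) (fun k => (hasseDeriv (k+1) PC).eval (x:ℂ))
    (fun k => (((n-(k+1) : ℕ):ℂ)+1) * (((n-(k+1):ℕ):ℂ)+2) * g (n-(k+1)+2) x) B1
    (((n:ℝ)+1) * (n+2) * M) (by positivity) (hB1' x hx1 1 n) (by
      intro k hk
      rw [Finset.mem_range] at hk
      rw [norm_mul, norm_mul, norm_c1, norm_c2]
      have := hM (n-(k+1)+2) (by omega) x hx
      have h : ((n-(k+1):ℕ):ℝ) ≤ n := by exact_mod_cast Nat.sub_le _ _
      gcongr)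
  have T2 := norm_sum_le_aux (Finset.range (n+1)) (fun k => (hasseDeriv k Q).eval (x:ℂ))
    (fun k => (((n-k : ℕ):ℂ)+1) * g (n-k+1) x) B2
    (((n:ℝ)+1) * (n+2) * M) (by positivity) (hB2' x hx1 0 (n+1)) (by
      intro k hk
      rw [norm_mul, norm_c1]
      have := hM (n-k+1) (by omega) x hx
      have h : ((n-k:ℕ):ℝ) ≤ n := by exact_mod_cast Nat.sub_le _ _
      have h2 : ((n:ℝ) + 1) ≤ ((n:ℝ)+1) * (n+2) := by nlinarith [(Nat.cast_nonneg n : (0:ℝ) ≤ n)]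
      refine le_trans ?_ (mul_le_mul_of_nonneg_right h2 hM0)
      gcongr)
  have T3 := norm_sum_le_aux (Finset.range (n+1)) (fun k => (hasseDeriv k R).eval (x:ℂ))
    (fun k => g (n-k) x) B3
    (((n:ℝ)+1) * (n+2) * M) (by positivity) (hB3' x hx1 0 (n+1)) (by
      intro k hk
      have := hM (n-k) (by omega) x hx
      have h2 : 1 ≤ ((n:ℝ)+1) * (n+2) := by nlinarith [(Nat.cast_nonneg n : (0:ℝ) ≤ n)]
      refine this.trans ?_
      nlinarith)
  set S1 := ∑ k ∈ Finset.range n, (hasseDeriv (k+1) PC).eval (x:ℂ) *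
    ((((n-(k+1) : ℕ):ℂ)+1) * (((n-(k+1):ℕ):ℂ)+2) * g (n-(k+1)+2) x)
  set S2 := ∑ k ∈ Finset.range (n+1), (hasseDeriv k Q).eval (x:ℂ) *
    ((((n-k : ℕ):ℂ)+1) * g (n-k+1) x)
  set S3 := ∑ k ∈ Finset.range (n+1), (hasseDeriv k R).eval (x:ℂ) * g (n-k) x
  simp only [Nat.sub_zero, hasseDeriv_zero, LinearMap.id_apply, hPe] at E
  have E2 : ((P.eval x : ℝ) : ℂ) * (((n:ℂ)+1) * ((n:ℂ)+2) * g (n+2) x) = -(S1 + S2 + S3) := by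
    linear_combination E
  have E3 := congrArg norm E2
  rw [norm_neg, norm_mul, norm_mul, norm_mul, norm_c1, norm_c2, Complex.norm_real,
    Real.norm_of_nonneg (hc.le.trans (hcP x hx))] at E3
  have h4 : ‖S1 + S2 + S3‖ ≤ (B1 + B2 + B3) * (((n:ℝ)+1) * (n+2) * M) := by
    have := norm_add₃_le (a := S1) (b := S2) (c := S3)
    linarith
  have h5 : c * (((n:ℝ)+1) * (n+2) * ‖g (n+2) x‖) ≤ (B1 + B2 + B3) * (((n:ℝ)+1) * (n+2) * M) := by
    refine le_trans ?_ (E3.le.trans h4)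
    have := hcP x hx
    gcongr
  have h6 : c * ‖g (n+2) x‖ ≤ (B1 + B2 + B3) * M := by
    have h7 : 0 < ((n:ℝ)+1) * (n+2) := by positivity
    refine le_of_mul_le_mul_left ?_ h7
    linarith
  rw [div_mul_eq_mul_div, le_div_iff₀ hc]
  linarith

lemma endpoint_bound {g : ℕ → ℝ → ℂ} (hg : SeqDer g (Icc 0 1)) (P : ℝ[X]) (Q R : ℂ[X])
    (h0 : ∀ x ∈ Icc (0:ℝ) 1, ((P.eval x : ℝ) : ℂ) * (2 * g 2 x) + Q.eval (x:ℂ) * g 1 x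
      + R.eval (x:ℂ) * g 0 x = 0) (hP0 : P.eval 0 = 0) (hP1 : 0 < (derivative P).eval 0)
    (hpos : ∀ x ∈ Ioo (0:ℝ) 1, 0 < P.eval x) :
    ∃ δ : ℝ, 0 < δ ∧ δ < 1 ∧
    ∃ A K : ℝ, 0 < A ∧ 0 < K ∧ ∀ n, ∀ x ∈ Icc 0 δ, ‖g n x‖ ≤ A * K ^ n := by
  obtain ⟨c, hc, δ, hδ, hδ1, hcP⟩ : ∃ c : ℝ, 0 < c ∧ ∃ δ : ℝ, 0 < δ ∧ δ < 1 ∧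
      ∀ x ∈ Icc 0 δ, c ≤ (derivative P).eval x := by
    refine ⟨(derivative P).eval 0 / 2, by positivity, ?_⟩
    have h1 : ∀ᶠ x in 𝓝 (0:ℝ), (derivative P).eval 0 / 2 < (derivative P).eval x :=
      (derivative P).continuous.continuousAt.eventually (lt_mem_nhds (by linarith))
    obtain ⟨ε, hε, hh⟩ := Metric.eventually_nhds_iff.1 h1
    refine ⟨min (ε/2) (1/2), by positivity, by
      have := min_le_right (ε/2) (1/2 : ℝ); linarith, fun x hx => (hh ?_).le⟩
    have := min_le_left (ε/2) (1/2 : ℝ)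
    rw [Real.dist_eq, sub_zero, abs_of_nonneg hx.1]
    linarith [hx.2]
  refine ⟨δ, hδ, hδ1, ?_⟩
  have hsub : Icc 0 δ ⊆ Icc 0 1 := Icc_subset_Icc le_rfl hδ1.le
  set PC : ℂ[X] := P.map Complex.ofRealHom with hPC
  have hPe : ∀ x : ℝ, PC.eval (x:ℂ) = ((P.eval x : ℝ) : ℂ) := fun x => by
    rw [hPC]; exact Polynomial.eval_map_apply Complex.ofRealHom x
  have hPe' : ∀ x : ℝ, (derivative PC).eval (x:ℂ) = (((derivative P).eval x : ℝ) : ℂ) := fun x => by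
    rw [hPC, derivative_map]; exact Polynomial.eval_map_apply Complex.ofRealHom x
  obtain ⟨B1, hB1, hB1'⟩ := polybound_range PC
  obtain ⟨B2, hB2, hB2'⟩ := polybound_range Q
  obtain ⟨B3, hB3, hB3'⟩ := polybound_range R
  obtain ⟨N, hN⟩ := exists_nat_ge (2 * B2 / c)
  refine growth isCompact_Icc (fun n => (hg.mono hsub).cont n) (N+1) (4 * (B1 + B2 + B3) / c) ?_
  intro n hn M hM y hy
  obtain ⟨x, hx, hmax⟩ := isCompact_Icc.exists_isMaxOn ⟨y, hy⟩ ((hg.mono hsub).cont (n+1)).norm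
  refine (hmax hy).trans ?_
  obtain ⟨n', rfl⟩ : ∃ n', n = n' + 1 := ⟨n - 1, by omega⟩
  set n := n' + 1 with hnn
  have hnr : (1:ℝ) ≤ n := by exact_mod_cast (by omega : 1 ≤ n)
  have hM0 : 0 ≤ M := (norm_nonneg _).trans (hM 0 (by omega) x hx)
  have hx1 := hsub hx
  have E := leib hg PC Q R (fun x hx => by rw [hPe]; exact h0 x hx) n x hx1
  rw [Finset.sum_range_succ', hnn, Finset.sum_range_succ',
    Finset.sum_range_succ' (fun k => (hasseDeriv k Q).eval (x:ℂ) * _), ← hnn] at E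
  have T1 := norm_sum_le_aux (Finset.range n') (fun k => (hasseDeriv (k+2) PC).eval (x:ℂ))
    (fun k => (((n-(k+1+1) : ℕ):ℂ)+1) * (((n-(k+1+1):ℕ):ℂ)+2) * g (n-(k+1+1)+2) x) B1
    (((n:ℝ)+1) * (n+1) * M) (by positivity) (hB1' x hx1 2 n') (by
      intro k hk
      rw [Finset.mem_range] at hk
      rw [norm_mul, norm_mul, norm_c1, norm_c2]
      have := hM (n-(k+1+1)+2) (by omega) x hx
      have h : ((n-(k+1+1):ℕ):ℝ) + 2 ≤ n + 1 := by exact_mod_cast (by omega)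
      have h' : ((n-(k+1+1):ℕ):ℝ) + 1 ≤ n + 1 := by linarith
      gcongr)
  have T2 := norm_sum_le_aux (Finset.range n) (fun k => (hasseDeriv (k+1) Q).eval (x:ℂ))
    (fun k => (((n-(k+1) : ℕ):ℂ)+1) * g (n-(k+1)+1) x) B2
    (((n:ℝ)+1) * (n+1) * M) (by positivity) (hB2' x hx1 1 n) (by
      intro k hk
      rw [Finset.mem_range] at hk
      rw [norm_mul, norm_c1]
      have := hM (n-(k+1)+1) (by omega) x hx
      have h : ((n-(k+1):ℕ):ℝ) ≤ n := by exact_mod_cast Nat.sub_le _ _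
      have h2 : ((n:ℝ) + 1) ≤ ((n:ℝ)+1) * (n+1) := by nlinarith [(Nat.cast_nonneg n : (0:ℝ) ≤ n)]
      refine le_trans ?_ (mul_le_mul_of_nonneg_right h2 hM0)
      gcongr)
  have T3 := norm_sum_le_aux (Finset.range (n+1)) (fun k => (hasseDeriv k R).eval (x:ℂ))
    (fun k => g (n-k) x) B3
    (((n:ℝ)+1) * (n+1) * M) (by positivity) (hB3' x hx1 0 (n+1)) (by
      intro k hk
      have := hM (n-k) (by omega) x hx
      have h2 : 1 ≤ ((n:ℝ)+1) * (n+1) := by nlinarith [(Nat.cast_nonneg n : (0:ℝ) ≤ n)]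
      refine this.trans ?_
      nlinarith)
  set S1 := ∑ k ∈ Finset.range n', (hasseDeriv (k+2) PC).eval (x:ℂ) *
    ((((n-(k+1+1) : ℕ):ℂ)+1) * (((n-(k+1+1):ℕ):ℂ)+2) * g (n-(k+1+1)+2) x) with hS1
  set S2 := ∑ k ∈ Finset.range n, (hasseDeriv (k+1) Q).eval (x:ℂ) *
    ((((n-(k+1) : ℕ):ℂ)+1) * g (n-(k+1)+1) x)
  set S3 := ∑ k ∈ Finset.range (n+1), (hasseDeriv k R).eval (x:ℂ) * g (n-k) x
  have e1 : n - (0 + 1) = n' := by omega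
  have e2 : n' + 2 = n + 1 := by omega
  have e3 : (n : ℂ) = (n' : ℂ) + 1 := by rw [hnn]; push_cast; ring
  simp only [Nat.sub_zero, hasseDeriv_zero, LinearMap.id_apply, hPe, e1, e2, zero_add,
    hasseDeriv_one, hPe'] at E
  set u := g (n+1) x with hu
  set w := ((n:ℂ)+2) * g (n+2) x with hw
  have hder : HasDerivWithinAt (g (n+1)) w (Icc 0 δ) x :=
    ((hg.mono hsub) (n+1) x hx).congr_deriv (by rw [hw]; push_cast; ring)
  have E2 : ((n:ℂ)+1) * (((P.eval x : ℝ) : ℂ) * w + (n * (((derivative P).eval x : ℝ) : ℂ)) * u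
      + Q.eval (x:ℂ) * u) = -(S1 + S2 + S3) := by
    rw [hw, ← sub_eq_zero, ← E, hS1, e3]; ring
  set Z := ((P.eval x : ℝ) : ℂ) * w + (n * (((derivative P).eval x : ℝ) : ℂ)) * u + Q.eval (x:ℂ) * u with hZ
  have h4 : ‖S1 + S2 + S3‖ ≤ (B1 + B2 + B3) * (((n:ℝ)+1) * (n+1) * M) := by
    have := norm_add₃_le (a := S1) (b := S2) (c := S3)
    linarith
  have E3 := congrArg norm E2
  rw [norm_neg, norm_mul, norm_c1] at E3
  have hZn : ‖Z‖ ≤ (B1 + B2 + B3) * ((n+1) * M) := by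
    have h7 : 0 < ((n:ℝ)+1) := by positivity
    refine le_of_mul_le_mul_left ?_ h7
    linarith
  have hPw : 0 ≤ P.eval x * (starRingEnd ℂ u * w).re := by
    rcases hx.1.eq_or_lt with h | h
    · rw [← h, hP0]; simp
    · exact mul_nonneg (hpos x ⟨h, hx.2.trans_lt hδ1⟩).le (max_deriv hx h hmax hder)
  have hQ : ‖Q.eval (x:ℂ)‖ ≤ B2 := by
    simpa using hB2' x hx1 0 1
  have hre : (starRingEnd ℂ u * Z).re = P.eval x * (starRingEnd ℂ u * w).re
      + n * (derivative P).eval x * ‖u‖^2 + (Q.eval (x:ℂ)).re * ‖u‖^2 := by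
    have h8 : starRingEnd ℂ u * Z = ((P.eval x : ℝ) : ℂ) * (starRingEnd ℂ u * w)
      + ((n * (derivative P).eval x : ℝ) : ℂ) * ((‖u‖^2 : ℝ) : ℂ)
      + Q.eval (x:ℂ) * ((‖u‖^2 : ℝ):ℂ) := by
      have : ((‖u‖^2 : ℝ):ℂ) = starRingEnd ℂ u * u := by
        rw [mul_comm, Complex.mul_conj, Complex.normSq_eq_norm_sq]
      rw [this, hZ]; push_cast; ring
    rw [h8, Complex.add_re, Complex.add_re, Complex.re_ofReal_mul, Complex.re_ofReal_mul,
      Complex.re_mul_ofReal, Complex.ofReal_re]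
  have hle : (starRingEnd ℂ u * Z).re ≤ ‖u‖ * ‖Z‖ := by
    refine (Complex.re_le_norm _).trans ?_
    rw [norm_mul, Complex.norm_conj]
  have hQre : -B2 ≤ (Q.eval (x:ℂ)).re := by
    have := Complex.abs_re_le_norm (Q.eval (x:ℂ))
    linarith [neg_abs_le (Q.eval (x:ℂ)).re]
  have hnB : 2 * B2 ≤ n * c := by
    rw [div_le_iff₀ hc] at hN
    have : (N:ℝ) ≤ n := by exact_mod_cast (by omega : N ≤ n)
    nlinarith
  show ‖u‖ ≤ _
  rw [div_mul_eq_mul_div, le_div_iff₀ hc]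
  rcases (norm_nonneg u).eq_or_lt with h | h
  · rw [← h]; simp; positivity
  · have h9 : n * c * ‖u‖^2 ≤ n * (derivative P).eval x * ‖u‖^2 := by
      have := hcP x hx; gcongr
    have h10 : -B2 * ‖u‖^2 ≤ (Q.eval (x:ℂ)).re * ‖u‖^2 := by gcongr
    have h11 : (n * c - B2) * ‖u‖ * ‖u‖ ≤ ((B1 + B2 + B3) * ((n+1) * M)) * ‖u‖ := by
      nlinarith
    have h12 := le_of_mul_le_mul_right h11 h
    have h13 : n * c / 2 * ‖u‖ ≤ (n * c - B2) * ‖u‖ := by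
      gcongr; linarith
    have h14 : (B1 + B2 + B3) * ((n+1) * M) ≤ (B1 + B2 + B3) * ((2 * n) * M) := by
      gcongr; linarith
    have h15 : (0:ℝ) < n := by linarith
    refine le_of_mul_le_mul_left ?_ h15
    linarith

lemma iter_eq {g : ℕ → ℝ → ℂ} {a b : ℝ} (hab : a < b) (hg : SeqDer g (Icc a b)) (n : ℕ) :
    ∀ x ∈ Icc a b, iteratedDerivWithin n (g 0) (Icc a b) x = (n.factorial : ℂ) * g n x := by
  induction n with
  | zero => intro x hx; simp
  | succ n ih =>
    intro x hx
    rw [iteratedDerivWithin_succ]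
    have h1 : HasDerivWithinAt (iteratedDerivWithin n (g 0) (Icc a b))
        ((n.factorial : ℂ) * (((n:ℂ)+1) * g (n+1) x)) (Icc a b) x :=
      ((hg n x hx).const_mul (n.factorial : ℂ)).congr ih (ih x hx)
    rw [h1.derivWithin (uniqueDiffOn_Icc hab x hx), Nat.factorial_succ]
    push_cast; ring

lemma taylor_an {g : ℕ → ℝ → ℂ} {b A K : ℝ} (hg : SeqDer g (Icc 0 b))
    (hsm : ContDiffOn ℝ (⊤ : ℕ∞) (g 0) (Icc 0 b)) (hA : 0 < A) (hK : 0 < K)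
    (hbd : ∀ n, ∀ x ∈ Icc 0 b, ‖g n x‖ ≤ A * K ^ n) (a : ℝ) (ha : a ∈ Ico 0 b) :
    ∃ h : ℝ → ℂ, (∀ x, |x - a| < K⁻¹ → AnalyticAt ℝ h x) ∧
      ∀ x ∈ Icc a b, |x - a| < K⁻¹ → h x = g 0 x := by
  have hsub : Icc a b ⊆ Icc 0 b := Icc_subset_Icc ha.1 le_rfl
  have haI : a ∈ Icc 0 b := ⟨ha.1, ha.2.le⟩
  let p : FormalMultilinearSeries ℝ ℝ ℂ := fun n =>
    ContinuousMultilinearMap.mkPiRing ℝ (Fin n) (g n a)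
  have hrad : ENNReal.ofReal K⁻¹ ≤ p.radius := by
    refine p.le_radius_of_bound A fun n => ?_
    simp only [p, ContinuousMultilinearMap.norm_mkPiRing]
    rw [Real.coe_toNNReal _ (by positivity)]
    calc ‖g n a‖ * K⁻¹ ^ n ≤ A * K ^ n * K⁻¹ ^ n := by
          have := hbd n a haI
          gcongr
      _ = A := by rw [mul_assoc, ← mul_pow, mul_inv_cancel₀ hK.ne', one_pow, mul_one]
  have hpos : 0 < p.radius := lt_of_lt_of_le (by simpa using hK) hrad
  have hF := p.hasFPowerSeriesOnBall hpos
  have hmem : ∀ x, |x - a| < K⁻¹ → x - a ∈ Metric.eball (0:ℝ) p.radius := by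
    intro x hx
    refine Metric.eball_subset_eball hrad ?_
    rw [Metric.eball_ofReal, mem_ball_zero_iff]
    exact hx
  refine ⟨fun x => p.sum (x - a), fun x hx => ?_, fun x hxI hx => ?_⟩
  · have h1 := hF.analyticAt_of_mem (hmem x hx)
    exact AnalyticAt.fun_comp h1 (by fun_prop)
  · have h1 := (hF.hasSum (hmem x hx)).tendsto_sum_nat
    rw [zero_add] at h1
    have h2 : Tendsto (fun n => ∑ i ∈ Finset.range (n+1), p i (fun _ => x - a)) atTop
        (𝓝 (p.sum (x - a))) := (tendsto_add_atTop_iff_nat 1).2 h1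
    have hab : a < b := ha.2
    have hga := hg.mono hsub
    have hxa : 0 ≤ x - a := sub_nonneg.2 hxI.1
    have hrem : ∀ n : ℕ, ‖g 0 x - ∑ i ∈ Finset.range (n+1), p i (fun _ => x - a)‖ ≤
        A * (((n+1 : ℕ) : ℝ) * (K * (x - a)) ^ (n+1)) := by
      intro n
      have h3 := taylor_mean_remainder_bound (f := g 0) (C := (n+1).factorial * (A * K^(n+1)))
        (n := n) hab.le
        ((hsm.mono hsub).of_le (by exact_mod_cast le_top)) hxI (by
          intro y hy
          rw [iter_eq hab hga _ y hy, norm_mul, Complex.norm_natCast]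
          have := hbd (n+1) y (hsub hy)
          gcongr)
      rw [taylor_within_apply] at h3
      convert h3 using 1
      · congr 2
        refine Finset.sum_congr rfl fun k _ => ?_
        rw [iter_eq hab hga _ a ⟨le_rfl, hab.le⟩]
        have hk : (k.factorial : ℂ) ≠ 0 := by exact_mod_cast k.factorial_ne_zero
        simp [p]
        field_simp
      · rw [Nat.factorial_succ]
        have hk : (n.factorial : ℝ) ≠ 0 := by exact_mod_cast n.factorial_ne_zero
        push_cast
        rw [mul_pow]
        field_simp
    have hlt : K * (x - a) < 1 := by
      rw [abs_of_nonneg hxa] at hx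
      calc K * (x - a) < K * K⁻¹ := by gcongr
        _ = 1 := mul_inv_cancel₀ hK.ne'
    have h4 : Tendsto (fun n : ℕ => A * (((n+1 : ℕ) : ℝ) * (K * (x - a)) ^ (n+1))) atTop (𝓝 0) := by
      have h5 := tendsto_self_mul_const_pow_of_lt_one (by positivity : 0 ≤ K * (x - a)) hlt
      have h6 := ((tendsto_add_atTop_iff_nat 1).2 h5).const_mul A
      simpa using h6
    have h7 := squeeze_zero_norm hrem h4
    have h8 : Tendsto (fun n => ∑ i ∈ Finset.range (n+1), p i (fun _ => x - a)) atTop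
        (𝓝 (g 0 x)) := by
      have := (tendsto_const_nhds (x := g 0 x)).sub h7
      simpa using this
    exact tendsto_nhds_unique h2 h8

lemma local_main (f : ℝ → ℂ) (hsm : ContDiffOn ℝ (⊤ : ℕ∞) f (Icc 0 1)) (P : ℝ[X]) (Q R : ℂ[X])
    (hode : ∀ x ∈ Ioo (0:ℝ) 1, ((P.eval x : ℝ) : ℂ) * iteratedDeriv 2 f x
      + Q.eval (x:ℂ) * deriv f x + R.eval (x:ℂ) * f x = 0)
    (hP0 : P.eval 0 = 0) (hP1 : 0 < (derivative P).eval 0)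
    (hpos : ∀ x ∈ Ioo (0:ℝ) 1, 0 < P.eval x) :
    (∃ h : ℝ → ℂ, AnalyticAt ℝ h 0 ∧ ∀ᶠ x in 𝓝 (0:ℝ), 0 ≤ x → h x = f x) ∧
      ∀ x ∈ Ioo (0:ℝ) (3/4), AnalyticAt ℝ f x := by
  have hU : UniqueDiffOn ℝ (Icc (0:ℝ) 1) := uniqueDiffOn_Icc zero_lt_one
  let g : ℕ → ℝ → ℂ := fun n x => ((n.factorial : ℂ))⁻¹ * iteratedDerivWithin n f (Icc 0 1) x
  have hg0 : g 0 = f := by ext x; simp [g]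
  have hg : SeqDer g (Icc 0 1) := by
    intro n x hx
    have h1 := (hsm.differentiableOn_iteratedDerivWithin (m := n)
      (by exact_mod_cast ENat.natCast_lt_top n) hU x hx).hasDerivWithinAt
    rw [← iteratedDerivWithin_succ] at h1
    refine (h1.const_mul ((n.factorial : ℂ))⁻¹).congr_deriv ?_
    simp only [g]
    have hk : (n.factorial : ℂ) ≠ 0 := by exact_mod_cast n.factorial_ne_zero
    have hk2 : (n : ℂ) + 1 ≠ 0 := by exact_mod_cast n.succ_ne_zero
    rw [Nat.factorial_succ]; push_cast; field_simp
  have h0 : ∀ x ∈ Icc (0:ℝ) 1, ((P.eval x : ℝ) : ℂ) * (2 * g 2 x) + Q.eval (x:ℂ) * g 1 x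
      + R.eval (x:ℂ) * g 0 x = 0 := by
    have hoo : EqOn (fun x : ℝ => ((P.eval x : ℝ) : ℂ) * (2 * g 2 x) + Q.eval (x:ℂ) * g 1 x
      + R.eval (x:ℂ) * g 0 x) (fun _ => 0) (Ioo 0 1) := by
      intro x hx
      have hca : ContDiffAt ℝ (⊤ : ℕ∞) f x := hsm.contDiffAt (Icc_mem_nhds hx.1 hx.2)
      have e2 := iteratedDerivWithin_eq_iteratedDeriv (n := 2) hU
        (contDiffAt_infty.1 hca 2) (Ioo_subset_Icc_self hx)
      have e1 := iteratedDerivWithin_eq_iteratedDeriv (n := 1) hU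
        (contDiffAt_infty.1 hca 1) (Ioo_subset_Icc_self hx)
      have := hode x hx
      rw [iteratedDeriv_one] at e1
      simp only [g, e1, e2]
      simpa using this
    have hcP : Continuous fun x : ℝ => ((P.eval x : ℝ) : ℂ) :=
      Complex.continuous_ofReal.comp P.continuous
    have hcQ : Continuous fun x : ℝ => Q.eval (x:ℂ) := Q.continuous.comp Complex.continuous_ofReal
    have hcR : Continuous fun x : ℝ => R.eval (x:ℂ) := R.continuous.comp Complex.continuous_ofReal
    refine hoo.of_subset_closure ?_ continuousOn_const Ioo_subset_Icc_self ?_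
    · exact ((hcP.continuousOn.mul (continuousOn_const.mul (hg.cont 2))).add
        (hcQ.continuousOn.mul (hg.cont 1))).add (hcR.continuousOn.mul (hg.cont 0))
    · rw [closure_Ioo zero_ne_one]
  obtain ⟨δ, hδ, hδ1, A1, K1, hA1, hK1, hb1⟩ := endpoint_bound hg P Q R h0 hP0 hP1 hpos
  obtain ⟨A2, K2, hA2, hK2, hb2⟩ := interior_bound hg P Q R h0 δ (3/4) hδ (by norm_num) hpos
  have hbd : ∀ n, ∀ x ∈ Icc (0:ℝ) (3/4), ‖g n x‖ ≤ (A1 + A2) * (K1 + K2) ^ n := by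
    intro n x hx
    rcases le_total x δ with h | h
    · refine (hb1 n x ⟨hx.1, h⟩).trans ?_
      gcongr <;> linarith
    · refine (hb2 n x ⟨h, hx.2⟩).trans ?_
      gcongr <;> linarith
  have hs34 : Icc (0:ℝ) (3/4) ⊆ Icc 0 1 := Icc_subset_Icc le_rfl (by norm_num)
  have T := taylor_an (hg.mono hs34) (by rw [hg0]; exact hsm.mono hs34)
    (by positivity : 0 < A1 + A2) (by positivity : 0 < K1 + K2) hbd
  rw [hg0] at T
  have hr : 0 < (K1 + K2)⁻¹ := by positivity
  set r := (K1 + K2)⁻¹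
  constructor
  · obtain ⟨h, hh, hf⟩ := T 0 ⟨le_rfl, by norm_num⟩
    refine ⟨h, hh 0 (by simpa using hr), ?_⟩
    have e1 : ∀ᶠ x in 𝓝 (0:ℝ), x < 3/4 := gt_mem_nhds (by norm_num)
    have e2 : ∀ᶠ x in 𝓝 (0:ℝ), |x - 0| < r := eventually_abs_sub_lt 0 hr
    filter_upwards [e1, e2] with x hx1 hx2 hx3
    exact hf x ⟨hx3, hx1.le⟩ hx2
  · intro x hx
    have hm : 0 < min x (r/2) := lt_min hx.1 (by positivity)
    have hmx : min x (r/2) ≤ x := min_le_left _ _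
    have hmr : min x (r/2) ≤ r/2 := min_le_right _ _
    set a := x - min x (r/2) with ha
    obtain ⟨h, hh, hf⟩ := T a ⟨by linarith, by linarith [hx.2]⟩
    have hxa : |x - a| < r := by rw [abs_of_nonneg (by linarith)]; linarith
    refine (hh x hxa).congr ?_
    have e1 : ∀ᶠ y in 𝓝 x, y < 3/4 := gt_mem_nhds hx.2
    have e0 : ∀ᶠ y in 𝓝 x, a < y := lt_mem_nhds (by linarith)
    have e2 : ∀ᶠ y in 𝓝 x, |y - a| < r :=
      (by fun_prop : ContinuousAt (fun y => |y - a|) x).eventually (gt_mem_nhds hxa)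
    filter_upwards [e0, e1, e2] with y hy1 hy2 hy3
    exact hf y ⟨hy1.le, hy2.le⟩ hy3

theorem mode_ODE_solutions_analytic (d : ℕ) (hd : 5 ≤ d) (lam : ℂ) (f : ℝ → ℂ)
    (hsmooth : ContDiffOn ℝ (⊤ : ℕ∞) f (Set.Icc 0 1))
    (hode : ∀ ρ ∈ Set.Ioo (0 : ℝ) 1,
      (1 - (ρ : ℂ) ^ 2) * iteratedDeriv 2 f ρ
        + (((d : ℂ) - 1) / (ρ : ℂ) - 2 * (lam + 2) * (ρ : ℂ)) * deriv f ρ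
        - ((lam + 1) * (lam + 2)
            - 24 * ((d : ℂ) - 1) * ((d : ℂ) - 4) /
                ((d : ℂ) - 4 + 3 * (ρ : ℂ) ^ 2) ^ 2) * f ρ = 0) :
    ∃ (g : ℝ → ℂ) (U : Set ℝ), IsOpen U ∧ Set.Icc (0 : ℝ) 1 ⊆ U ∧
      AnalyticOnNhd ℝ g U ∧ ∀ ρ ∈ Set.Icc (0 : ℝ) 1, g ρ = f ρ := by
  have hD : (1:ℝ) ≤ (d:ℝ) - 4 := by
    have : (5:ℝ) ≤ d := by exact_mod_cast hd
    linarith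
  let P : ℝ[X] := X * (1 - X^2) * (C ((d:ℝ) - 4) + 3 * X^2)^2
  let Q : ℂ[X] := (C ((d:ℂ) - 1) - 2 * C (lam + 2) * X^2) * (C ((d:ℂ) - 4) + 3 * X^2)^2
  let R : ℂ[X] := - X * (C ((lam+1)*(lam+2)) * (C ((d:ℂ) - 4) + 3 * X^2)^2
    - C (24 * ((d:ℂ) - 1) * ((d:ℂ) - 4)))
  have hP : ∀ x : ℝ, P.eval x = x * (1 - x^2) * ((d:ℝ) - 4 + 3 * x^2)^2 := by
    intro x; simp [P]
  have hpos : ∀ x ∈ Ioo (0:ℝ) 1, 0 < P.eval x := by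
    intro x hx
    rw [hP]
    have h1 : 0 < 1 - x^2 := by nlinarith [hx.1, hx.2]
    have h2 : 0 < (d:ℝ) - 4 + 3 * x^2 := by nlinarith [sq_nonneg x]
    have := hx.1
    positivity
  have hodeP : ∀ x ∈ Ioo (0:ℝ) 1, ((P.eval x : ℝ) : ℂ) * iteratedDeriv 2 f x
      + Q.eval (x:ℂ) * deriv f x + R.eval (x:ℂ) * f x = 0 := by
    intro x hx
    have hx0 : (x:ℂ) ≠ 0 := by exact_mod_cast hx.1.ne'
    have hw : (d:ℂ) - 4 + 3 * (x:ℂ)^2 ≠ 0 := by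
      have : (d:ℝ) - 4 + 3 * x^2 ≠ 0 := by nlinarith [sq_nonneg x]
      exact_mod_cast this
    have h1 := hode x hx
    have k1 : ((d:ℂ) - 1) / (x:ℂ) * (x:ℂ) = (d:ℂ) - 1 := div_mul_cancel₀ _ hx0
    have k2 : 24 * ((d : ℂ) - 1) * ((d : ℂ) - 4) / ((d : ℂ) - 4 + 3 * (x : ℂ) ^ 2) ^ 2 *
        ((d : ℂ) - 4 + 3 * (x : ℂ) ^ 2) ^ 2 = 24 * ((d : ℂ) - 1) * ((d : ℂ) - 4) :=
      div_mul_cancel₀ _ (pow_ne_zero 2 hw)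
    rw [hP]
    simp only [Q, R, eval_mul, eval_sub, eval_add, eval_neg, eval_pow, eval_C, eval_X, eval_ofNat]
    push_cast
    generalize 24 * ((d : ℂ) - 1) * ((d : ℂ) - 4) / ((d : ℂ) - 4 + 3 * (x : ℂ) ^ 2) ^ 2 = c at h1 k2
    generalize (d:ℂ) - 4 + 3 * (x:ℂ)^2 = W at *
    linear_combination (x:ℂ) * W^2 * h1 - W^2 * deriv f x * k1 - x * f x * k2
  obtain ⟨⟨hL, hLa, hLe⟩, hint⟩ := local_main f hsmooth P Q R hodeP (by rw [hP]; simp)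
    (by simp [P, derivative_mul, derivative_pow]; nlinarith) hpos
  obtain ⟨⟨hR, hRa, hRe⟩, hint'⟩ := local_main (fun x => f (1 - x))
    (hsmooth.comp (by fun_prop) (by intro x hx; exact ⟨by linarith [hx.2], by linarith [hx.1]⟩))
    (P.comp (1 - X)) (-(Q.comp (1 - X))) (R.comp (1 - X)) (by
      intro x hx
      have h1 := hodeP (1 - x) ⟨by linarith [hx.2], by linarith [hx.1]⟩
      have e2 := congrFun (iteratedDeriv_comp_const_sub 2 f (1:ℝ)) x
      have e1 := congrFun (iteratedDeriv_comp_const_sub 1 f (1:ℝ)) x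
      simp only [iteratedDeriv_one] at e1
      rw [e1, e2, ← h1]
      simp)
    (by simp [hP])
    (by simp [P, derivative_mul, derivative_pow]; nlinarith)
    (by
      intro x hx
      simp only [eval_comp, eval_sub, eval_one, eval_X]
      exact hpos _ ⟨by linarith [hx.2], by linarith [hx.1]⟩)
  let G : ℝ → ℂ := fun x => if x < 0 then hL x else if x ≤ 1 then f x else hR (1 - x)
  have hG : ∀ x ∈ Icc (0:ℝ) 1, G x = f x := by
    intro x hx
    simp [G, not_lt.2 hx.1, hx.2]
  refine ⟨G, {x | AnalyticAt ℝ G x}, isOpen_analyticAt ℝ G, ?_, fun x hx => hx, hG⟩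
  intro x hx
  show AnalyticAt ℝ G x
  rcases hx.1.eq_or_lt with h | h
  · rw [← h]
    refine hLa.congr ?_
    have e1 : ∀ᶠ y in 𝓝 (0:ℝ), y < 1 := gt_mem_nhds one_pos
    filter_upwards [hLe, e1] with y hy hy1
    simp only [G]
    split_ifs with h1 h2
    · rfl
    · exact hy (not_lt.1 h1)
    · exact absurd hy1.le h2
  rcases hx.2.eq_or_lt with h' | h'
  · rw [h']
    have hc : ContinuousAt (fun y : ℝ => 1 - y) 1 := by fun_prop
    have hRa' : AnalyticAt ℝ (fun y : ℝ => hR (1 - y)) 1 :=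
      AnalyticAt.fun_comp (g := hR) (f := fun y : ℝ => 1 - y) (by simpa using hRa) (by fun_prop)
    refine hRa'.congr ?_
    have e1 : ∀ᶠ y in 𝓝 (1:ℝ), 0 < y := lt_mem_nhds one_pos
    have e2 : ∀ᶠ y in 𝓝 (1:ℝ), 0 ≤ 1 - y → hR (1 - y) = f (1 - (1 - y)) := by
      have hRe' : ∀ᶠ y in 𝓝 ((fun y : ℝ => 1 - y) 1), 0 ≤ y → hR y = f (1 - y) := by
        simpa using hRe
      exact Tendsto.eventually hc hRe'
    filter_upwards [e1, e2] with y hy1 hy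
    simp only [G]
    split_ifs with h1 h2
    · exact absurd h1 (not_lt.2 hy1.le)
    · rw [hy (by linarith)]; congr 1; ring
    · rfl
  · have hfa : AnalyticAt ℝ f x := by
      rcases lt_or_ge x (3/4) with h3 | h3
      · exact hint x ⟨h, h3⟩
      · have h4 := hint' (1 - x) ⟨by linarith, by linarith⟩
        have h5 := AnalyticAt.fun_comp (g := fun x => f (1 - x)) (f := fun y : ℝ => 1 - y) h4
          (by fun_prop)
        simpa [Function.comp_def] using h5
    refine hfa.congr ?_
    filter_upwards [Ioo_mem_nhds h h'] with y hy
    exact (hG y (Ioo_subset_Icc_self hy)).symm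
end

section
/- Let d ≥ 5 and λ ∈ ℂ, let y : (0,1) → ℂ be twice differentiable, and define f(ρ) = y(ρ²)/(d−4+3ρ²)² for ρ ∈ (0,1). Then f solves the mode ODE (1−ρ²)f''(ρ) + ((d−1)/ρ − 2(λ+2)ρ)f'(ρ) − ((λ+1)(λ+2) − 24(d−1)(d−4)/(d−4+3ρ²)²)f(ρ) = 0 on (0,1) if and only if y solves the Heun equation y''(x) + (d/(2x) + (2λ+5−d)/(2(x−1)) − 12/(3x+d−4))y'(x) + ((3(λ−3)(λ−2)x + λ(λ+3)(d−4) − 10d + 16)/(4x(x−1)(3x+d−4)))y(x) = 0 on (0,1). -/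
/-- For `d ≥ 5`, `λ ∈ ℂ`, and `y` twice differentiable on `(0,1)`, the function
`f(ρ) = y(ρ²)/(d−4+3ρ²)²` solves the mode ODE on `(0,1)` if and only if `y` solves the
Heun equation on `(0,1)`. -/
theorem mode_ODE_to_Heun (d : ℕ) (hd : 5 ≤ d) (lam : ℂ) (y : ℝ → ℂ)
    (hy : ∀ x ∈ Set.Ioo (0 : ℝ) 1,
      DifferentiableAt ℝ y x ∧ DifferentiableAt ℝ (deriv y) x)
    (f : ℝ → ℂ)
    (hf : ∀ ρ, f ρ = y (ρ ^ 2) / ((d : ℂ) - 4 + 3 * (ρ : ℂ) ^ 2) ^ 2) :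
    (∀ ρ ∈ Set.Ioo (0 : ℝ) 1,
      (1 - (ρ : ℂ) ^ 2) * iteratedDeriv 2 f ρ
        + (((d : ℂ) - 1) / (ρ : ℂ) - 2 * (lam + 2) * (ρ : ℂ)) * deriv f ρ
        - ((lam + 1) * (lam + 2)
            - 24 * ((d : ℂ) - 1) * ((d : ℂ) - 4) /
                ((d : ℂ) - 4 + 3 * (ρ : ℂ) ^ 2) ^ 2) * f ρ = 0) ↔
    (∀ x ∈ Set.Ioo (0 : ℝ) 1,
      iteratedDeriv 2 y x
        + ((d : ℂ) / (2 * (x : ℂ)) + (2 * lam + 5 - (d : ℂ)) / (2 * ((x : ℂ) - 1))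
            - 12 / (3 * (x : ℂ) + (d : ℂ) - 4)) * deriv y x
        + ((3 * (lam - 3) * (lam - 2) * (x : ℂ)
              + lam * (lam + 3) * ((d : ℂ) - 4) - 10 * (d : ℂ) + 16) /
            (4 * (x : ℂ) * ((x : ℂ) - 1) * (3 * (x : ℂ) + (d : ℂ) - 4))) * y x = 0) := by
  have hDne : ∀ r : ℝ, (d : ℂ) - 4 + 3 * (r : ℂ) ^ 2 ≠ 0 := by
    intro r h
    have h2 : (((d : ℝ) - 4 + 3 * r ^ 2 : ℝ) : ℂ) = 0 := by
      push_cast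
      exact h
    have h3 : (d : ℝ) - 4 + 3 * r ^ 2 = 0 := by exact_mod_cast h2
    have h4 : (5 : ℝ) ≤ d := by exact_mod_cast hd
    nlinarith [sq_nonneg r]
  have hsq : ∀ r ∈ Set.Ioo (0 : ℝ) 1, r ^ 2 ∈ Set.Ioo (0 : ℝ) 1 := by
    intro r hr
    exact ⟨by have := hr.1; positivity, by nlinarith [hr.1, hr.2]⟩
  have hsqd : ∀ r : ℝ, HasDerivAt (fun r : ℝ => r ^ 2) (2 * r) r := by
    intro r
    simpa using hasDerivAt_pow 2 r
  have hD : ∀ r : ℝ, HasDerivAt (fun r : ℝ => (d : ℂ) - 4 + 3 * (r : ℂ) ^ 2)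
      (6 * (r : ℂ)) r := by
    intro r
    have h := (((Complex.ofRealCLM.hasDerivAt (x := r)).pow 2).const_mul 3).const_add ((d : ℂ) - 4)
    refine h.congr_deriv ?_
    simp
    ring
  have hy0 : ∀ r ∈ Set.Ioo (0 : ℝ) 1,
      HasDerivAt (fun r : ℝ => y (r ^ 2)) (2 * (r : ℂ) * deriv y (r ^ 2)) r := by
    intro r hr
    have h := HasDerivAt.scomp (h := fun r : ℝ => r ^ 2) r (hy _ (hsq r hr)).1.hasDerivAt (hsqd r)
    refine h.congr_deriv ?_
    simp
  have hy1 : ∀ r ∈ Set.Ioo (0 : ℝ) 1,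
      HasDerivAt (fun r : ℝ => deriv y (r ^ 2))
        (2 * (r : ℂ) * iteratedDeriv 2 y (r ^ 2)) r := by
    intro r hr
    have h := HasDerivAt.scomp (h := fun r : ℝ => r ^ 2) r (hy _ (hsq r hr)).2.hasDerivAt (hsqd r)
    refine h.congr_deriv ?_
    simp [iteratedDeriv_succ, iteratedDeriv_zero]
  have hfe : f = fun r : ℝ => y (r ^ 2) / ((d : ℂ) - 4 + 3 * (r : ℂ) ^ 2) ^ 2 := funext hf
  have hf1 : ∀ r ∈ Set.Ioo (0 : ℝ) 1, deriv f r =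
      (2 * (r : ℂ) * deriv y (r ^ 2) * ((d : ℂ) - 4 + 3 * (r : ℂ) ^ 2)
        - 12 * (r : ℂ) * y (r ^ 2)) / ((d : ℂ) - 4 + 3 * (r : ℂ) ^ 2) ^ 3 := by
    intro r hr
    have h := (hy0 r hr).div ((hD r).pow 2) (pow_ne_zero 2 (hDne r))
    have h' := h.deriv
    rw [hfe]
    refine Eq.trans h' ?_
    have := hDne r
    simp only [Pi.pow_apply]
    push_cast
    generalize (d : ℂ) - 4 + 3 * (r : ℂ) ^ 2 = D at this ⊢
    field_simp
    ring
  have hr1 : ∀ r : ℝ, HasDerivAt (fun r : ℝ => (r : ℂ)) 1 r := by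
    intro r
    exact (Complex.ofRealCLM.hasDerivAt (x := r)).congr_deriv (by simp)
  have hf2 : ∀ r ∈ Set.Ioo (0 : ℝ) 1, iteratedDeriv 2 f r =
      2 * deriv y (r ^ 2) / ((d : ℂ) - 4 + 3 * (r : ℂ) ^ 2) ^ 2
      + 4 * (r : ℂ) ^ 2 * iteratedDeriv 2 y (r ^ 2) / ((d : ℂ) - 4 + 3 * (r : ℂ) ^ 2) ^ 2
      - 48 * (r : ℂ) ^ 2 * deriv y (r ^ 2) / ((d : ℂ) - 4 + 3 * (r : ℂ) ^ 2) ^ 3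
      - 12 * y (r ^ 2) / ((d : ℂ) - 4 + 3 * (r : ℂ) ^ 2) ^ 3
      + 216 * (r : ℂ) ^ 2 * y (r ^ 2) / ((d : ℂ) - 4 + 3 * (r : ℂ) ^ 2) ^ 4 := by
    intro r hr
    have hev : deriv f =ᶠ[nhds r] fun r : ℝ =>
        (2 * (r : ℂ) * deriv y (r ^ 2) * ((d : ℂ) - 4 + 3 * (r : ℂ) ^ 2)
        - 12 * (r : ℂ) * y (r ^ 2)) / ((d : ℂ) - 4 + 3 * (r : ℂ) ^ 2) ^ 3 := by
      filter_upwards [isOpen_Ioo.mem_nhds hr] with s hs using hf1 s hs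
    have h := ((((((hr1 r).const_mul 2).mul (hy1 r hr)).mul (hD r)).sub
      (((hr1 r).const_mul 12).mul (hy0 r hr))).div ((hD r).pow 3) (pow_ne_zero 3 (hDne r)))
    have h' := (h.congr_of_eventuallyEq hev).deriv
    have h2 : iteratedDeriv 2 f r = deriv (deriv f) r := by
      simp [iteratedDeriv_succ, iteratedDeriv_zero]
    rw [h2, h']
    have := hDne r
    simp only [Pi.pow_apply, Pi.mul_apply, Pi.sub_apply]
    push_cast
    generalize (d : ℂ) - 4 + 3 * (r : ℂ) ^ 2 = D at this ⊢
    field_simp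
    ring
  have key : ∀ r ∈ Set.Ioo (0 : ℝ) 1,
      (1 - (r : ℂ) ^ 2) * iteratedDeriv 2 f r
        + (((d : ℂ) - 1) / (r : ℂ) - 2 * (lam + 2) * (r : ℂ)) * deriv f r
        - ((lam + 1) * (lam + 2)
            - 24 * ((d : ℂ) - 1) * ((d : ℂ) - 4) /
                ((d : ℂ) - 4 + 3 * (r : ℂ) ^ 2) ^ 2) * f r
      = (4 * (r : ℂ) ^ 2 * (1 - (r : ℂ) ^ 2) / ((d : ℂ) - 4 + 3 * (r : ℂ) ^ 2) ^ 2) *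
      (iteratedDeriv 2 y (r ^ 2)
        + ((d : ℂ) / (2 * ((r ^ 2 : ℝ) : ℂ))
            + (2 * lam + 5 - (d : ℂ)) / (2 * (((r ^ 2 : ℝ) : ℂ) - 1))
            - 12 / (3 * ((r ^ 2 : ℝ) : ℂ) + (d : ℂ) - 4)) * deriv y (r ^ 2)
        + ((3 * (lam - 3) * (lam - 2) * ((r ^ 2 : ℝ) : ℂ)
              + lam * (lam + 3) * ((d : ℂ) - 4) - 10 * (d : ℂ) + 16) /
            (4 * ((r ^ 2 : ℝ) : ℂ) * (((r ^ 2 : ℝ) : ℂ) - 1) *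
              (3 * ((r ^ 2 : ℝ) : ℂ) + (d : ℂ) - 4))) * y (r ^ 2)) := by
    intro r hr
    rw [hf2 r hr, hf1 r hr, hf r]
    have hr0 : (r : ℂ) ≠ 0 := by exact_mod_cast hr.1.ne'
    have hrm : (r : ℂ) ^ 2 - 1 ≠ 0 := by
      rw [sub_ne_zero]
      exact_mod_cast (hsq r hr).2.ne
    have hDr := hDne r
    generalize iteratedDeriv 2 y (r ^ 2) = y2
    generalize deriv y (r ^ 2) = y1
    generalize y (r ^ 2) = y0
    push_cast
    generalize (r : ℂ) = z at *
    have hd' : (d : ℂ) = ((d : ℂ) - 4 + 3 * z ^ 2) + 4 - 3 * z ^ 2 := by ring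
    generalize (d : ℂ) - 4 + 3 * z ^ 2 = D at *
    rw [hd']
    have e1 : 3 * z ^ 2 + (D + 4 - 3 * z ^ 2) - 4 = D := by ring
    rw [e1]
    have e2 : (1 : ℂ) - z ^ 2 = -(z ^ 2 - 1) := by ring
    rw [e2]
    have hz2 : z ^ 2 = (z ^ 2 - 1) + 1 := by ring
    field_simp
    ring
  constructor
  · intro h x hx
    have hs : Real.sqrt x ∈ Set.Ioo (0 : ℝ) 1 :=
      ⟨Real.sqrt_pos.mpr hx.1, by rw [Real.sqrt_lt' one_pos]; simpa using hx.2⟩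
    have hsx : Real.sqrt x ^ 2 = x := Real.sq_sqrt hx.1.le
    have h1 := h _ hs
    rw [key _ hs, hsx] at h1
    refine (mul_eq_zero.mp h1).resolve_left ?_
    have a1 : ((Real.sqrt x : ℝ) : ℂ) ≠ 0 := by exact_mod_cast hs.1.ne'
    have a2 : (1 : ℂ) - ((Real.sqrt x : ℝ) : ℂ) ^ 2 ≠ 0 := by
      rw [sub_ne_zero]
      exact_mod_cast (hsq _ hs).2.ne'
    exact div_ne_zero (mul_ne_zero (mul_ne_zero (by norm_num) (pow_ne_zero 2 a1)) a2)
      (pow_ne_zero 2 (hDne _))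
  · intro h r hr
    rw [key r hr, h _ (hsq r hr), mul_zero]
end

section
/- Let d ≥ 5 and let λ ∈ ℂ with Re λ > (d−3)/2. If there exists a nonzero complex-valued function f, smooth on [0,1], solving the mode ODE (1−ρ²)f''(ρ) + ((d−1)/ρ − 2(λ+2)ρ)f'(ρ) − ((λ+1)(λ+2) − 24(d−1)(d−4)/(d−4+3ρ²)²)f(ρ) = 0 on (0,1), then λ is real. -/
/-- Algebraic heart: imaginary part of the ODE paired with the conjugate of `f`. -/
lemma ode_im_identity (d r v a b x y x1 y1 x2 y2 : ℝ)
    (h : ((1 - (r : ℂ) ^ 2)) * (⟨x2, y2⟩ : ℂ)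
          + ((((d - 1) / r : ℝ) : ℂ) - 2 * ((⟨a, b⟩ : ℂ) + 2) * (r : ℂ)) * (⟨x1, y1⟩ : ℂ)
          - (((⟨a, b⟩ : ℂ) + 1) * ((⟨a, b⟩ : ℂ) + 2) - (v : ℂ)) * (⟨x, y⟩ : ℂ) = 0) :
    (1 - r ^ 2) * (x * y2 - y * x2) =
      -((d - 1) / r - 2 * (a + 2) * r) * (x * y1 - y * x1)
      + 2 * b * r * (x * x1 + y * y1) + b * (2 * a + 3) * (x ^ 2 + y ^ 2) := by
  have hr : (1 - (r : ℂ) ^ 2) = ((1 - r ^ 2 : ℝ) : ℂ) := by push_cast; ring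
  rw [hr] at h
  generalize (d - 1) / r = e at *
  generalize 1 - r ^ 2 = s at *
  have h1 := congrArg Complex.re h
  have h2 := congrArg Complex.im h
  simp at h1 h2
  linear_combination x * h2 - y * h1

/-- The Wronskian-type flux. -/
noncomputable def flux (d : ℕ) (k b : ℝ) (f g : ℝ → ℂ) (r : ℝ) : ℝ :=
  r ^ (d - 1) * (1 - r ^ 2) ^ k *
    ((1 - r ^ 2) * ((f r).re * (g r).im - (f r).im * (g r).re)
      - b * r * ((f r).re ^ 2 + (f r).im ^ 2))

lemma flux_hasDerivAt (d : ℕ) (hd : 5 ≤ d) (k a b v : ℝ) (hk : k = a - ((d : ℝ) - 3) / 2)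
    (f g : ℝ → ℂ) (f2 : ℂ) (r : ℝ) (hr : r ∈ Set.Ioo (0 : ℝ) 1)
    (hf : HasDerivAt f (g r) r) (hg : HasDerivAt g f2 r)
    (h : ((1 - (r : ℂ) ^ 2)) * f2
          + (((((d : ℝ) - 1) / r : ℝ) : ℂ) - 2 * ((⟨a, b⟩ : ℂ) + 2) * (r : ℂ)) * g r
          - (((⟨a, b⟩ : ℂ) + 1) * ((⟨a, b⟩ : ℂ) + 2) - (v : ℂ)) * f r = 0) :
    HasDerivAt (flux d k b f g)
      (2 * k * b * (r ^ (d - 1) * (1 - r ^ 2) ^ k / (1 - r ^ 2)) *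
        ((f r).re ^ 2 + (f r).im ^ 2)) r := by
  obtain ⟨h0, h1⟩ := hr
  have hs : 0 < 1 - r ^ 2 := by nlinarith
  have key := ode_im_identity (d : ℝ) r v a b (f r).re (f r).im (g r).re (g r).im f2.re f2.im h
  have fre : HasDerivAt (fun t => (f t).re) (g r).re r :=
    Complex.reCLM.hasFDerivAt.comp_hasDerivAt r hf
  have fim : HasDerivAt (fun t => (f t).im) (g r).im r :=
    Complex.imCLM.hasFDerivAt.comp_hasDerivAt r hf
  have gre : HasDerivAt (fun t => (g t).re) f2.re r :=
    Complex.reCLM.hasFDerivAt.comp_hasDerivAt r hg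
  have gim : HasDerivAt (fun t => (g t).im) f2.im r :=
    Complex.imCLM.hasFDerivAt.comp_hasDerivAt r hg
  have hS : HasDerivAt (fun t : ℝ => 1 - t ^ 2) (-(2 * r)) r := by
    simpa using (hasDerivAt_pow 2 r).const_sub 1
  have hP : HasDerivAt (fun t : ℝ => (1 - t ^ 2) ^ k)
      (-(2 * r) * k * (1 - r ^ 2) ^ (k - 1)) r := hS.rpow_const (Or.inl hs.ne')
  have hQ : HasDerivAt (fun t : ℝ => t ^ (d - 1)) (((d - 1 : ℕ) : ℝ) * r ^ (d - 1 - 1)) r :=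
    hasDerivAt_pow (d - 1) r
  have hB : HasDerivAt (fun t : ℝ => b * t) b r := by
    simpa using (hasDerivAt_id r).const_mul b
  have tot := (hQ.mul hP).mul
    ((hS.mul ((fre.mul gim).sub (fim.mul gre))).sub (hB.mul ((fre.pow 2).add (fim.pow 2))))
  refine HasDerivAt.congr_deriv (f := flux d k b f g) tot ?_
  have e1 : (1 - r ^ 2) ^ (k - 1) = (1 - r ^ 2) ^ k / (1 - r ^ 2) := by
    rw [Real.rpow_sub_one hs.ne']
  have e2 : r ^ (d - 1 - 1) = r ^ (d - 1) / r := by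
    rw [eq_div_iff h0.ne', ← pow_succ]; congr 1; omega
  have e3 : ((d - 1 : ℕ) : ℝ) = (d : ℝ) - 1 := by
    rw [Nat.cast_sub (by omega)]; simp
  simp only [Pi.mul_apply, Pi.sub_apply, Pi.add_apply, Pi.pow_apply]
  rw [e1, e2, e3]
  generalize (1 - r ^ 2) ^ k = P at *
  generalize r ^ (d - 1) = Q at *
  generalize (f r).re = x at *
  generalize (f r).im = y at *
  generalize (g r).re = x1 at *
  generalize (g r).im = y1 at *
  generalize f2.re = x2 at *
  generalize f2.im = y2 at *
  subst hk
  have hs' := hs.ne'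
  have h0' := h0.ne'
  have key2 : x * y2 - y * x2 = (-(((d : ℝ) - 1) / r - 2 * (a + 2) * r) * (x * y1 - y * x1)
      + 2 * b * r * (x * x1 + y * y1) + b * (2 * a + 3) * (x ^ 2 + y ^ 2)) / (1 - r ^ 2) := by
    rw [eq_div_iff hs', ← key]; ring
  have key3 : y2 * x = y * x2 + (-(((d : ℝ) - 1) / r - 2 * (a + 2) * r) * (x * y1 - y * x1)
      + 2 * b * r * (x * x1 + y * y1) + b * (2 * a + 3) * (x ^ 2 + y ^ 2)) / (1 - r ^ 2) := by
    linear_combination key2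
  field_simp at key ⊢
  linear_combination (Q * P * (1 - r ^ 2)) * key

/-- For `d ≥ 5` and `λ ∈ ℂ` with `Re λ > (d−3)/2`: if the mode ODE admits a nonzero
solution smooth on `[0,1]`, then `λ` is real. -/
theorem eigenvalues_real_above_cutoff (d : ℕ) (hd : 5 ≤ d) (lam : ℂ)
    (hlam : ((d : ℝ) - 3) / 2 < lam.re)
    (hex : ∃ f : ℝ → ℂ,
      ContDiffOn ℝ (⊤ : ℕ∞) f (Set.Icc 0 1) ∧
      (∃ ρ ∈ Set.Icc (0 : ℝ) 1, f ρ ≠ 0) ∧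
      (∀ ρ ∈ Set.Ioo (0 : ℝ) 1,
        (1 - (ρ : ℂ) ^ 2) * iteratedDeriv 2 f ρ
          + (((d : ℂ) - 1) / (ρ : ℂ) - 2 * (lam + 2) * (ρ : ℂ)) * deriv f ρ
          - ((lam + 1) * (lam + 2)
              - 24 * ((d : ℂ) - 1) * ((d : ℂ) - 4) /
                  ((d : ℂ) - 4 + 3 * (ρ : ℂ) ^ 2) ^ 2) * f ρ = 0)) :
    lam.im = 0 := by
  obtain ⟨f, hf, ⟨ρ₀, hρ₀, hne⟩, hode⟩ := hex
  by_contra hb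
  set k : ℝ := lam.re - ((d : ℝ) - 3) / 2 with hk
  have hk0 : 0 < k := by rw [hk]; linarith
  set g : ℝ → ℂ := derivWithin f (Set.Icc 0 1) with hgdef
  have hfc : ContinuousOn f (Set.Icc 0 1) := hf.continuousOn
  have hgc : ContinuousOn g (Set.Icc 0 1) :=
    hf.continuousOn_derivWithin (uniqueDiffOn_Icc zero_lt_one) (by simp)
  have hgd : ∀ r ∈ Set.Ioo (0 : ℝ) 1, g r = deriv f r := fun r hr =>
    derivWithin_of_mem_nhds (Icc_mem_nhds hr.1 hr.2)
  have hder : ∀ r ∈ Set.Ioo (0 : ℝ) 1, HasDerivAt (flux d k lam.im f g)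
      (2 * k * lam.im * (r ^ (d - 1) * (1 - r ^ 2) ^ k / (1 - r ^ 2)) *
        ((f r).re ^ 2 + (f r).im ^ 2)) r := by
    intro r hr
    have hcd : ContDiffAt ℝ (⊤ : ℕ∞) f r := hf.contDiffAt (Icc_mem_nhds hr.1 hr.2)
    have h1 : HasDerivAt f (g r) r := by
      rw [hgd r hr]
      exact (hcd.differentiableAt (by simp)).hasDerivAt
    have hev : g =ᶠ[nhds r] deriv f := by
      filter_upwards [Ioo_mem_nhds hr.1 hr.2] with t ht using hgd t ht
    have h2 : HasDerivAt g (iteratedDeriv 2 f r) r := by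
      refine HasDerivAt.congr_of_eventuallyEq ?_ hev
      have e : iteratedDeriv 2 f = deriv (deriv f) := by
        rw [iteratedDeriv_succ, iteratedDeriv_one]
      rw [e]
      have : ContDiffAt ℝ 1 (deriv f) r := by
        have h12 : ((1 : WithTop ℕ∞) + 1) ≤ ((⊤ : ℕ∞) : WithTop ℕ∞) := by
          have : ((2 : ℕ∞) : WithTop ℕ∞) ≤ ((⊤ : ℕ∞) : WithTop ℕ∞) := WithTop.coe_le_coe.2 le_top
          rw [one_add_one_eq_two]; exact this
        exact ((hf.mono Set.Ioo_subset_Icc_self).deriv_of_isOpen isOpen_Ioo h12).contDiffAt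
          (Ioo_mem_nhds hr.1 hr.2)
      exact (this.differentiableAt (by simp)).hasDerivAt
    refine flux_hasDerivAt d hd k lam.re lam.im
      (24 * ((d : ℝ) - 1) * ((d : ℝ) - 4) / ((d : ℝ) - 4 + 3 * r ^ 2) ^ 2)
      hk f g _ r hr h1 h2 ?_
    rw [← hode r hr, hgd r hr]
    push_cast
    rfl
  have hFc : ContinuousOn (flux d k lam.im f g) (Set.Icc 0 1) := by
    unfold flux
    have a1 : ContinuousOn (fun r => (f r).re) (Set.Icc 0 1) :=
      Complex.continuous_re.comp_continuousOn hfc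
    have a2 : ContinuousOn (fun r => (f r).im) (Set.Icc 0 1) :=
      Complex.continuous_im.comp_continuousOn hfc
    have a3 : ContinuousOn (fun r => (g r).re) (Set.Icc 0 1) :=
      Complex.continuous_re.comp_continuousOn hgc
    have a4 : ContinuousOn (fun r => (g r).im) (Set.Icc 0 1) :=
      Complex.continuous_im.comp_continuousOn hgc
    have a5 : Continuous (fun r : ℝ => (1 - r ^ 2) ^ k) :=
      (by fun_prop : Continuous (fun r : ℝ => 1 - r ^ 2)).rpow_const (fun _ => Or.inr hk0.le)
    fun_prop
  have hF0 : flux d k lam.im f g 0 = 0 := by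
    have : d - 1 ≠ 0 := by omega
    simp [flux, this]
  have hF1 : flux d k lam.im f g 1 = 0 := by
    simp [flux, Real.zero_rpow hk0.ne']
  have hmono : MonotoneOn (fun r => lam.im * flux d k lam.im f g r) (Set.Icc 0 1) := by
    refine monotoneOn_of_deriv_nonneg (convex_Icc 0 1) (continuousOn_const.mul hFc) ?_ ?_
    · rw [interior_Icc]
      exact fun r hr => ((hder r hr).const_mul _).differentiableAt.differentiableWithinAt
    · rw [interior_Icc]
      intro r hr
      rw [((hder r hr).const_mul _).deriv]
      have hs : 0 < 1 - r ^ 2 := by nlinarith [hr.1, hr.2]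
      have hr0 := hr.1
      have : 0 ≤ lam.im ^ 2 * (2 * k * (r ^ (d - 1) * (1 - r ^ 2) ^ k / (1 - r ^ 2)) *
        ((f r).re ^ 2 + (f r).im ^ 2)) := by positivity
      linarith
  have hzero : ∀ r ∈ Set.Icc (0 : ℝ) 1, flux d k lam.im f g r = 0 := by
    intro r hr
    have l1 := hmono (Set.left_mem_Icc.2 zero_le_one) hr hr.1
    have l2 := hmono hr (Set.right_mem_Icc.2 zero_le_one) hr.2
    simp only [hF0, hF1, mul_zero] at l1 l2
    exact (mul_eq_zero.1 (le_antisymm l2 l1)).resolve_left hb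
  have hf0 : ∀ r ∈ Set.Ioo (0 : ℝ) 1, f r = 0 := by
    intro r hr
    have hev : flux d k lam.im f g =ᶠ[nhds r] fun _ => 0 := by
      filter_upwards [Icc_mem_nhds hr.1 hr.2] with t ht using hzero t ht
    have e := (hder r hr).unique ((hasDerivAt_const r (0 : ℝ)).congr_of_eventuallyEq hev)
    have hs : 0 < 1 - r ^ 2 := by nlinarith [hr.1, hr.2]
    have hr0 := hr.1
    have hpos : 0 < r ^ (d - 1) * (1 - r ^ 2) ^ k / (1 - r ^ 2) := by positivity
    have hne0 : 2 * k * lam.im * (r ^ (d - 1) * (1 - r ^ 2) ^ k / (1 - r ^ 2)) ≠ 0 :=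
      mul_ne_zero (mul_ne_zero (by positivity) hb) hpos.ne'
    have e2 := (mul_eq_zero.1 e).resolve_left hne0
    apply Complex.ext
    · simp only [Complex.zero_re]; nlinarith [sq_nonneg (f r).re, sq_nonneg (f r).im]
    · simp only [Complex.zero_im]; nlinarith [sq_nonneg (f r).re, sq_nonneg (f r).im]
  have hall : Set.EqOn f (fun _ => 0) (Set.Icc 0 1) := by
    refine Set.EqOn.of_subset_closure (s := Set.Ioo 0 1) (fun r hr => hf0 r hr) hfc
      continuousOn_const Set.Ioo_subset_Icc_self ?_
    rw [closure_Ioo zero_ne_one]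
  exact hne (hall hρ₀)
end

section
/- Let d ≥ 5, T > 0, and set Ω = {(t,r) : t < T, 0 < r < T−t}. If φ is a smooth solution on Ω of the linearized equation ∂_t²φ − ∂_r²φ − ((d−1)/r)∂_rφ − 3(T−t)^{-2}U*(r/(T−t))²φ = 0, then the function φ̃ defined on Ω by φ̃(t,r) = ((T−t)²−r²)^{−(d−1)/2} φ(T + (t−T)/((T−t)²−r²), r/((T−t)²−r²)) is well defined (the transformation maps Ω into Ω) and also solves the same linearized equation on Ω. -/
open Filter Topology in
/-- First derivative of `w * f(a,b)` along a curve. -/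
theorem cil_chain1 {f f1 f2 : ℝ × ℝ → ℝ} {w a b : ℝ → ℝ} {w' a' b' x : ℝ}
    (hf : HasFDerivAt f ((f1 (a x, b x)) • ContinuousLinearMap.fst ℝ ℝ ℝ
      + (f2 (a x, b x)) • ContinuousLinearMap.snd ℝ ℝ ℝ) (a x, b x))
    (hw : HasDerivAt w w' x) (ha : HasDerivAt a a' x) (hb : HasDerivAt b b' x) :
    HasDerivAt (fun y => w y * f (a y, b y))
      (w' * f (a x, b x) + w x * (f1 (a x, b x) * a' + f2 (a x, b x) * b')) x := by
  have h := hf.comp_hasDerivAt x (ha.prodMk hb)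
  have h2 := hw.mul h
  refine h2.congr_deriv ?_
  simp

open Filter Topology in
/-- Second derivative of `w * f(a,b)` along a curve. -/
theorem cil_chain2 {Ω : Set (ℝ × ℝ)} (hO : IsOpen Ω) {f f1 f2 f11 f12 f22 : ℝ × ℝ → ℝ}
    (hf : ∀ p ∈ Ω, HasFDerivAt f ((f1 p) • ContinuousLinearMap.fst ℝ ℝ ℝ
      + (f2 p) • ContinuousLinearMap.snd ℝ ℝ ℝ) p)
    (hf1 : ∀ p ∈ Ω, HasFDerivAt f1 ((f11 p) • ContinuousLinearMap.fst ℝ ℝ ℝ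
      + (f12 p) • ContinuousLinearMap.snd ℝ ℝ ℝ) p)
    (hf2 : ∀ p ∈ Ω, HasFDerivAt f2 ((f12 p) • ContinuousLinearMap.fst ℝ ℝ ℝ
      + (f22 p) • ContinuousLinearMap.snd ℝ ℝ ℝ) p)
    {w a b w' a' b' : ℝ → ℝ} {w'' a'' b'' x : ℝ}
    (hw : ∀ᶠ y in 𝓝 x, HasDerivAt w (w' y) y) (ha : ∀ᶠ y in 𝓝 x, HasDerivAt a (a' y) y)
    (hb : ∀ᶠ y in 𝓝 x, HasDerivAt b (b' y) y)
    (hw' : HasDerivAt w' w'' x) (ha' : HasDerivAt a' a'' x) (hb' : HasDerivAt b' b'' x)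
    (hx : (a x, b x) ∈ Ω) :
    iteratedDeriv 2 (fun y => w y * f (a y, b y)) x =
      w'' * f (a x, b x) + 2 * w' x * (f1 (a x, b x) * a' x + f2 (a x, b x) * b' x)
      + w x * (f11 (a x, b x) * a' x ^ 2 + 2 * f12 (a x, b x) * a' x * b' x
        + f22 (a x, b x) * b' x ^ 2 + f1 (a x, b x) * a'' + f2 (a x, b x) * b'') := by
  have hwx := hw.self_of_nhds
  have hax := ha.self_of_nhds
  have hbx := hb.self_of_nhds
  have hc : ContinuousAt (fun y => (a y, b y)) x := hax.continuousAt.prodMk hbx.continuousAt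
  have hev : ∀ᶠ y in 𝓝 x, (a y, b y) ∈ Ω := hc.eventually_mem (hO.mem_nhds hx)
  have hd : deriv (fun y => w y * f (a y, b y)) =ᶠ[𝓝 x] fun y =>
      w' y * f (a y, b y) + ((w y * a' y) * f1 (a y, b y) + (w y * b' y) * f2 (a y, b y)) := by
    filter_upwards [hw, ha, hb, hev] with y h1 h2 h3 h4
    rw [(cil_chain1 (hf _ h4) h1 h2 h3).deriv]
    ring
  rw [iteratedDeriv_succ, iteratedDeriv_one, hd.deriv_eq]
  have e1 := cil_chain1 (hf _ hx) hw' hax hbx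
  have e2 := cil_chain1 (hf1 _ hx) (hwx.mul ha') hax hbx
  have e3 := cil_chain1 (hf2 _ hx) (hwx.mul hb') hax hbx
  have e := e1.add (e2.add e3)
  refine Eq.trans (e.deriv) ?_
  simp only [Pi.mul_apply]
  ring

/-- Partial derivatives of a smooth function. -/
theorem cil_partials {Ω : Set (ℝ × ℝ)} (hO : IsOpen Ω) {f : ℝ × ℝ → ℝ}
    (hf : ContDiffOn ℝ (⊤ : ℕ∞) f Ω) :
    ∃ f1 f2 f11 f12 f22 : ℝ × ℝ → ℝ,
    (∀ p ∈ Ω, HasFDerivAt f ((f1 p) • ContinuousLinearMap.fst ℝ ℝ ℝ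
      + (f2 p) • ContinuousLinearMap.snd ℝ ℝ ℝ) p) ∧
    (∀ p ∈ Ω, HasFDerivAt f1 ((f11 p) • ContinuousLinearMap.fst ℝ ℝ ℝ
      + (f12 p) • ContinuousLinearMap.snd ℝ ℝ ℝ) p) ∧
    (∀ p ∈ Ω, HasFDerivAt f2 ((f12 p) • ContinuousLinearMap.fst ℝ ℝ ℝ
      + (f22 p) • ContinuousLinearMap.snd ℝ ℝ ℝ) p) := by
  have key : ∀ L : ℝ × ℝ →L[ℝ] ℝ, L = (L (1, 0)) • ContinuousLinearMap.fst ℝ ℝ ℝ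
      + (L (0, 1)) • ContinuousLinearMap.snd ℝ ℝ ℝ := by
    intro L
    ext <;> simp
  have hd : ∀ p ∈ Ω, ContDiffAt ℝ (⊤ : ℕ∞) f p := fun p hp => hf.contDiffAt (hO.mem_nhds hp)
  have hd2 : ∀ p ∈ Ω, DifferentiableAt ℝ (fderiv ℝ f) p := fun p hp =>
    (((hd p hp).fderiv_right (m := 1) (by exact WithTop.coe_le_coe.2 (show (1 + 1 : ℕ∞) ≤ ⊤ from le_top)))).differentiableAt (by simp)
  have happ : ∀ p ∈ Ω, ∀ v : ℝ × ℝ, HasFDerivAt (fun q => fderiv ℝ f q v)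
      ((fderiv ℝ (fderiv ℝ f) p).flip v) p := by
    intro p hp v
    have := (hd2 p hp).hasFDerivAt.clm_apply (hasFDerivAt_const v p)
    refine this.congr_fderiv ?_
    ext <;> simp
  refine ⟨fun p => fderiv ℝ f p (1, 0), fun p => fderiv ℝ f p (0, 1),
    fun p => fderiv ℝ (fderiv ℝ f) p (1, 0) (1, 0),
    fun p => fderiv ℝ (fderiv ℝ f) p (1, 0) (0, 1),
    fun p => fderiv ℝ (fderiv ℝ f) p (0, 1) (0, 1), ?_, ?_, ?_⟩
  · intro p hp
    have := ((hd p hp).differentiableAt (by simp)).hasFDerivAt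
    exact this.congr_fderiv (key _)
  · intro p hp
    refine (happ p hp _).congr_fderiv ?_
    rw [key ((fderiv ℝ (fderiv ℝ f) p).flip (1, 0))]
    have hs : IsSymmSndFDerivAt ℝ f p := (hd p hp).isSymmSndFDerivAt (by
      simp only [minSmoothness_of_isRCLikeNormedField]
      exact WithTop.coe_le_coe.2 (show (2 : ℕ∞) ≤ ⊤ from le_top))
    simp only [ContinuousLinearMap.flip_apply]
    rw [hs.eq (0, 1) (1, 0)]
  · intro p hp
    refine (happ p hp _).congr_fderiv ?_
    rw [key ((fderiv ℝ (fderiv ℝ f) p).flip (0, 1))]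
    simp only [ContinuousLinearMap.flip_apply]

/-- Conformal invariance of the linearized equation: for `d ≥ 5` and `T > 0`, if `φ` is a
smooth solution on `Ω = {(t,r) : t < T, 0 < r < T−t}` of
`∂_t²φ − ∂_r²φ − ((d−1)/r)∂_rφ − 3(T−t)⁻²U*(r/(T−t))²φ = 0`, then the conformal
transform `φ̃(t,r) = ((T−t)²−r²)^{−(d−1)/2} φ(T+(t−T)/((T−t)²−r²), r/((T−t)²−r²))` is
well defined (the transformation maps `Ω` into `Ω`) and also solves the same equation
on `Ω`. -/
theorem conformal_invariance_linearized (d : ℕ) (hd : 5 ≤ d) (T : ℝ) (hT : 0 < T)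
    (U : ℝ → ℝ)
    (hU : ∀ ρ, U ρ = 2 * Real.sqrt (2 * ((d : ℝ) - 1) * ((d : ℝ) - 4)) /
      ((d : ℝ) - 4 + 3 * ρ ^ 2))
    (Ω : Set (ℝ × ℝ))
    (hΩ : Ω = {p : ℝ × ℝ | p.1 < T ∧ 0 < p.2 ∧ p.2 < T - p.1})
    (φ : ℝ → ℝ → ℝ)
    (hφsmooth : ContDiffOn ℝ (⊤ : ℕ∞) (fun p : ℝ × ℝ => φ p.1 p.2) Ω)
    (hφsol : ∀ t r, (t, r) ∈ Ω →
      iteratedDeriv 2 (fun s => φ s r) t - iteratedDeriv 2 (φ t) r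
        - (((d : ℝ) - 1) / r) * deriv (φ t) r
        - 3 * ((T - t) ^ 2)⁻¹ * (U (r / (T - t))) ^ 2 * φ t r = 0)
    (φt : ℝ → ℝ → ℝ)
    (hφt : ∀ t r, φt t r =
      ((T - t) ^ 2 - r ^ 2) ^ (-(((d : ℝ) - 1) / 2)) *
        φ (T + (t - T) / ((T - t) ^ 2 - r ^ 2)) (r / ((T - t) ^ 2 - r ^ 2))) :
    (∀ t r, (t, r) ∈ Ω →
      (T + (t - T) / ((T - t) ^ 2 - r ^ 2), r / ((T - t) ^ 2 - r ^ 2)) ∈ Ω) ∧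
    (∀ t r, (t, r) ∈ Ω →
      iteratedDeriv 2 (fun s => φt s r) t - iteratedDeriv 2 (φt t) r
        - (((d : ℝ) - 1) / r) * deriv (φt t) r
        - 3 * ((T - t) ^ 2)⁻¹ * (U (r / (T - t))) ^ 2 * φt t r = 0) := by

  have hO : IsOpen Ω := by
    rw [hΩ]
    have e1 : IsOpen {p : ℝ × ℝ | p.1 < T} := isOpen_lt (by fun_prop) (by fun_prop)
    have e2 : IsOpen {p : ℝ × ℝ | 0 < p.2} := isOpen_lt (by fun_prop) (by fun_prop)
    have e3 : IsOpen {p : ℝ × ℝ | p.2 < T - p.1} := isOpen_lt (by fun_prop) (by fun_prop)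
    exact e1.inter (e2.inter e3)
  have hmap : ∀ t r, (t, r) ∈ Ω →
      (T + (t - T) / ((T - t) ^ 2 - r ^ 2), r / ((T - t) ^ 2 - r ^ 2)) ∈ Ω := by
    intro t r h
    rw [hΩ] at h ⊢
    obtain ⟨h1, h2, h3⟩ := h
    simp only at h1 h2 h3
    have hQ : 0 < (T - t) ^ 2 - r ^ 2 := by nlinarith
    refine ⟨?_, ?_, ?_⟩
    · have : (t - T) / ((T - t) ^ 2 - r ^ 2) < 0 := div_neg_of_neg_of_pos (by linarith) hQ
      simp only; linarith
    · exact div_pos h2 hQ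
    · have : r / ((T - t) ^ 2 - r ^ 2) < (T - t) / ((T - t) ^ 2 - r ^ 2) :=
        div_lt_div_of_pos_right h3 hQ
      have e : (T - t) / ((T - t) ^ 2 - r ^ 2) = -((t - T) / ((T - t) ^ 2 - r ^ 2)) := by
        rw [← neg_div]; ring
      simp only; linarith
  refine ⟨hmap, ?_⟩
  obtain ⟨f1, f2, f11, f12, f22, hf, hf1, hf2⟩ := cil_partials hO hφsmooth
  intro t r h
  have hm := hmap t r h
  have hsol := hφsol _ _ hm
  have h' := h
  rw [hΩ] at h'
  obtain ⟨h1, h2, h3⟩ := h'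
  simp only at h1 h2 h3
  have hQ : 0 < (T - t) ^ 2 - r ^ 2 := by nlinarith
  -- the equation for `φ` in terms of partials
  have hA : ∀ t r, (t, r) ∈ Ω → iteratedDeriv 2 (fun s => φ s r) t = f11 (t, r) := by
    intro t r h
    have := cil_chain2 hO hf hf1 hf2 (w := fun _ => 1) (a := fun y => y) (b := fun _ => r)
      (w' := fun _ => 0) (a' := fun _ => 1) (b' := fun _ => 0) (x := t)
      (.of_forall fun y => hasDerivAt_const _ _) (.of_forall fun y => hasDerivAt_id' _)
      (.of_forall fun y => hasDerivAt_const _ _) (hasDerivAt_const _ _) (hasDerivAt_const _ _)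
      (hasDerivAt_const _ _) h
    simpa using this
  have hB : ∀ t r, (t, r) ∈ Ω → iteratedDeriv 2 (φ t) r = f22 (t, r) := by
    intro t r h
    have := cil_chain2 hO hf hf1 hf2 (w := fun _ => 1) (a := fun _ => t) (b := fun y => y)
      (w' := fun _ => 0) (a' := fun _ => 0) (b' := fun _ => 1) (x := r)
      (.of_forall fun y => hasDerivAt_const _ _) (.of_forall fun y => hasDerivAt_const _ _)
      (.of_forall fun y => hasDerivAt_id' _) (hasDerivAt_const _ _) (hasDerivAt_const _ _)
      (hasDerivAt_const _ _) h
    simpa using this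
  have hC : ∀ t r, (t, r) ∈ Ω → deriv (φ t) r = f2 (t, r) := by
    intro t r h
    have := (cil_chain1 (hf _ h) (w := fun _ => 1) (a := fun _ => t) (b := fun y => y) (x := r)
      (hasDerivAt_const _ _) (hasDerivAt_const _ _) (hasDerivAt_id' _)).deriv
    simpa using this
  rw [hA _ _ hm, hB _ _ hm, hC _ _ hm] at hsol
  have hnear_t : ∀ᶠ y in nhds t, 0 < (T - y) ^ 2 - r ^ 2 :=
    (by fun_prop : Continuous fun y : ℝ => (T - y) ^ 2 - r ^ 2).continuousAt.eventually_mem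
      (isOpen_Ioi.mem_nhds hQ)
  have hnear_r : ∀ᶠ y in nhds r, 0 < (T - t) ^ 2 - y ^ 2 :=
    (by fun_prop : Continuous fun y : ℝ => (T - t) ^ 2 - y ^ 2).continuousAt.eventually_mem
      (isOpen_Ioi.mem_nhds hQ)
  -- t-derivatives
  have qt : ∀ y, HasDerivAt (fun y : ℝ => (T - y) ^ 2 - r ^ 2) (-2 * (T - y)) y := by
    intro y
    refine ((((hasDerivAt_id' y).const_sub T).pow 2).sub_const (r ^ 2)).congr_deriv ?_
    simp
  have qr : ∀ y, HasDerivAt (fun y : ℝ => (T - t) ^ 2 - y ^ 2) (-2 * y) y := by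
    intro y
    refine ((((hasDerivAt_id' y)).pow 2).const_sub ((T - t) ^ 2)).congr_deriv ?_
    simp
  have st : ∀ y, HasDerivAt (fun y : ℝ => T - y) (-1) y := fun y =>
    (hasDerivAt_id' y).const_sub T
  obtain ⟨k, hk⟩ : ∃ k : ℝ, k = -(((d : ℝ) - 1) / 2) := ⟨_, rfl⟩
  have hdk : (d : ℝ) - 1 = -2 * k := by rw [hk]; ring
  rw [← hk] at hφt
  have wt : ∀ y, 0 < (T - y) ^ 2 - r ^ 2 → HasDerivAt (fun y : ℝ => ((T - y) ^ 2 - r ^ 2) ^ k)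
      (k * (-2 * (T - y)) / ((T - y) ^ 2 - r ^ 2) * ((T - y) ^ 2 - r ^ 2) ^ k) y := by
    intro y hy
    refine ((qt y).rpow_const (Or.inl hy.ne')).congr_deriv ?_
    rw [Real.rpow_sub_one hy.ne']; field_simp
  have wr : ∀ y, 0 < (T - t) ^ 2 - y ^ 2 → HasDerivAt (fun y : ℝ => ((T - t) ^ 2 - y ^ 2) ^ k)
      (k * (-2 * y) / ((T - t) ^ 2 - y ^ 2) * ((T - t) ^ 2 - y ^ 2) ^ k) y := by
    intro y hy
    refine ((qr y).rpow_const (Or.inl hy.ne')).congr_deriv ?_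
    rw [Real.rpow_sub_one hy.ne']; field_simp
  have wtt : HasDerivAt (fun y : ℝ => k * (-2 * (T - y)) / ((T - y) ^ 2 - r ^ 2) * ((T - y) ^ 2 - r ^ 2) ^ k)
      ((2 * k / ((T - t) ^ 2 - r ^ 2) + 4 * k * (k - 1) * (T - t) ^ 2 / ((T - t) ^ 2 - r ^ 2) ^ 2)
        * ((T - t) ^ 2 - r ^ 2) ^ k) t := by
    refine (((((st t).const_mul (-2)).const_mul k).div (qt t) hQ.ne').mul (wt t hQ)).congr_deriv ?_
    simp only [Pi.div_apply]
    field_simp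
    ring
  have wrr : HasDerivAt (fun y : ℝ => k * (-2 * y) / ((T - t) ^ 2 - y ^ 2) * ((T - t) ^ 2 - y ^ 2) ^ k)
      ((-2 * k / ((T - t) ^ 2 - r ^ 2) + 4 * k * (k - 1) * r ^ 2 / ((T - t) ^ 2 - r ^ 2) ^ 2)
        * ((T - t) ^ 2 - r ^ 2) ^ k) r := by
    refine (((((hasDerivAt_id' r).const_mul (-2)).const_mul k).div (qr r) hQ.ne').mul (wr r hQ)).congr_deriv ?_
    simp only [Pi.div_apply]
    field_simp
    ring
  have at1 : ∀ y, 0 < (T - y) ^ 2 - r ^ 2 →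
      HasDerivAt (fun y : ℝ => T + (y - T) / ((T - y) ^ 2 - r ^ 2))
      (-((T - y) ^ 2 + r ^ 2) / ((T - y) ^ 2 - r ^ 2) ^ 2) y := by
    intro y hy
    refine ((((hasDerivAt_id' y).sub_const T).div (qt y) hy.ne').const_add T).congr_deriv ?_
    field_simp
    ring
  have bt1 : ∀ y, 0 < (T - y) ^ 2 - r ^ 2 →
      HasDerivAt (fun y : ℝ => r / ((T - y) ^ 2 - r ^ 2))
      (2 * r * (T - y) / ((T - y) ^ 2 - r ^ 2) ^ 2) y := by
    intro y hy
    refine ((hasDerivAt_const y r).div (qt y) hy.ne').congr_deriv ?_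
    field_simp
    ring
  have ar1 : ∀ y, 0 < (T - t) ^ 2 - y ^ 2 →
      HasDerivAt (fun y : ℝ => T + (t - T) / ((T - t) ^ 2 - y ^ 2))
      (-2 * (T - t) * y / ((T - t) ^ 2 - y ^ 2) ^ 2) y := by
    intro y hy
    refine (((hasDerivAt_const y (t - T)).div (qr y) hy.ne').const_add T).congr_deriv ?_
    field_simp
    ring
  have br1 : ∀ y, 0 < (T - t) ^ 2 - y ^ 2 →
      HasDerivAt (fun y : ℝ => y / ((T - t) ^ 2 - y ^ 2))
      (((T - t) ^ 2 + y ^ 2) / ((T - t) ^ 2 - y ^ 2) ^ 2) y := by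
    intro y hy
    refine ((hasDerivAt_id' y).div (qr y) hy.ne').congr_deriv ?_
    field_simp
    ring
  have hQ2 : ((T - t) ^ 2 - r ^ 2) ^ 2 ≠ 0 := pow_ne_zero _ hQ.ne'
  have at2 : HasDerivAt (fun y : ℝ => -((T - y) ^ 2 + r ^ 2) / ((T - y) ^ 2 - r ^ 2) ^ 2)
      ((-2 * (T - t) ^ 3 - 6 * (T - t) * r ^ 2) / ((T - t) ^ 2 - r ^ 2) ^ 3) t := by
    refine (((((st t).pow 2).add_const (r ^ 2)).neg).div ((qt t).pow 2) hQ2).congr_deriv ?_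
    simp
    field_simp
    ring
  have bt2 : HasDerivAt (fun y : ℝ => 2 * r * (T - y) / ((T - y) ^ 2 - r ^ 2) ^ 2)
      ((6 * r * (T - t) ^ 2 + 2 * r ^ 3) / ((T - t) ^ 2 - r ^ 2) ^ 3) t := by
    refine (((st t).const_mul (2 * r)).div ((qt t).pow 2) hQ2).congr_deriv ?_
    simp
    field_simp
    ring
  have ar2 : HasDerivAt (fun y : ℝ => -2 * (T - t) * y / ((T - t) ^ 2 - y ^ 2) ^ 2)
      ((-2 * (T - t) ^ 3 - 6 * (T - t) * r ^ 2) / ((T - t) ^ 2 - r ^ 2) ^ 3) r := by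
    refine (((hasDerivAt_id' r).const_mul (-2 * (T - t))).div ((qr r).pow 2) hQ2).congr_deriv ?_
    simp
    field_simp
    ring
  have br2 : HasDerivAt (fun y : ℝ => ((T - t) ^ 2 + y ^ 2) / ((T - t) ^ 2 - y ^ 2) ^ 2)
      ((6 * r * (T - t) ^ 2 + 2 * r ^ 3) / ((T - t) ^ 2 - r ^ 2) ^ 3) r := by
    refine ((((hasDerivAt_id' r).pow 2).const_add ((T - t) ^ 2)).div ((qr r).pow 2) hQ2).congr_deriv ?_
    simp
    field_simp
    ring
  have E1 := cil_chain2 hO hf hf1 hf2 (hnear_t.mono wt) (hnear_t.mono at1) (hnear_t.mono bt1)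
    wtt at2 bt2 hm
  have E2 := cil_chain2 hO hf hf1 hf2 (hnear_r.mono wr) (hnear_r.mono ar1) (hnear_r.mono br1)
    wrr ar2 br2 hm
  have E3 := (cil_chain1 (hf _ hm) (wr r hQ) (ar1 r hQ) (br1 r hQ)).deriv
  have F1 : (fun s => φt s r) = fun y => ((T - y) ^ 2 - r ^ 2) ^ k *
      φ (T + (y - T) / ((T - y) ^ 2 - r ^ 2)) (r / ((T - y) ^ 2 - r ^ 2)) := by
    funext y; exact hφt y r
  have F2 : φt t = fun y => ((T - t) ^ 2 - y ^ 2) ^ k *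
      φ (T + (t - T) / ((T - t) ^ 2 - y ^ 2)) (y / ((T - t) ^ 2 - y ^ 2)) := by
    funext y; exact hφt t y
  rw [hφt t r, F1, F2]
  simp only at E1 E2 E3
  rw [E1, E2, E3]
  clear E1 E2 E3 F1 F2 br2 ar2 bt2 at2 br1 ar1 bt1 at1 wt wr wtt wrr hA hB hC hf hf1 hf2
  have hs : 0 < T - t := by linarith
  have g1 : T - (T + (t - T) / ((T - t) ^ 2 - r ^ 2)) = (T - t) / ((T - t) ^ 2 - r ^ 2) := by
    field_simp
    ring
  have g2 : r / ((T - t) ^ 2 - r ^ 2) / ((T - t) / ((T - t) ^ 2 - r ^ 2)) = r / (T - t) := by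
    field_simp
  rw [g1, g2] at hsol
  rw [hdk] at hsol ⊢
  generalize U (r / (T - t)) = u at *
  generalize φ (T + (t - T) / ((T - t) ^ 2 - r ^ 2)) (r / ((T - t) ^ 2 - r ^ 2)) = F at *
  generalize hp : (T + (t - T) / ((T - t) ^ 2 - r ^ 2), r / ((T - t) ^ 2 - r ^ 2)) = p at *
  generalize f1 p = F1 at *
  generalize f2 p = F2 at *
  generalize f11 p = F11 at *
  generalize f12 p = F12 at *
  generalize f22 p = F22 at *
  generalize ((T - t) ^ 2 - r ^ 2) ^ k = P at *
  generalize T - t = s at *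
  have hQn := hQ.ne'
  have hrn := h2.ne'
  have hsn := hs.ne'
  clear hp hφt hm hk hdk hφsol hnear_r hnear_t
  obtain ⟨q, hq⟩ : ∃ q, q = s ^ 2 - r ^ 2 := ⟨_, rfl⟩
  rw [← hq] at hsol hQn
  simp only [← hq]
  suffices hh : ∀ A B : ℝ, B = 0 → A = P / q ^ 2 * B → A = 0 by
    refine hh _ _ hsol ?_
    field_simp
    rw [hq]
    ring
  intro A B hB hAB
  rw [hAB, hB, mul_zero]
end
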